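/- For every integer n ≥ 0, the inequality N2(0,6,n) + N2(1,6,n) > N2(2,6,n) + N2(3,6,n) holds. -/

import Mathlib

open scoped Classical

/-- The M2-rank of a partition: ⌈ℓ/2⌉ − s, where ℓ is the largest part
(0 for the empty partition) and s is the number of parts. -/
def m2Rank {n : ℕ} (P : n.Partition) : ℤ :=
  (((P.parts.sup + 1) / 2 : ℕ) : ℤ) - (Multiset.card P.parts : ℤ)

/-- A partition has no repeated odd parts. -/
def NoRepeatedOddParts {n : ℕ} (P : n.Partition) : Prop :=
  ∀ j : ℕ, Odd j → P.parts.count j ≤ 1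

/-- `N2 r m n` is the number of partitions of `n` without repeated odd parts whose
M2-rank is congruent to `r` modulo `m`. -/
noncomputable def N2 (r : ℤ) (m n : ℕ) : ℕ :=
  Nat.card {P : n.Partition // NoRepeatedOddParts P ∧ m2Rank P ≡ r [ZMOD (m : ℤ)]}

open Filter Topology

namespace M2

lemma summ_nat (b : ℝ) (hb0 : 0 < b) (hb1 : b < 1) (a : ℕ) (ha : 0 < a) (z : ℝ) (hz : 0 < z) :
    Summable fun n : ℕ => b ^ (a * n ^ 2) * z ^ n * (1 + (n : ℝ)) := by
  have h1 : Tendsto (fun n : ℕ => b ^ n * z) atTop (𝓝 0) := by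
    simpa using (tendsto_pow_atTop_nhds_zero_of_lt_one hb0.le hb1).mul_const z
  have h2 : ∀ᶠ n : ℕ in atTop, b ^ n * z ≤ 1 / 4 :=
    (h1.eventually (gt_mem_nhds (by norm_num : (0:ℝ) < 1 / 4))).mono fun n h => h.le
  refine summable_of_isBigO_nat (g := fun n : ℕ => ((1:ℝ) / 2) ^ n)
    (summable_geometric_of_lt_one (by norm_num) (by norm_num)) ?_
  refine Asymptotics.IsBigO.of_bound 1 ?_
  filter_upwards [h2] with n hn
  have e1 : b ^ (a * n ^ 2) ≤ (b ^ n) ^ n := by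
    rw [← pow_mul]
    exact pow_le_pow_of_le_one hb0.le hb1.le (by nlinarith [sq_nonneg (n : ℕ)])
  have e2 : (1 : ℝ) + n ≤ 2 ^ n := by
    have := one_add_mul_le_pow (a := (1:ℝ)) (by norm_num) n
    norm_num at this ⊢
    linarith
  rw [Real.norm_of_nonneg (by positivity), Real.norm_of_nonneg (by positivity), one_mul]
  calc b ^ (a * n ^ 2) * z ^ n * (1 + (n : ℝ)) ≤ (b ^ n) ^ n * z ^ n * 2 ^ n := by gcongr
    _ = (b ^ n * z) ^ n * 2 ^ n := by rw [mul_pow]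
    _ ≤ (1 / 4) ^ n * 2 ^ n := by gcongr
    _ = (1 / 2) ^ n := by rw [← mul_pow]; norm_num

lemma summ (b : ℝ) (hb0 : 0 < b) (hb1 : b < 1) (a c : ℤ) (ha : 0 < a) (y : ℝ) (hy : y ≠ 0)
    (e : ℤ → ℝ) (C : ℝ) (he : ∀ r : ℤ, |e r| ≤ C * (1 + |(r : ℝ)|)) :
    Summable fun r : ℤ => b ^ (a * r ^ 2 + c * r) * y ^ r * e r := by
  have hC : 0 ≤ C := by have := he 0; simp at this; exact (abs_nonneg _).trans this
  have key : ∀ (c : ℤ) (y : ℝ), y ≠ 0 → ∀ (e : ℕ → ℝ), (∀ n : ℕ, |e n| ≤ C * (1 + (n:ℝ))) →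
      Summable fun n : ℕ => b ^ (a * (n:ℤ) ^ 2 + c * n) * y ^ (n:ℤ) * e n := by
    intro c y hy e he
    obtain ⟨a', rfl⟩ : ∃ a' : ℕ, a = a' := ⟨a.toNat, by omega⟩
    have h := (summ_nat b hb0 hb1 a' (by omega) (b ^ c * |y|) (by positivity)).mul_left C
    refine Summable.of_norm_bounded h fun n => ?_
    rw [Real.norm_eq_abs, abs_mul, abs_mul, abs_zpow, abs_zpow, abs_of_pos hb0]
    have e1 : b ^ ((a' : ℤ) * (n:ℤ) ^ 2 + c * n) = b ^ (a' * n ^ 2) * (b ^ c) ^ n := by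
      rw [zpow_add₀ hb0.ne', zpow_mul b c n]
      norm_cast
    rw [e1, mul_pow, zpow_natCast]
    calc b ^ (a' * n ^ 2) * (b ^ c) ^ n * |y| ^ n * |e n|
        ≤ b ^ (a' * n ^ 2) * (b ^ c) ^ n * |y| ^ n * (C * (1 + (n:ℝ))) := by
          gcongr; exact he n
      _ = _ := by ring
  refine Summable.of_nat_of_neg ?_ ?_
  · exact key c y hy (fun n => e n) (fun n => by simpa using he n)
  · have := key (-c) y⁻¹ (inv_ne_zero hy) (fun n => e (-n)) (fun n => by simpa using he (-n))
    refine this.congr fun n => ?_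
    simp [zpow_neg]

/-- The pole factor; junk value `0` at a pole. -/
noncomputable def pl (b x : ℝ) (r : ℤ) : ℝ := 1 / (1 - x * b ^ (2 * r))

lemma pl_bdd (b : ℝ) (hb0 : 0 < b) (hb1 : b < 1) (x : ℝ) (hx : x ≠ 0) :
    ∃ C : ℝ, ∀ r : ℤ, |pl b x r| ≤ C * (1 + |(r : ℝ)|) := by
  have hb2 : b ^ (2:ℤ) < 1 := by
    rw [show (2:ℤ) = ((2:ℕ):ℤ) from rfl, zpow_natCast]; exact pow_lt_one₀ hb0.le hb1 (by norm_num)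
  have hb2' : 0 < b ^ (2:ℤ) := by positivity
  have hO : (pl b x) =O[cofinite] (fun _ : ℤ => (1:ℝ)) := by
    rw [Int.cofinite_eq, Asymptotics.isBigO_sup]
    constructor
    · -- at bottom
      have t1 : Tendsto (fun n : ℕ => x⁻¹ * (b ^ (2:ℤ)) ^ n) atTop (𝓝 (x⁻¹ * 0)) :=
        (tendsto_pow_atTop_nhds_zero_of_lt_one hb2'.le hb2).const_mul _
      have t2 : Tendsto (fun r : ℤ => x⁻¹ * (b ^ (2:ℤ)) ^ (-r)) atBot (𝓝 0) := by
        have : Tendsto (fun r : ℤ => (-r).toNat) atBot atTop := by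
          refine tendsto_atTop.2 fun N => ?_
          filter_upwards [eventually_le_atBot (-(N:ℤ))] with r hr
          omega
        have := t1.comp this
        rw [mul_zero] at this
        refine this.congr' ?_
        filter_upwards [eventually_le_atBot (0:ℤ)] with r hr
        simp only [Function.comp]
        rw [← zpow_natCast]
        congr 2; omega
      have t3 : ∀ᶠ r : ℤ in atBot, |x⁻¹ * (b ^ (2:ℤ)) ^ (-r)| < 1/2 :=
        (by simpa using t2.abs : Tendsto _ _ (𝓝 (0:ℝ))).eventually (gt_mem_nhds (by norm_num))
      refine Asymptotics.IsBigO.of_bound 1 ?_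
      filter_upwards [t3] with r hr
      have hw : x * b ^ (2 * r) ≠ 0 := by positivity
      have e1 : x⁻¹ * (b ^ (2:ℤ)) ^ (-r) = (x * b ^ (2 * r))⁻¹ := by
        rw [mul_inv, ← zpow_mul, ← zpow_neg]; congr 2; ring
      rw [e1, abs_inv] at hr
      have hw2 : 2 < |x * b ^ (2 * r)| := by
        have hp : 0 < |x * b ^ (2 * r)| := by positivity
        rw [inv_lt_comm₀ hp (by norm_num)] at hr
        rwa [show ((1:ℝ)/2)⁻¹ = 2 by norm_num] at hr
      have : 1 ≤ |1 - x * b ^ (2 * r)| := by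
        have := abs_sub_abs_le_abs_sub (x * b ^ (2 * r)) 1
        rw [abs_sub_comm] at this
        rw [abs_one] at this; linarith
      simp only [pl, norm_one, mul_one, Real.norm_eq_abs, abs_div, abs_one]
      rw [div_le_one (by linarith)]; exact this
    · have t1 : Tendsto (fun n : ℕ => x * (b ^ (2:ℤ)) ^ n) atTop (𝓝 (x * 0)) :=
        (tendsto_pow_atTop_nhds_zero_of_lt_one hb2'.le hb2).const_mul _
      have t2 : Tendsto (fun r : ℤ => x * (b ^ (2:ℤ)) ^ r) atTop (𝓝 0) := by
        have : Tendsto (fun r : ℤ => r.toNat) atTop atTop := by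
          refine tendsto_atTop.2 fun N => ?_
          filter_upwards [eventually_ge_atTop (N:ℤ)] with r hr
          omega
        have := t1.comp this
        rw [mul_zero] at this
        refine this.congr' ?_
        filter_upwards [eventually_ge_atTop (0:ℤ)] with r hr
        simp only [Function.comp]
        rw [← zpow_natCast]
        congr 2; omega
      have t3 : ∀ᶠ r : ℤ in atTop, |x * (b ^ (2:ℤ)) ^ r| < 1/2 :=
        (by simpa using t2.abs : Tendsto _ _ (𝓝 (0:ℝ))).eventually (gt_mem_nhds (by norm_num))
      refine Asymptotics.IsBigO.of_bound 2 ?_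
      filter_upwards [t3] with r hr
      rw [← zpow_mul] at hr
      have : 1/2 ≤ |1 - x * b ^ (2 * r)| := by
        have := abs_sub_abs_le_abs_sub 1 (x * b ^ (2 * r))
        rw [abs_one] at this; linarith
      simp only [pl, norm_one, mul_one, Real.norm_eq_abs, abs_div, abs_one]
      rw [div_le_iff₀ (by linarith)]; linarith
  rw [Asymptotics.isBigO_cofinite_iff (by simp)] at hO
  obtain ⟨C, hC⟩ := hO
  have hC0 : 0 ≤ C := by have := hC 0; simp at this; exact (abs_nonneg _).trans this
  refine ⟨C, fun r => ?_⟩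
  have := hC r
  simp only [norm_one, mul_one, Real.norm_eq_abs] at this
  nlinarith [abs_nonneg (r:ℝ)]

end M2

namespace M2

lemma summE (b : ℝ) (hb0 : 0 < b) (hb1 : b < 1) (a c : ℤ) (ha : 0 < a) (y : ℝ) (hy : y ≠ 0)
    (e : ℤ → ℝ) (he : ∃ C : ℝ, ∀ r : ℤ, |e r| ≤ C * (1 + |(r : ℝ)|)) (f : ℤ → ℝ)
    (hf : ∀ r, f r = b ^ (a * r ^ 2 + c * r) * y ^ r * e r) : Summable f := by
  obtain ⟨C, hC⟩ := he
  exact (summ b hb0 hb1 a c ha y hy e C hC).congr fun r => (hf r).symm ▸ rfl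

lemma one_bdd : ∃ C : ℝ, ∀ r : ℤ, |(fun _ => (1:ℝ)) r| ≤ C * (1 + |(r : ℝ)|) :=
  ⟨1, fun r => by simp⟩

lemma id_bdd : ∃ C : ℝ, ∀ r : ℤ, |(fun r : ℤ => (r:ℝ)) r| ≤ C * (1 + |(r : ℝ)|) :=
  ⟨1, fun r => by simp⟩

/-- Plus-convention theta series in base `b ^ 2`. -/
noncomputable def jf (b y : ℝ) : ℝ := ∑' r : ℤ, b ^ (r ^ 2 - r) * y ^ r
/-- Its Euler derivative. -/
noncomputable def Dj (b y : ℝ) : ℝ := ∑' r : ℤ, b ^ (r ^ 2 - r) * y ^ r * (r : ℝ)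
/-- Appell sum. -/
noncomputable def AA (b x y : ℝ) : ℝ := ∑' r : ℤ, b ^ (r ^ 2 - r) * y ^ r * pl b x r

variable {b : ℝ}

lemma jf_summ (hb0 : 0 < b) (hb1 : b < 1) {y : ℝ} (hy : y ≠ 0) :
    Summable fun r : ℤ => b ^ (r ^ 2 - r) * y ^ r :=
  summE b hb0 hb1 1 (-1) one_pos y hy _ one_bdd _ fun r => by
    rw [mul_one]; congr 2; ring

lemma Dj_summ (hb0 : 0 < b) (hb1 : b < 1) {y : ℝ} (hy : y ≠ 0) :
    Summable fun r : ℤ => b ^ (r ^ 2 - r) * y ^ r * (r : ℝ) :=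
  summE b hb0 hb1 1 (-1) one_pos y hy _ id_bdd _ fun r => by
    congr 3; ring

lemma AA_summ (hb0 : 0 < b) (hb1 : b < 1) {x y : ℝ} (hx : x ≠ 0) (hy : y ≠ 0) :
    Summable fun r : ℤ => b ^ (r ^ 2 - r) * y ^ r * pl b x r :=
  summE b hb0 hb1 1 (-1) one_pos y hy _ (pl_bdd b hb0 hb1 x hx) _ fun r => by
    congr 3; ring

/-- shear equivalence `(k, r) ↦ (r, k - r)` -/
def shear : ℤ × ℤ ≃ ℤ × ℤ where
  toFun z := (z.2, z.1 - z.2)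
  invFun z := (z.1 + z.2, z.1)
  left_inv z := by ext <;> simp
  right_inv z := by ext <;> simp

lemma conv {f g : ℤ → ℝ} (hf : Summable f) (hg : Summable g) :
    HasSum (fun k => ∑' r, f r * g (k - r)) ((∑' r, f r) * ∑' r, g r) := by
  have h1 : Summable fun z : ℤ × ℤ => f z.1 * g z.2 :=
    summable_mul_of_summable_norm hf.norm hg.norm
  have h2 := tsum_mul_tsum_of_summable_norm hf.norm hg.norm
  rw [h2, ← shear.tsum_eq]
  have h3 : Summable fun z : ℤ × ℤ => f (shear z).1 * g (shear z).2 :=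
    (shear.summable_iff (f := fun z : ℤ × ℤ => f z.1 * g z.2)).2 h1
  exact h3.hasSum.prod_fiberwise fun k => (h3.prod_factor k).hasSum

noncomputable def TT (b x x' : ℝ) (k : ℤ) : ℝ :=
  ∑' r : ℤ, b ^ (2 * r ^ 2 - 2 * k * r) * x ^ (r - k) * x' ^ (-r) * pl b x r
noncomputable def SS (b x x' : ℝ) (k : ℤ) : ℝ :=
  ∑' r : ℤ, b ^ (2 * r ^ 2 - 2 * k * r) * x ^ (r - k) * x' ^ (-r)
noncomputable def cc (b x x' : ℝ) : ℝ := TT b x x' 0 - TT b x' x 0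

lemma TT_summ (hb0 : 0 < b) (hb1 : b < 1) {x x' : ℝ} (hx : x ≠ 0) (hx' : x' ≠ 0) (k : ℤ) :
    Summable fun r : ℤ => b ^ (2 * r ^ 2 - 2 * k * r) * x ^ (r - k) * x' ^ (-r) * pl b x r := by
  have := (summE b hb0 hb1 2 (-2 * k) two_pos (x / x') (div_ne_zero hx hx') _
    (pl_bdd b hb0 hb1 x hx) _ fun r => rfl).mul_left (x ^ (-k))
  refine this.congr fun r => ?_
  rw [div_zpow, zpow_sub₀ hx, zpow_neg, zpow_neg,
    show 2 * r ^ 2 - 2 * k * r = 2 * r ^ 2 + -2 * k * r by ring]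
  ring

lemma SS_summ (hb0 : 0 < b) (hb1 : b < 1) {x x' : ℝ} (hx : x ≠ 0) (hx' : x' ≠ 0) (k : ℤ) :
    Summable fun r : ℤ => b ^ (2 * r ^ 2 - 2 * k * r) * x ^ (r - k) * x' ^ (-r) := by
  have := (summE b hb0 hb1 2 (-2 * k) two_pos (x / x') (div_ne_zero hx hx') _
    one_bdd _ fun r => rfl).mul_left (x ^ (-k))
  refine this.congr fun r => ?_
  rw [div_zpow, zpow_sub₀ hx, zpow_neg, zpow_neg,
    show 2 * r ^ 2 - 2 * k * r = 2 * r ^ 2 + -2 * k * r by ring]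
  ring

lemma SS_symm (x x' : ℝ) (k : ℤ) : SS b x x' k = SS b x' x k := by
  unfold SS
  rw [← (Equiv.subLeft k).tsum_eq]
  refine tsum_congr fun r => ?_
  simp only [Equiv.subLeft_apply]
  rw [show 2 * (k - r) ^ 2 - 2 * k * (k - r) = 2 * r ^ 2 - 2 * k * r by ring,
    show k - r - k = -r by ring, show -(k - r) = r - k by ring]
  ring

/-- no pole on the lattice -/
def NP (b x : ℝ) : Prop := x ≠ 0 ∧ ∀ r : ℤ, x * b ^ (2 * r) ≠ 1

lemma NP.pl {x : ℝ} (h : NP b x) (r : ℤ) : (1 - x * b ^ (2 * r)) * pl b x r = 1 := by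
  unfold M2.pl
  rw [mul_one_div_cancel]
  exact sub_ne_zero.2 (h.2 r).symm

lemma TT_step (hb0 : 0 < b) (hb1 : b < 1) {x x' : ℝ} (hx : NP b x) (hx' : x' ≠ 0) (k : ℤ) :
    TT b x x' (k + 1) - TT b x x' k = SS b x x' (k + 1) := by
  unfold TT SS
  rw [← (TT_summ hb0 hb1 hx.1 hx' (k+1)).tsum_sub (TT_summ hb0 hb1 hx.1 hx' k)]
  refine tsum_congr fun r => ?_
  have h := hx.pl r
  have e1 : b ^ (2 * r ^ 2 - 2 * k * r) = b ^ (2 * r ^ 2 - 2 * (k + 1) * r) * b ^ (2 * r) := by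
    rw [← zpow_add₀ hb0.ne']; congr 1; ring
  have e2 : x ^ (r - k) = x ^ (r - (k + 1)) * x := by
    rw [← zpow_add_one₀ hx.1]; congr 1; ring
  rw [e1, e2]
  linear_combination (b ^ (2 * r ^ 2 - 2 * (k + 1) * r) * x ^ (r - (k + 1)) * x' ^ (-r)) * h

lemma pl_one (hb0 : 0 < b) (hb1 : b < 1) (r : ℤ) :
    (1 - b ^ (2 * r)) * pl b 1 r = 1 - (if r = 0 then 1 else 0) := by
  unfold pl
  split_ifs with h
  · subst h; simp
  · rw [one_mul, mul_one_div_cancel, sub_zero]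
    intro hh
    have : b ^ (2 * r) = 1 := by linarith
    rw [zpow_eq_one_iff_right₀ hb0.le hb1.ne] at this
    omega

lemma TT_step_one (hb0 : 0 < b) (hb1 : b < 1) {x' : ℝ} (hx' : x' ≠ 0) (k : ℤ) :
    TT b 1 x' (k + 1) - TT b 1 x' k = SS b 1 x' (k + 1) - 1 := by
  unfold TT SS
  rw [← (TT_summ hb0 hb1 one_ne_zero hx' (k+1)).tsum_sub (TT_summ hb0 hb1 one_ne_zero hx' k)]
  have h1 : HasSum (fun r : ℤ => if r = 0 then (1:ℝ) else 0) 1 := hasSum_ite_eq 0 1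
  have h2 := (SS_summ hb0 hb1 one_ne_zero hx' (k+1)).tsum_sub h1.summable
  rw [h1.tsum_eq] at h2
  rw [← h2]
  refine tsum_congr fun r => ?_
  have h := pl_one hb0 hb1 r
  have e1 : b ^ (2 * r ^ 2 - 2 * k * r) = b ^ (2 * r ^ 2 - 2 * (k + 1) * r) * b ^ (2 * r) := by
    rw [← zpow_add₀ hb0.ne']; congr 1; ring
  rw [e1, one_zpow, one_zpow]
  by_cases hr : r = 0
  · subst hr; simp [pl]
  · simp only [hr, if_false, sub_zero] at h ⊢
    linear_combination (b ^ (2 * r ^ 2 - 2 * (k + 1) * r) * x' ^ (-r)) * h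

lemma int_const (F : ℤ → ℝ) (d : ℝ) (h : ∀ k, F (k + 1) - F k = d) (k : ℤ) :
    F k = F 0 + k * d := by
  induction k using Int.induction_on with
  | zero => simp
  | succ n ih => have := h n; push_cast at *; linarith
  | pred n ih => have := h (-n - 1); simp at this; push_cast at *; linarith

lemma TT_diff (hb0 : 0 < b) (hb1 : b < 1) {x x' : ℝ} (hx : NP b x) (hx' : NP b x') (k : ℤ) :
    TT b x x' k - TT b x' x k = cc b x x' := by
  have := int_const (fun k => TT b x x' k - TT b x' x k) 0 (fun k => by
    have h1 := TT_step hb0 hb1 hx hx'.1 k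
    have h2 := TT_step hb0 hb1 hx' hx.1 k
    rw [SS_symm] at h2
    show _ - _ - (_ - _) = _
    linarith) k
  simpa [cc] using this

lemma TT_diff_one (hb0 : 0 < b) (hb1 : b < 1) {x' : ℝ} (hx' : NP b x') (k : ℤ) :
    TT b 1 x' k - TT b x' 1 k = cc b 1 x' - k := by
  have := int_const (fun k => TT b 1 x' k - TT b x' 1 k) (-1) (fun k => by
    have h1 := TT_step_one hb0 hb1 hx'.1 k
    have h2 := TT_step hb0 hb1 hx' one_ne_zero k
    rw [SS_symm] at h2
    show _ - _ - (_ - _) = _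
    linarith) k
  simp only [cc] at this ⊢
  linarith

lemma jA (hb0 : 0 < b) (hb1 : b < 1) {x x' u : ℝ} (hx : x ≠ 0) (hx' : x' ≠ 0) (hu : u ≠ 0) :
    HasSum (fun k : ℤ => b ^ (k ^ 2 - k) * (u * x * x') ^ k * TT b x x' k)
      (jf b (u * x') * AA b x (u * x)) := by
  have := conv (AA_summ hb0 hb1 hx (mul_ne_zero hu hx)) (jf_summ hb0 hb1 (mul_ne_zero hu hx'))
  rw [mul_comm (jf b _)]
  refine this.congr_fun ?_ |> fun h => h
  intro k
  unfold TT
  rw [← tsum_mul_left]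
  refine tsum_congr fun r => ?_
  have e1 : b ^ (k ^ 2 - k) * b ^ (2 * r ^ 2 - 2 * k * r) =
      b ^ (r ^ 2 - r) * b ^ ((k - r) ^ 2 - (k - r)) := by
    rw [← zpow_add₀ hb0.ne', ← zpow_add₀ hb0.ne']; congr 1; ring
  have e2 : (u * x * x') ^ k * x ^ (r - k) * x' ^ (-r) = (u * x) ^ r * (u * x') ^ (k - r) := by
    rw [mul_zpow, mul_zpow, mul_zpow, mul_zpow, zpow_sub₀ hx, zpow_neg, zpow_sub₀ hu, zpow_sub₀ hx']
    field_simp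
  linear_combination ((u * x * x') ^ k * x ^ (r - k) * x' ^ (-r) * pl b x r) * e1 +
    b ^ (r ^ 2 - r) * b ^ ((k - r) ^ 2 - (k - r)) * pl b x r * e2

theorem F1 (hb0 : 0 < b) (hb1 : b < 1) {x x' u : ℝ} (hx : NP b x) (hx' : NP b x') (hu : u ≠ 0) :
    jf b (u * x') * AA b x (u * x) - jf b (u * x) * AA b x' (u * x') =
      cc b x x' * jf b (u * x * x') := by
  have h1 := jA hb0 hb1 hx.1 hx'.1 hu
  have h2 := jA hb0 hb1 hx'.1 hx.1 hu
  have h3 := h1.sub h2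
  rw [← h3.tsum_eq, jf, ← tsum_mul_left]
  refine tsum_congr fun k => ?_
  rw [show u * x' * x = u * x * x' by ring]
  linear_combination (b ^ (k ^ 2 - k) * (u * x * x') ^ k) * TT_diff hb0 hb1 hx hx' k

theorem F1s (hb0 : 0 < b) (hb1 : b < 1) {x' u : ℝ} (hx' : NP b x') (hu : u ≠ 0) :
    jf b (u * x') * AA b 1 u - jf b u * AA b x' (u * x') =
      cc b 1 x' * jf b (u * x') - Dj b (u * x') := by
  have h1 := jA hb0 hb1 one_ne_zero hx'.1 hu
  have h2 := jA hb0 hb1 hx'.1 one_ne_zero hu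
  have h3 := h1.sub h2
  rw [mul_one] at h3
  rw [← h3.tsum_eq, jf, Dj, ← tsum_mul_left,
    ← ((jf_summ hb0 hb1 (mul_ne_zero hu hx'.1)).mul_left _).tsum_sub
      (Dj_summ hb0 hb1 (mul_ne_zero hu hx'.1))]
  refine tsum_congr fun k => ?_
  rw [mul_one]
  linear_combination (b ^ (k ^ 2 - k) * (u * x') ^ k) * TT_diff_one hb0 hb1 hx' k

end M2

namespace M2
variable {b : ℝ}

lemma jf_shift (hb0 : 0 < b) {y : ℝ} (hy : y ≠ 0) : jf b (b ^ 2 * y) = y⁻¹ * jf b y := by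
  unfold jf
  rw [← (Equiv.addRight (1:ℤ)).tsum_eq (fun r : ℤ => b ^ (r ^ 2 - r) * y ^ r), ← tsum_mul_left]
  refine tsum_congr fun r => ?_
  simp only [Equiv.coe_addRight]
  rw [mul_zpow, zpow_add_one₀ hy, ← zpow_natCast b 2, ← zpow_mul,
    show (r + 1) ^ 2 - (r + 1) = (r ^ 2 - r) + ((2:ℕ):ℤ) * r by push_cast; ring, zpow_add₀ hb0.ne']
  field_simp

lemma Dj_shift (hb0 : 0 < b) (hb1 : b < 1) {y : ℝ} (hy : y ≠ 0) :
    Dj b (b ^ 2 * y) = y⁻¹ * (Dj b y - jf b y) := by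
  unfold jf Dj
  rw [← (Dj_summ hb0 hb1 hy).tsum_sub (jf_summ hb0 hb1 hy)]
  rw [← (Equiv.addRight (1:ℤ)).tsum_eq
    (fun r : ℤ => b ^ (r ^ 2 - r) * y ^ r * (r:ℝ) - b ^ (r ^ 2 - r) * y ^ r), ← tsum_mul_left]
  refine tsum_congr fun r => ?_
  simp only [Equiv.coe_addRight]
  rw [mul_zpow, zpow_add_one₀ hy, ← zpow_natCast b 2, ← zpow_mul,
    show (r + 1) ^ 2 - (r + 1) = (r ^ 2 - r) + ((2:ℕ):ℤ) * r by push_cast; ring, zpow_add₀ hb0.ne']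
  push_cast
  field_simp
  ring

lemma jf_inv {y : ℝ} (hy : y ≠ 0) : jf b y⁻¹ = y⁻¹ * jf b y := by
  unfold jf
  rw [← (Equiv.subLeft (1:ℤ)).tsum_eq, ← tsum_mul_left]
  refine tsum_congr fun r => ?_
  simp only [Equiv.subLeft_apply]
  rw [show (1 - r) ^ 2 - (1 - r) = r ^ 2 - r by ring, inv_zpow, zpow_sub₀ hy]
  field_simp

lemma Dj_inv (hb0 : 0 < b) (hb1 : b < 1) {y : ℝ} (hy : y ≠ 0) :
    Dj b y⁻¹ = y⁻¹ * (jf b y - Dj b y) := by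
  unfold jf Dj
  rw [← (jf_summ hb0 hb1 hy).tsum_sub (Dj_summ hb0 hb1 hy)]
  rw [← (Equiv.subLeft (1:ℤ)).tsum_eq, ← tsum_mul_left]
  refine tsum_congr fun r => ?_
  simp only [Equiv.subLeft_apply]
  rw [show (1 - r) ^ 2 - (1 - r) = r ^ 2 - r by ring, inv_zpow, zpow_sub₀ hy]
  push_cast
  field_simp

lemma jf_neg_one : jf b (-1) = 0 := by
  have := jf_inv (b := b) (y := -1) (by norm_num)
  norm_num at this
  linarith

lemma jf_refl (hb0 : 0 < b) {y : ℝ} (hy : y ≠ 0) : jf b (b ^ 2 / y) = jf b y := by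
  rw [div_eq_mul_inv, jf_shift hb0 (inv_ne_zero hy), jf_inv hy]; field_simp

lemma Dj_refl (hb0 : 0 < b) (hb1 : b < 1) {y : ℝ} (hy : y ≠ 0) : Dj b (b ^ 2 / y) = - Dj b y := by
  rw [div_eq_mul_inv, Dj_shift hb0 hb1 (inv_ne_zero hy), Dj_inv hb0 hb1 hy, jf_inv hy]; field_simp; ring

lemma AA_inv (hb0 : 0 < b) {x y : ℝ} (hx : x ≠ 0) (hy : y ≠ 0) :
    AA b x y = - x⁻¹ * AA b x⁻¹ (b ^ 4 / y) := by
  unfold AA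
  rw [← (Equiv.neg ℤ).tsum_eq, ← tsum_mul_left]
  refine tsum_congr fun r => ?_
  simp only [Equiv.neg_apply]
  have h1 : ∀ w : ℝ, w ≠ 0 → 1 / (1 - w) = - w⁻¹ * (1 / (1 - w⁻¹)) := by
    intro w hw
    by_cases h : w = 1
    · subst h; simp
    · have : 1 - w ≠ 0 := sub_ne_zero.2 (Ne.symm h)
      have : w - 1 ≠ 0 := sub_ne_zero.2 h
      field_simp; ring
  have hw : x * b ^ (2 * -r) ≠ 0 := mul_ne_zero hx (zpow_ne_zero _ hb0.ne')
  have h2 : (x * b ^ (2 * -r))⁻¹ = x⁻¹ * b ^ (2 * r) := by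
    rw [mul_inv, ← zpow_neg]; congr 2; ring
  unfold pl
  rw [h1 _ hw, h2, div_zpow, zpow_neg, ← zpow_natCast b 4, ← zpow_mul,
    show (-r) ^ 2 - -r = (r ^ 2 - r) + 2 * r by ring, zpow_add₀ hb0.ne',
    show ((4:ℕ):ℤ) * r = 2 * r + 2 * r by push_cast; ring, zpow_add₀ hb0.ne']
  have : y ^ r ≠ 0 := zpow_ne_zero _ hy
  field_simp

lemma AA_one_step (hb0 : 0 < b) (hb1 : b < 1) {y : ℝ} (hy : y ≠ 0) :
    AA b 1 y - AA b 1 (b ^ 2 * y) = jf b y - 1 := by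
  have h1 : HasSum (fun r : ℤ => if r = 0 then (1:ℝ) else 0) 1 := hasSum_ite_eq 0 1
  have h2 := (jf_summ hb0 hb1 hy).tsum_sub h1.summable
  rw [h1.tsum_eq] at h2
  have hby : b ^ 2 * y ≠ 0 := mul_ne_zero (pow_ne_zero _ hb0.ne') hy
  rw [jf, ← h2, AA, AA, ← (AA_summ hb0 hb1 one_ne_zero hy).tsum_sub (AA_summ hb0 hb1 one_ne_zero hby)]
  refine tsum_congr fun r => ?_
  have h := pl_one hb0 hb1 r
  rw [mul_zpow, ← zpow_natCast b 2, ← zpow_mul]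
  push_cast
  by_cases hr : r = 0
  · subst hr; simp [pl]
  · simp only [hr, if_false, sub_zero] at h ⊢
    linear_combination (b ^ (r ^ 2 - r) * y ^ r) * h

lemma AA_one_neg_one (hb0 : 0 < b) (hb1 : b < 1) : AA b 1 (-1) = -1 := by
  have h1 := AA_one_step hb0 hb1 (y := -1) (by norm_num)
  have h2 := AA_one_step hb0 hb1 (y := b ^ 2 * (-1)) (by simp [hb0.ne'])
  have h3 := AA_inv hb0 (x := 1) (y := -1) one_ne_zero (by norm_num)
  have h4 := jf_shift hb0 (y := -1) (by norm_num)
  rw [jf_neg_one] at h1 h4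
  rw [h4] at h2
  have e : b ^ 2 * (b ^ 2 * (-1)) = b ^ 4 / (-1) := by ring
  rw [e] at h2
  simp only [inv_one, mul_zero] at *
  linarith

/-- `κ` -/
noncomputable def kap (b : ℝ) : ℝ := - Dj b (-1)
/-- bracket -/
noncomputable def th (b x : ℝ) : ℝ := jf b (-x)
noncomputable def rho (b x : ℝ) : ℝ := Dj b (-x) / jf b (-x)

lemma AA_th (hb0 : 0 < b) (hb1 : b < 1) {x : ℝ} (hx : NP b x) :
    AA b x (-1) * th b x = kap b * x := by
  have hx0 := hx.1
  have h := F1s hb0 hb1 (u := -1 / x) hx (by simp [hx.1])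
  rw [div_mul_cancel₀ _ hx0, jf_neg_one] at h
  have h2 := jf_inv (b := b) (y := -x) (by simpa using hx0)
  have e : -1 / x = (-x)⁻¹ := by rw [inv_neg]; ring
  rw [e, h2] at h
  simp only [th, kap]
  field_simp at h
  linear_combination h

lemma th_ne (hb0 : 0 < b) (hb1 : b < 1) (hk : kap b ≠ 0) {x : ℝ} (hx : NP b x) : th b x ≠ 0 := by
  intro h
  have := AA_th hb0 hb1 hx
  rw [h, mul_zero] at this
  exact mul_ne_zero hk hx.1 this.symm

lemma Dj_th (hb0 : 0 < b) (hb1 : b < 1) {x : ℝ} (hx : NP b x) :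
    Dj b (-x) = (cc b 1 x + 1) * th b x := by
  have h := F1s hb0 hb1 (u := -1) hx (by norm_num)
  rw [jf_neg_one, AA_one_neg_one hb0 hb1, neg_one_mul] at h
  simp only [th]; linarith

lemma rho_eq (hb0 : 0 < b) (hb1 : b < 1) (hk : kap b ≠ 0) {x : ℝ} (hx : NP b x) :
    rho b x = cc b 1 x + 1 := by
  have h := th_ne hb0 hb1 hk hx
  rw [rho, Dj_th hb0 hb1 hx]; unfold th at *
  field_simp

lemma Dj_rho (hb0 : 0 < b) (hb1 : b < 1) (hk : kap b ≠ 0) {x : ℝ} (hx : NP b x) :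
    Dj b (-x) = rho b x * th b x := by
  rw [rho_eq hb0 hb1 hk hx, Dj_th hb0 hb1 hx]

lemma cc_th (hb0 : 0 < b) (hb1 : b < 1) {x x' : ℝ} (hx : NP b x) (hx' : NP b x') :
    cc b x x' * th b x' * th b x = kap b * x * th b (x' / x) := by
  have hx0 := hx.1
  have h := F1 hb0 hb1 (u := -1 / x) hx hx' (by simp [hx.1])
  rw [div_mul_cancel₀ _ hx0, jf_neg_one, neg_one_mul, show -1 / x * x' = - (x' / x) by ring] at h
  have := AA_th hb0 hb1 hx
  simp only [th] at *
  linear_combination (-jf b (-x)) * h + jf b (-(x' / x)) * this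

lemma star (hb0 : 0 < b) (hb1 : b < 1) (hk : kap b ≠ 0) {x x' y : ℝ} (hx : NP b x) (hx' : NP b x')
    (hxy : NP b (x * y)) (hxy' : NP b (x' * y)) :
    kap b * x * th b (x' / x) * th b y * th b (x * x' * y) =
      (rho b x' - rho b x + rho b (x * y) - rho b (x' * y)) *
        (th b x * th b x' * th b (x * y) * th b (x' * y)) := by
  have hy : y ≠ 0 := fun h => hxy.1 (by simp [h])
  have h1 := F1 hb0 hb1 (u := -y) hx hx' (by simpa using hy)
  have h2 := F1s hb0 hb1 (u := -y) hx (by simpa using hy)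
  have h3 := F1s hb0 hb1 (u := -y) hx' (by simpa using hy)
  have h4 := cc_th hb0 hb1 hx hx'
  have h5 := Dj_rho hb0 hb1 hk hxy
  have h6 := Dj_rho hb0 hb1 hk hxy'
  have h7 := rho_eq hb0 hb1 hk hx
  have h8 := rho_eq hb0 hb1 hk hx'
  rw [show -y * x * x' = -(x * x' * y) by ring, show -y * x = -(x * y) by ring,
    show -y * x' = - (x' * y) by ring] at *
  rw [h5] at h2
  rw [h6] at h3
  rw [h7, h8]
  unfold th at *
  generalize jf b (-y) = jy at *
  generalize jf b (-(x * x' * y)) = jxxy at *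
  generalize jf b (-(x * y)) = jxy at *
  generalize jf b (-(x' * y)) = jxy' at *
  generalize jf b (-(x' / x)) = jq at *
  generalize jf b (-x) = jx at *
  generalize jf b (-x') = jx' at *
  generalize AA b x _ = A1 at *
  generalize AA b x' _ = A2 at *
  linear_combination (-jy * jxxy) * h4 - (jy * jx * jx') * h1  - (jxy' * jx * jx') * h2 + (jxy * jx * jx') * h3

lemma NP_neg (hb0 : 0 < b) {x : ℝ} (hx : 0 < x) : NP b (-x) :=
  ⟨by simpa using hx.ne', fun r h => by
    have : 0 < x * b ^ (2 * r) := by positivity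
    linarith⟩

lemma NP_pow {q : ℝ} (hq0 : 0 < q) (hq1 : q < 1) (m k : ℤ) (h : ¬ (2 * m ∣ k)) :
    NP (q ^ m) (q ^ k) := by
  refine ⟨zpow_ne_zero _ hq0.ne', fun r hr => h ?_⟩
  rw [← zpow_mul, ← zpow_add₀ hq0.ne', zpow_eq_one_iff_right₀ hq0.le hq1.ne] at hr
  exact ⟨-r, by linear_combination hr⟩

/-! rho rules -/
lemma rho_shift (hb0 : 0 < b) (hb1 : b < 1) {x : ℝ} (hx : x ≠ 0) (h : th b x ≠ 0) :
    rho b (b ^ 2 * x) = rho b x - 1 := by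
  unfold rho th at *
  rw [show -(b ^ 2 * x) = b ^ 2 * (-x) by ring, jf_shift hb0 (by simpa using hx),
    Dj_shift hb0 hb1 (by simpa using hx)]
  field_simp

lemma rho_refl (hb0 : 0 < b) (hb1 : b < 1) {x : ℝ} (hx : x ≠ 0) :
    rho b (b ^ 2 / x) = - rho b x := by
  unfold rho
  rw [show -(b ^ 2 / x) = b ^ 2 / (-x) by rw [div_neg], jf_refl hb0 (by simpa using hx),
    Dj_refl hb0 hb1 (by simpa using hx)]
  rw [neg_div]

lemma rho_inv (hb0 : 0 < b) (hb1 : b < 1) {x : ℝ} (hx : x ≠ 0) (h : th b x ≠ 0) :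
    rho b x⁻¹ = 1 - rho b x := by
  unfold rho th at *
  rw [← inv_neg, jf_inv (by simpa using hx),
    Dj_inv hb0 hb1 (by simpa using hx)]
  field_simp

lemma th_inv {x : ℝ} (hx : x ≠ 0) : th b x⁻¹ = -x⁻¹ * th b x := by
  unfold th
  rw [← inv_neg, jf_inv (by simpa using hx)]

lemma th_refl (hb0 : 0 < b) {x : ℝ} (hx : x ≠ 0) : th b (b ^ 2 / x) = th b x := by
  unfold th
  rw [show -(b ^ 2 / x) = b ^ 2 / (-x) by rw [div_neg], jf_refl hb0 (by simpa using hx)]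

/-! base change -/
lemma bc1c (hb0 : 0 < b) {y : ℝ} (hy : y ≠ 0) (k : ℤ) :
    ∑' r : ℤ, ((b ^ 2) ^ (r ^ 2 - r) * y ^ r) * ((b ^ 2) ^ ((k - r) ^ 2 - (k - r)) * (b ^ 2 * y) ^ (k - r))
      = jf (b ^ 4) (b ^ 2) * (b ^ (k ^ 2 - k) * y ^ k) := by
  have e : ∀ r : ℤ, ((b ^ 2) ^ (r ^ 2 - r) * y ^ r) * ((b ^ 2) ^ ((k - r) ^ 2 - (k - r)) * (b ^ 2 * y) ^ (k - r))
      = (b ^ (k ^ 2 - k) * y ^ k) * b ^ ((2 * r - k) ^ 2 - (2 * r - k)) := by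
    intro r
    have e2 : y ^ k = y ^ r * y ^ (k - r) := by rw [← zpow_add₀ hy]; congr 1; ring
    have e3 : (b ^ 2) ^ (r ^ 2 - r) * (b ^ 2) ^ ((k - r) ^ 2 - (k - r)) * (b ^ 2) ^ (k - r)
        = b ^ (k ^ 2 - k) * b ^ ((2 * r - k) ^ 2 - (2 * r - k)) := by
      rw [← zpow_natCast b 2]
      simp only [← zpow_mul, ← zpow_add₀ hb0.ne']
      congr 1; push_cast; ring
    rw [mul_zpow, e2]
    linear_combination (y ^ r * y ^ (k - r)) * e3
  simp_rw [e]
  rw [tsum_mul_left, mul_comm]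
  congr 1
  unfold jf
  rcases Int.even_or_odd' k with ⟨j, rfl | rfl⟩
  · rw [← (Equiv.addRight j).tsum_eq]
    refine tsum_congr fun r => ?_
    simp only [Equiv.coe_addRight]
    rw [← zpow_natCast b 2, ← zpow_natCast b 4]
    simp only [← zpow_mul, ← zpow_add₀ hb0.ne']
    congr 1; push_cast; ring
  · rw [← (Equiv.subLeft (1 + j)).tsum_eq]
    refine tsum_congr fun r => ?_
    simp only [Equiv.subLeft_apply]
    rw [← zpow_natCast b 2, ← zpow_natCast b 4]
    simp only [← zpow_mul, ← zpow_add₀ hb0.ne']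
    congr 1; push_cast; ring

lemma conv_fib {f g : ℤ → ℝ} (hf : Summable f) (hg : Summable g) (k : ℤ) :
    Summable fun r => f r * g (k - r) := by
  have h1 : Summable fun z : ℤ × ℤ => f z.1 * g z.2 :=
    summable_mul_of_summable_norm hf.norm hg.norm
  have h3 : Summable fun z : ℤ × ℤ => f (shear z).1 * g (shear z).2 :=
    (shear.summable_iff (f := fun z : ℤ × ℤ => f z.1 * g z.2)).2 h1
  exact h3.prod_factor k

lemma convD {f g : ℤ → ℝ} (hf : Summable f) (hg : Summable g)
    (hf' : Summable fun r : ℤ => f r * r) (hg' : Summable fun r : ℤ => g r * r) :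
    HasSum (fun k : ℤ => (∑' r, f r * g (k - r)) * k)
      ((∑' r, f r * (r:ℝ)) * (∑' r, g r) + (∑' r, f r) * ∑' r, g r * (r:ℝ)) := by
  have h1 := (conv hf' hg).add (conv hf hg')
  refine h1.congr_fun ?_ |> fun h => h
  intro k
  have hs1 := conv_fib hf' hg k
  have hs2 := conv_fib hf hg' k
  rw [← hs1.tsum_add hs2, ← tsum_mul_right]
  refine tsum_congr fun r => ?_
  push_cast; ring

lemma bc1 (hb0 : 0 < b) (hb1 : b < 1) {y : ℝ} (hy : y ≠ 0) :
    jf (b ^ 2) y * jf (b ^ 2) (b ^ 2 * y) = jf (b ^ 4) (b ^ 2) * jf b y := by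
  have h0 : 0 < b ^ 2 := by positivity
  have h1 : b ^ 2 < 1 := pow_lt_one₀ hb0.le hb1 two_ne_zero
  have := conv (jf_summ h0 h1 hy) (jf_summ h0 h1 (mul_ne_zero h0.ne' hy))
  simp_rw [bc1c hb0 hy] at this
  exact this.tsum_eq.symm.trans (by rw [tsum_mul_left]; rfl)

lemma bc1D (hb0 : 0 < b) (hb1 : b < 1) {y : ℝ} (hy : y ≠ 0) :
    Dj (b ^ 2) y * jf (b ^ 2) (b ^ 2 * y) + jf (b ^ 2) y * Dj (b ^ 2) (b ^ 2 * y)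
      = jf (b ^ 4) (b ^ 2) * Dj b y := by
  have h0 : 0 < b ^ 2 := by positivity
  have h1 : b ^ 2 < 1 := pow_lt_one₀ hb0.le hb1 two_ne_zero
  have := convD (jf_summ h0 h1 hy) (jf_summ h0 h1 (mul_ne_zero h0.ne' hy))
    (Dj_summ h0 h1 hy) (Dj_summ h0 h1 (mul_ne_zero h0.ne' hy))
  simp_rw [bc1c hb0 hy] at this
  exact this.tsum_eq.symm.trans (by simp_rw [mul_assoc]; rw [tsum_mul_left]; simp only [Dj, mul_assoc])

lemma bc2c (hb0 : 0 < b) {y : ℝ} (hy : y ≠ 0) (k : ℤ) :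
    ∑' r : ℤ, (b ^ (r ^ 2 - r) * y ^ r) * (b ^ ((k - r) ^ 2 - (k - r)) * (-y) ^ (k - r))
      = (y ^ k * b ^ (k ^ 2 - k)) * ∑' r : ℤ, b ^ (2 * r ^ 2 - 2 * k * r) * (-1) ^ (k - r) := by
  rw [← tsum_mul_left]
  refine tsum_congr fun r => ?_
  have e2 : y ^ k = y ^ r * y ^ (k - r) := by rw [← zpow_add₀ hy]; congr 1; ring
  have e3 : b ^ (r ^ 2 - r) * b ^ ((k - r) ^ 2 - (k - r)) 
        = b ^ (k ^ 2 - k) * b ^ (2 * r ^ 2 - 2 * k * r) := by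
    simp only [← zpow_add₀ hb0.ne']
    congr 1; ring
  rw [show -y = (-1) * y by ring, mul_zpow, e2]
  linear_combination (y ^ r * y ^ (k - r) * (-1) ^ (k - r)) * e3

noncomputable def C2 (b : ℝ) : ℝ := ∑' r : ℤ, b ^ (2 * r ^ 2) * (-1) ^ r

lemma bc2even (hb0 : 0 < b) (j : ℤ) :
    ∑' r : ℤ, b ^ (2 * r ^ 2 - 2 * (2 * j) * r) * (-1) ^ (2 * j - r) =
      (-1) ^ j * b ^ (- (2 * j ^ 2)) * C2 b := by
  unfold C2
  rw [← (Equiv.addRight j).tsum_eq, ← tsum_mul_left]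
  refine tsum_congr fun r => ?_
  simp only [Equiv.coe_addRight]
  have e1 : b ^ (2 * (r + j) ^ 2 - 2 * (2 * j) * (r + j)) = b ^ (- (2 * j ^ 2)) * b ^ (2 * r ^ 2) := by
    rw [← zpow_add₀ hb0.ne']; congr 1; ring
  have e2 : (-1 : ℝ) ^ (2 * j - (r + j)) = (-1) ^ j * (-1) ^ r := by
    rw [show 2 * j - (r + j) = j - r by ring, zpow_sub₀ (by norm_num), div_eq_mul_inv, ← inv_zpow]
    norm_num
  rw [e1, e2]; ring

lemma bc2odd (j : ℤ) :
    ∑' r : ℤ, b ^ (2 * r ^ 2 - 2 * (2 * j + 1) * r) * (-1) ^ (2 * j + 1 - r) = 0 := by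
  set S := ∑' r : ℤ, b ^ (2 * r ^ 2 - 2 * (2 * j + 1) * r) * (-1) ^ (2 * j + 1 - r) with hS
  have : S = - S := by
    conv_lhs => rw [hS, ← (Equiv.subLeft (2 * j + 1)).tsum_eq]
    rw [hS, ← tsum_neg]
    refine tsum_congr fun r => ?_
    simp only [Equiv.subLeft_apply]
    have e1 : 2 * (2 * j + 1 - r) ^ 2 - 2 * (2 * j + 1) * (2 * j + 1 - r) =
      2 * r ^ 2 - 2 * (2 * j + 1) * r := by ring
    have e2 : (-1 : ℝ) ^ (2 * j + 1 - (2 * j + 1 - r)) = - (-1) ^ (2 * j + 1 - r) := by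
      rw [show 2 * j + 1 - (2 * j + 1 - r) = r by ring, zpow_sub₀ (by norm_num), div_eq_mul_inv,
        ← inv_zpow, zpow_add_one₀ (by norm_num), zpow_mul]
      norm_num
    rw [e1, e2]; ring
  linarith

lemma two_mul_inj : Function.Injective (fun j : ℤ => 2 * j) := fun a c h => by
  simp only at h; omega

lemma bc2 (hb0 : 0 < b) (hb1 : b < 1) {y : ℝ} (hy : y ≠ 0) :
    jf b y * jf b (-y) = C2 b * jf (b ^ 2) (- y ^ 2) := by
  have := conv (jf_summ hb0 hb1 hy) (jf_summ hb0 hb1 (neg_ne_zero.2 hy))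
  simp_rw [bc2c hb0 hy] at this
  rw [← two_mul_inj.hasSum_iff] at this
  · refine this.tsum_eq.symm.trans ?_
    unfold jf
    rw [← tsum_mul_left]
    refine tsum_congr fun j => ?_
    simp only [Function.comp, bc2even hb0]
    rw [show -y ^ 2 = (-1) * y ^ 2 by ring, mul_zpow, ← zpow_natCast y 2, ← zpow_natCast b 2,
      ← zpow_mul, ← zpow_mul]
    have : b ^ (((2:ℕ):ℤ) * (j ^ 2 - j)) = b ^ ((2 * j) ^ 2 - 2 * j) * b ^ (-(2 * j ^ 2)) := by
      rw [← zpow_add₀ hb0.ne']; congr 1; push_cast; ring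
    rw [this]; push_cast; ring
  · intro k hk
    rcases Int.even_or_odd' k with ⟨j, rfl | rfl⟩
    · exact absurd ⟨j, rfl⟩ hk
    · rw [bc2odd, mul_zero]

lemma bc2D (hb0 : 0 < b) (hb1 : b < 1) {y : ℝ} (hy : y ≠ 0) :
    Dj b y * jf b (-y) + jf b y * Dj b (-y) = 2 * C2 b * Dj (b ^ 2) (- y ^ 2) := by
  have := convD (jf_summ hb0 hb1 hy) (jf_summ hb0 hb1 (neg_ne_zero.2 hy))
    (Dj_summ hb0 hb1 hy) (Dj_summ hb0 hb1 (neg_ne_zero.2 hy))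
  simp_rw [bc2c hb0 hy] at this
  rw [← two_mul_inj.hasSum_iff] at this
  · refine this.tsum_eq.symm.trans ?_
    unfold Dj
    rw [← tsum_mul_left]
    refine tsum_congr fun j => ?_
    simp only [Function.comp, bc2even hb0]
    rw [show -y ^ 2 = (-1) * y ^ 2 by ring, mul_zpow, ← zpow_natCast y 2, ← zpow_natCast b 2,
      ← zpow_mul, ← zpow_mul]
    have : b ^ (((2:ℕ):ℤ) * (j ^ 2 - j)) = b ^ ((2 * j) ^ 2 - 2 * j) * b ^ (-(2 * j ^ 2)) := by
      rw [← zpow_add₀ hb0.ne']; congr 1; push_cast; ring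
    rw [this]; push_cast; ring
  · intro k hk
    rcases Int.even_or_odd' k with ⟨j, rfl | rfl⟩
    · exact absurd ⟨j, rfl⟩ hk
    · rw [bc2odd, mul_zero, zero_mul]

/-- rho base changes -/
lemma rho_bc1 (hb0 : 0 < b) (hb1 : b < 1) {x : ℝ} (hx : x ≠ 0) (h1 : th (b ^ 2) x ≠ 0)
    (h2 : th (b ^ 2) (b ^ 2 * x) ≠ 0) :
    rho (b ^ 2) x + rho (b ^ 2) (b ^ 2 * x) = rho b x := by
  have e1 := bc1 hb0 hb1 (neg_ne_zero.2 hx)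
  have e2 := bc1D hb0 hb1 (neg_ne_zero.2 hx)
  unfold rho th at *
  rw [show -(b ^ 2 * x) = b ^ 2 * -x by ring] at *
  have h3 : jf (b ^ 4) (b ^ 2) * jf b (-x) ≠ 0 := e1 ▸ mul_ne_zero h1 h2
  have h4 := left_ne_zero_of_mul h3
  have h5 := right_ne_zero_of_mul h3
  rw [div_add_div _ _ h1 h2, e1, e2]
  field_simp

lemma rho_bc2 (hb0 : 0 < b) (hb1 : b < 1) {x : ℝ} (hx : x ≠ 0) (h1 : th b x ≠ 0)
    (h2 : th b (-x) ≠ 0) :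
    rho b x + rho b (-x) = 2 * rho (b ^ 2) (x ^ 2) := by
  have e1 := bc2 hb0 hb1 (neg_ne_zero.2 hx)
  have e2 := bc2D hb0 hb1 (neg_ne_zero.2 hx)
  unfold rho th at *
  rw [neg_sq] at *
  have h3 : C2 b * jf (b ^ 2) (-x ^ 2) ≠ 0 := e1 ▸ mul_ne_zero h1 h2
  have h4 := left_ne_zero_of_mul h3
  have h5 := right_ne_zero_of_mul h3
  rw [div_add_div _ _ h1 h2, e1, e2]
  field_simp

end M2

namespace M2

/-- infinite q-Pochhammer -/
noncomputable def poch (a p : ℝ) : ℝ := ∏' n : ℕ, (1 - a * p ^ n)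
noncomputable def fp (a p : ℝ) (n : ℕ) : ℝ := ∏ i ∈ Finset.range n, (1 - a * p ^ i)

section
variable {p : ℝ}

lemma poch_summ (hp0 : 0 < p) (hp1 : p < 1) (a : ℝ) : Summable fun n : ℕ => -(a * p ^ n) :=
  ((summable_geometric_of_lt_one hp0.le hp1).mul_left a).neg

lemma fp_tendsto (hp0 : 0 < p) (hp1 : p < 1) (a : ℝ) : Tendsto (fp a p) atTop (𝓝 (poch a p)) := by
  have : Multipliable fun n : ℕ => (1 - a * p ^ n) := by
    simpa [sub_eq_add_neg] using Real.multipliable_one_add_of_summable (poch_summ hp0 hp1 a)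
  exact this.tendsto_prod_tprod_nat

lemma poch_ne (hp0 : 0 < p) (hp1 : p < 1) (a : ℝ) (h : ∀ n : ℕ, a * p ^ n ≠ 1) : poch a p ≠ 0 := by
  have := tprod_one_add_ne_zero_of_summable (f := fun n : ℕ => -(a * p ^ n))
    (fun i => by rw [← sub_eq_add_neg]; exact sub_ne_zero.2 (h i).symm) (poch_summ hp0 hp1 a).norm
  simpa [poch, sub_eq_add_neg] using this

lemma poch_mul_neg (hp0 : 0 < p) (hp1 : p < 1) (a : ℝ) : poch a p * poch (-a) p = poch (a ^ 2) (p ^ 2) := by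
  have h1 := (fp_tendsto hp0 hp1 a).mul (fp_tendsto hp0 hp1 (-a))
  have h2 := fp_tendsto (p := p ^ 2) (by positivity) (pow_lt_one₀ hp0.le hp1 two_ne_zero) (a ^ 2)
  refine tendsto_nhds_unique (h1.congr fun n => ?_) h2
  simp only [fp]
  rw [← Finset.prod_mul_distrib]
  refine Finset.prod_congr rfl fun i _ => ?_
  rw [← pow_mul, mul_comm 2 i, pow_mul]; ring

lemma poch_split (hp0 : 0 < p) (hp1 : p < 1) (a : ℝ) (m : ℕ) (hm : 0 < m) :
    poch a p = ∏ j ∈ Finset.range m, poch (a * p ^ j) (p ^ m) := by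
  have h1 : Tendsto (fun n => ∏ j ∈ Finset.range m, fp (a * p ^ j) (p ^ m) n) atTop
      (𝓝 (∏ j ∈ Finset.range m, poch (a * p ^ j) (p ^ m))) :=
    tendsto_finsetProd _ fun j _ => fp_tendsto (p := p ^ m) (by positivity) (pow_lt_one₀ hp0.le hp1 hm.ne') _
  have h2 := (fp_tendsto hp0 hp1 a).comp (tendsto_id.nsmul_atTop (α := ℕ) hm)
  refine tendsto_nhds_unique h2 (h1.congr fun n => ?_)
  simp only [Function.comp, fp, id, smul_eq_mul]
  induction n with
  | zero => simp
  | succ n ih =>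
    rw [Nat.mul_succ, Finset.prod_range_add, ← ih, ← Finset.prod_mul_distrib]
    refine Finset.prod_congr rfl fun j _ => ?_
    rw [Finset.prod_range_succ, ← pow_mul, pow_add]
    ring

lemma poch_step (hp0 : 0 < p) (hp1 : p < 1) (a : ℝ) : poch a p = (1 - a) * poch (a * p) p := by
  have h1 := (fp_tendsto hp0 hp1 (a * p)).const_mul (1 - a)
  have h2 := (fp_tendsto hp0 hp1 a).comp (tendsto_add_atTop_nat 1)
  refine tendsto_nhds_unique h2 (h1.congr fun n => ?_)
  simp only [Function.comp, fp]
  rw [Finset.prod_range_succ', mul_comm]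
  simp only [pow_zero, mul_one, pow_succ']
  congr 1
  exact Finset.prod_congr rfl fun i _ => by ring

lemma fpp_pos (hp0 : 0 < p) (hp1 : p < 1) (n : ℕ) : 0 < fp p p n := by
  refine Finset.prod_pos fun i _ => ?_
  have : p ^ (i + 1) < 1 := pow_lt_one₀ hp0.le hp1 (by omega)
  rw [← pow_succ']; linarith

lemma fpp_anti (hp0 : 0 < p) (hp1 : p < 1) : Antitone (fp p p) := by
  refine antitone_nat_of_succ_le fun n => ?_
  rw [fp, Finset.prod_range_succ]
  have := fpp_pos hp0 hp1 n
  have : 0 < p * p ^ n := by positivity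
  change fp p p n * _ ≤ fp p p n
  nlinarith

lemma E_pos (hp0 : 0 < p) (hp1 : p < 1) : 0 < poch p p := by
  have h1 : 0 ≤ poch p p := ge_of_tendsto' (fp_tendsto hp0 hp1 p) fun n => (fpp_pos hp0 hp1 n).le
  have h2 : poch p p ≠ 0 := poch_ne hp0 hp1 p fun n => by
    rw [← pow_succ']; exact (pow_lt_one₀ hp0.le hp1 (by omega)).ne
  exact lt_of_le_of_ne h1 h2.symm

lemma E_le (hp0 : 0 < p) (hp1 : p < 1) (n : ℕ) : poch p p ≤ fp p p n :=
  (fpp_anti hp0 hp1).le_of_tendsto (fp_tendsto hp0 hp1 p) n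

/-- inverse of finite Pochhammer, zero for negative index -/
noncomputable def ip (p : ℝ) (m : ℤ) : ℝ := if m < 0 then 0 else (fp p p m.toNat)⁻¹

lemma ip_step (hp0 : 0 < p) (hp1 : p < 1) (m : ℤ) : ip p (m - 1) = (1 - p ^ m) * ip p m := by
  unfold ip
  rcases lt_trichotomy m 0 with h | h | h
  · simp [h, show m - 1 < 0 by omega]
  · subst h; simp
  · obtain ⟨n, rfl⟩ : ∃ n : ℕ, m = n + 1 := ⟨(m - 1).toNat, by omega⟩
    have h1 := fpp_pos hp0 hp1 n
    have h2 := fpp_pos hp0 hp1 (n + 1)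
    rw [if_neg (by omega), if_neg (by omega), show ((n:ℤ) + 1 - 1).toNat = n by omega,
      show ((n:ℤ) + 1).toNat = n + 1 by omega]
    have e : fp p p (n + 1) = fp p p n * (1 - p ^ ((n:ℤ) + 1)) := by
      rw [fp, Finset.prod_range_succ, ← pow_succ']; norm_cast
    have h3 : 1 - p ^ ((n:ℤ) + 1) ≠ 0 := by
      intro h; rw [h, mul_zero] at e; linarith
    rw [e]; field_simp

lemma ip_nonneg (hp0 : 0 < p) (hp1 : p < 1) (m : ℤ) : 0 ≤ ip p m := by
  unfold ip; split_ifs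
  · rfl
  · exact (inv_pos.2 (fpp_pos hp0 hp1 _)).le

lemma ip_le (hp0 : 0 < p) (hp1 : p < 1) (m : ℤ) : ip p m ≤ (poch p p)⁻¹ := by
  have := E_pos hp0 hp1
  unfold ip; split_ifs
  · positivity
  · exact inv_anti₀ this (E_le hp0 hp1 _)

/-- coefficients of the finite triple product -/
noncomputable def cn (p : ℝ) (n : ℕ) (k : ℤ) : ℝ := fp p p (2 * n) * ip p (n - k) * ip p (n + k)

lemma cn_rec (hp0 : 0 < p) (hp1 : p < 1) (n : ℕ) (k : ℤ) : cn p (n + 1) k = (1 + p ^ (2 * n + 1)) * cn p n k +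
    p ^ ((n:ℤ) + 1 - k) * cn p n (k - 1) + p ^ ((n:ℤ) + 1 + k) * cn p n (k + 1) := by
  unfold cn
  have hp := hp0.ne'
  have a1 := ip_step hp0 hp1 (n + 1 - k)
  have a2 := ip_step hp0 hp1 (n + 1 - k - 1)
  have a3 := ip_step hp0 hp1 (n + 1 + k)
  have a4 := ip_step hp0 hp1 (n + 1 + k - 1)
  rw [a1, zpow_sub_one₀ hp] at a2
  rw [a3, zpow_sub_one₀ hp] at a4
  have b1 : p ^ (2 * n + 1) = p ^ ((n:ℤ) + 1 - k) * p ^ ((n:ℤ) + 1 + k) * p⁻¹ := by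
    rw [← zpow_add₀ hp, ← zpow_sub_one₀ hp, ← zpow_natCast]; congr 1; push_cast; ring
  have b2 : fp p p (2 * (n + 1)) = fp p p (2 * n) * (1 - p ^ (2 * n + 1)) *
      (1 - p ^ (2 * n + 1) * p) := by
    rw [show 2 * (n + 1) = 2 * n + 1 + 1 by ring, fp, Finset.prod_range_succ, Finset.prod_range_succ]
    simp only [fp]; ring
  rw [b2, b1]
  push_cast
  rw [show (n:ℤ) - k = n + 1 - k - 1 by ring, show (n:ℤ) + k = n + 1 + k - 1 by ring,
    show (n:ℤ) - (k - 1) = n + 1 - k by ring, show (n:ℤ) + (k - 1) = n + 1 + k - 1 - 1 by ring,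
    show (n:ℤ) - (k + 1) = n + 1 - k - 1 - 1 by ring, show (n:ℤ) + (k + 1) = n + 1 + k by ring,
    a1, a2, a3, a4]
  generalize p ^ ((n:ℤ) + 1 - k) = α
  generalize p ^ ((n:ℤ) + 1 + k) = β
  generalize ip p (n + 1 - k) = A
  generalize ip p (n + 1 + k) = B
  field_simp
  ring

lemma cn_bound (hp0 : 0 < p) (hp1 : p < 1) (n : ℕ) (k : ℤ) : |cn p n k| ≤ (poch p p)⁻¹ * (poch p p)⁻¹ := by
  unfold cn
  have h1 : fp p p (2 * n) ≤ 1 := by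
    have := fpp_anti hp0 hp1 (Nat.zero_le (2 * n)); simpa [fp] using this
  have h0 := fpp_pos hp0 hp1 (2 * n)
  have h2 := ip_le hp0 hp1 (n - k)
  have h3 := ip_le hp0 hp1 (n + k)
  have h4 := ip_nonneg hp0 hp1 (n - k)
  have h5 := ip_nonneg hp0 hp1 (n + k)
  have h6 := E_pos hp0 hp1
  rw [abs_of_nonneg (by positivity)]
  calc fp p p (2 * n) * ip p (n - k) * ip p (n + k) ≤ 1 * (poch p p)⁻¹ * (poch p p)⁻¹ := by gcongr
    _ = _ := by ring

lemma ip_tendsto (hp0 : 0 < p) (hp1 : p < 1) (f : ℕ → ℤ) (hf : Tendsto f atTop atTop) :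
    Tendsto (fun n => ip p (f n)) atTop (𝓝 (poch p p)⁻¹) := by
  have h1 : Tendsto (fun n => (f n).toNat) atTop atTop := by
    refine tendsto_atTop.2 fun N => ?_
    filter_upwards [hf.eventually_ge_atTop (N:ℤ)] with r hr
    omega
  have h2 := ((fp_tendsto hp0 hp1 p).comp h1).inv₀ (E_pos hp0 hp1).ne'
  refine h2.congr' ?_
  filter_upwards [hf.eventually_ge_atTop 0] with n hn
  simp [ip, not_lt.2 hn]

lemma cn_tendsto (hp0 : 0 < p) (hp1 : p < 1) (k : ℤ) : Tendsto (fun n => cn p n k) atTop (𝓝 (poch p p)⁻¹) := by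
  have h1 : Tendsto (fun n => fp p p (2 * n)) atTop (𝓝 (poch p p)) :=
    (fp_tendsto hp0 hp1 p).comp (tendsto_id.const_mul_atTop' (by norm_num))
  have h2 := ip_tendsto hp0 hp1 (fun n : ℕ => (n:ℤ) - k)
    (tendsto_atTop_add_const_right _ (-k) tendsto_natCast_atTop_atTop)
  have h3 := ip_tendsto hp0 hp1 (fun n : ℕ => (n:ℤ) + k)
    (tendsto_atTop_add_const_right _ k tendsto_natCast_atTop_atTop)
  have := (h1.mul h2).mul h3
  rwa [mul_inv_cancel₀ (E_pos hp0 hp1).ne', one_mul] at this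
end

section
variable {b : ℝ}

noncomputable def fT (b y : ℝ) (n : ℕ) (k : ℤ) : ℝ := b ^ (k ^ 2 - k) * y ^ k * cn (b ^ 2) n k

lemma fT_rec (hb0 : 0 < b) (hb1 : b < 1) {y : ℝ} (hy : y ≠ 0) (n : ℕ) (k : ℤ) :
    fT b y (n + 1) k = (1 + (b ^ 2) ^ (2 * n + 1)) * fT b y n k + (y * (b ^ 2) ^ n) * fT b y n (k - 1)
      + ((b ^ 2) ^ (n + 1) / y) * fT b y n (k + 1) := by
  have hp0 : 0 < b ^ 2 := by positivity
  have hp1 : b ^ 2 < 1 := pow_lt_one₀ hb0.le hb1 two_ne_zero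
  unfold fT
  rw [cn_rec hp0 hp1]
  have e1 : b ^ (k ^ 2 - k) * (b ^ 2) ^ ((n:ℤ) + 1 - k) = b ^ ((k - 1) ^ 2 - (k - 1)) * (b ^ 2) ^ n := by
    rw [← zpow_natCast (b ^ 2) n, ← zpow_natCast b 2, ← zpow_mul, ← zpow_mul,
      ← zpow_add₀ hb0.ne', ← zpow_add₀ hb0.ne']
    congr 1; push_cast; ring
  have e2 : b ^ (k ^ 2 - k) * (b ^ 2) ^ ((n:ℤ) + 1 + k) = b ^ ((k + 1) ^ 2 - (k + 1)) * (b ^ 2) ^ (n + 1) := by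
    rw [← zpow_natCast (b ^ 2) (n + 1), ← zpow_natCast b 2, ← zpow_mul, ← zpow_mul,
      ← zpow_add₀ hb0.ne', ← zpow_add₀ hb0.ne']
    congr 1; push_cast; ring
  have e3 : y ^ k = y * y ^ (k - 1) := by rw [zpow_sub_one₀ hy]; field_simp
  have e4 : y ^ (k + 1) = y * y ^ k := by rw [zpow_add_one₀ hy]; ring
  rw [mul_add, mul_add]
  congr 1
  · congr 1
    · ring
    · linear_combination y ^ k * cn (b ^ 2) n (k - 1) * e1 + 
        b ^ ((k - 1) ^ 2 - (k - 1)) * (b ^ 2) ^ n * cn (b ^ 2) n (k - 1) * e3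
  · rw [e4]; field_simp
    linear_combination cn (b ^ 2) n (k + 1) * e2

noncomputable def PP (b y : ℝ) (n : ℕ) : ℝ := 
  ∏ i ∈ Finset.range n, (1 + y * (b ^ 2) ^ i) * (1 + (b ^ 2) ^ (i + 1) / y)

lemma hs_congr {ι : Type*} {f g : ι → ℝ} {a c : ℝ} (h : HasSum f a) (hf : ∀ k, g k = f k) (ha : c = a) :
    HasSum g c := by
  rw [ha, show g = f from funext hf]; exact h

lemma sh_sub {f : ℤ → ℝ} {a : ℝ} (h : HasSum f a) : HasSum (fun k => f (k - 1)) a :=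
  ((Equiv.subRight (1:ℤ)).hasSum_iff (f := f)).2 h
lemma sh_add {f : ℤ → ℝ} {a : ℝ} (h : HasSum f a) : HasSum (fun k => f (k + 1)) a :=
  ((Equiv.addRight (1:ℤ)).hasSum_iff (f := f)).2 h

lemma cn_zero (p : ℝ) (k : ℤ) : cn p 0 k = if k = 0 then 1 else 0 := by
  unfold cn ip
  rcases lt_trichotomy k 0 with h | h | h
  · simp [h, h.ne]
  · subst h; simp [fp]
  · simp [h, h.ne']

lemma fT_sum (hb0 : 0 < b) (hb1 : b < 1) {y : ℝ} (hy : y ≠ 0) (n : ℕ) : HasSum (fT b y n) (PP b y n) := by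
  induction n with
  | zero =>
    have : fT b y 0 = fun k : ℤ => if k = 0 then (1:ℝ) else 0 := by
      funext k; simp only [fT, cn_zero]; split_ifs with h
      · subst h; simp
      · simp
    rw [this]; simpa [PP] using hasSum_ite_eq (0:ℤ) (1:ℝ)
  | succ n ih =>
    have h1 : HasSum (fun k => fT b y n (k - 1)) (PP b y n) :=
      sh_sub ih
    have h2 : HasSum (fun k => fT b y n (k + 1)) (PP b y n) :=
      sh_add ih
    have := ((ih.mul_left (1 + (b ^ 2) ^ (2 * n + 1))).add (h1.mul_left (y * (b ^ 2) ^ n))).add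
      (h2.mul_left ((b ^ 2) ^ (n + 1) / y))
    refine hs_congr this (fT_rec hb0 hb1 hy n) ?_
    rw [PP, Finset.prod_range_succ]
    change PP b y n * _ = _
    field_simp
    ring

lemma fT_sumD (hb0 : 0 < b) (hb1 : b < 1) (n : ℕ) : HasSum (fun k : ℤ => fT b (-1) (n + 1) k * k)
    (- fp (b ^ 2) (b ^ 2) n * fp (b ^ 2) (b ^ 2) (n + 1)) := by
  have hy : (-1 : ℝ) ≠ 0 := by norm_num
  have key : ∀ n D, HasSum (fun k : ℤ => fT b (-1) n k * k) D → 
      HasSum (fun k : ℤ => fT b (-1) (n + 1) k * k)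
        ((1 - (b ^ 2) ^ n) * (1 - (b ^ 2) ^ (n + 1)) * D + 
          (- (b ^ 2) ^ n + (b ^ 2) ^ (n + 1)) * PP b (-1) n) := by
    intro n D ih
    have S := fT_sum hb0 hb1 hy n
    have h1 : HasSum (fun k : ℤ => fT b (-1) n (k - 1) * ((k - 1 : ℤ) : ℝ)) D :=
      sh_sub ih
    have h2 : HasSum (fun k : ℤ => fT b (-1) n (k + 1) * ((k + 1 : ℤ) : ℝ)) D :=
      sh_add ih
    have h3 : HasSum (fun k => fT b (-1) n (k - 1)) (PP b (-1) n) :=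
      sh_sub S
    have h4 : HasSum (fun k => fT b (-1) n (k + 1)) (PP b (-1) n) :=
      sh_add S
    have := ((ih.mul_left (1 + (b ^ 2) ^ (2 * n + 1))).add 
      ((h1.add h3).mul_left (-1 * (b ^ 2) ^ n))).add
      ((h2.sub h4).mul_left ((b ^ 2) ^ (n + 1) / (-1)))
    refine hs_congr this (fun k => ?_) ?_
    · rw [fT_rec hb0 hb1 hy]; push_cast; ring
    · ring
  induction n with
  | zero =>
    have h0 : HasSum (fun k : ℤ => fT b (-1) 0 k * k) 0 := by
      have : (fun k : ℤ => fT b (-1) 0 k * k) = fun _ => 0 := by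
        funext k; simp only [fT, cn_zero]; split_ifs with h
        · subst h; simp
        · simp
      rw [this]; exact hasSum_zero
    have := key 0 0 h0
    refine hs_congr this (fun k => rfl) ?_
    simp [fp, PP]; ring
  | succ n ih =>
    have := key (n + 1) _ ih
    refine hs_congr this (fun k => rfl) ?_
    have h1 : PP b (-1) (n + 1) = 0 := by
      unfold PP; rw [Finset.prod_range_succ']; simp
    have e : ∀ m, fp (b ^ 2) (b ^ 2) (m + 1) = fp (b ^ 2) (b ^ 2) m * (1 - (b ^ 2) ^ (m + 1)) := by
      intro m; rw [fp, Finset.prod_range_succ, ← pow_succ']; rfl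
    rw [h1, e (n + 1), e n]; ring

/-- Jacobi triple product -/
theorem jtp (hb0 : 0 < b) (hb1 : b < 1) {x : ℝ} (hx : x ≠ 0) :
    th b x = poch x (b ^ 2) * poch (b ^ 2 / x) (b ^ 2) * poch (b ^ 2) (b ^ 2) := by
  have hp0 : 0 < b ^ 2 := by positivity
  have hp1 : b ^ 2 < 1 := pow_lt_one₀ hb0.le hb1 two_ne_zero
  have hE := (E_pos hp0 hp1).ne'
  have hy : -x ≠ 0 := neg_ne_zero.2 hx
  have h1 : Tendsto (fun n => ∑' k, fT b (-x) n k) atTop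
      (𝓝 (∑' k : ℤ, b ^ (k ^ 2 - k) * (-x) ^ k * (poch (b ^ 2) (b ^ 2))⁻¹)) := by
    refine tendsto_tsum_of_dominated_convergence
      ((jf_summ hb0 hb1 hy).norm.mul_right ((poch (b ^ 2) (b ^ 2))⁻¹ * (poch (b ^ 2) (b ^ 2))⁻¹))
      (fun k => (cn_tendsto hp0 hp1 k).const_mul _) (Eventually.of_forall fun n k => ?_)
    rw [fT, norm_mul]
    gcongr
    exact cn_bound hp0 hp1 n k
  simp_rw [(fT_sum hb0 hb1 hy _).tsum_eq] at h1
  rw [tsum_mul_right] at h1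
  have h2 := (fp_tendsto hp0 hp1 x).mul (fp_tendsto hp0 hp1 (b ^ 2 / x))
  have h3 := tendsto_nhds_unique h1 (h2.congr fun n => by
    simp only [fp, PP, ← Finset.prod_mul_distrib]
    refine Finset.prod_congr rfl fun i _ => ?_
    rw [pow_succ]; field_simp; ring)
  rw [th, jf, ← h3]; field_simp

theorem kap_eq (hb0 : 0 < b) (hb1 : b < 1) : kap b = poch (b ^ 2) (b ^ 2) ^ 3 := by
  have hp0 : 0 < b ^ 2 := by positivity
  have hp1 : b ^ 2 < 1 := pow_lt_one₀ hb0.le hb1 two_ne_zero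
  have hE := (E_pos hp0 hp1).ne'
  have hy : (-1:ℝ) ≠ 0 := by norm_num
  have h1 : Tendsto (fun n => ∑' k : ℤ, fT b (-1) (n + 1) k * k) atTop
      (𝓝 (∑' k : ℤ, b ^ (k ^ 2 - k) * (-1) ^ k * (poch (b ^ 2) (b ^ 2))⁻¹ * k)) := by
    refine tendsto_tsum_of_dominated_convergence
      ((Dj_summ hb0 hb1 hy).norm.mul_right ((poch (b ^ 2) (b ^ 2))⁻¹ * (poch (b ^ 2) (b ^ 2))⁻¹))
      (fun k => (((cn_tendsto hp0 hp1 k).comp (tendsto_add_atTop_nat 1)).const_mul _).mul_const _)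
      (Eventually.of_forall fun n k => ?_)
    rw [fT, norm_mul, norm_mul, mul_right_comm, ← norm_mul (_ * _) (k : ℝ)]
    gcongr
    exact cn_bound hp0 hp1 (n + 1) k
  simp_rw [(fT_sumD hb0 hb1 _).tsum_eq] at h1
  have h2 := (fp_tendsto hp0 hp1 (b ^ 2)).neg.mul ((fp_tendsto hp0 hp1 (b ^ 2)).comp (tendsto_add_atTop_nat 1))
  have h3 := tendsto_nhds_unique h1 h2
  have h4 : (∑' k : ℤ, b ^ (k ^ 2 - k) * (-1) ^ k * (poch (b ^ 2) (b ^ 2))⁻¹ * k) = 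
      Dj b (-1) * (poch (b ^ 2) (b ^ 2))⁻¹ := by
    rw [Dj, ← tsum_mul_right]; exact tsum_congr fun k => by ring
  rw [h4] at h3
  rw [kap]; field_simp at h3; linear_combination -h3

lemma kap_ne (hb0 : 0 < b) (hb1 : b < 1) : kap b ≠ 0 := by
  rw [kap_eq hb0 hb1]
  exact pow_ne_zero _ (E_pos (by positivity) (pow_lt_one₀ hb0.le hb1 two_ne_zero)).ne'
end
end M2

namespace M2

lemma jtp' {b x z p : ℝ} (hb0 : 0 < b) (hb1 : b < 1) (hx : x ≠ 0) (hp : b ^ 2 = p) (hz : z * x = p) :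
    th b x = poch x p * poch z p * poch p p := by
  rw [jtp hb0 hb1 hx, hp, ← hz]; field_simp

structure Prods (t q : ℝ) : Prop where
  t0 : 0 < t
  t1 : t < 1
  q0 : 0 < q
  q1 : q < 1
  tq : t ^ 2 = q
  psi3 : jf (q ^ 6) (q ^ 3) ≠ 0
  U0 : th (t ^ 3) (-q) ≠ 0
  W0 : th (t ^ 3) q ≠ 0
  B1 : th (q ^ 3) q ≠ 0
  B2 : th (q ^ 3) (q ^ 2) ≠ 0
  B3 : th (q ^ 3) (q ^ 3) ≠ 0
  Bm1 : th (q ^ 3) (-q) ≠ 0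
  Bm2 : th (q ^ 3) (-q ^ 2) ≠ 0
  Bm3 : th (q ^ 3) (-q ^ 3) ≠ 0
  D2 : th (q ^ 6) (q ^ 2) ≠ 0
  D4 : th (q ^ 6) (q ^ 4) ≠ 0
  pW : jf (q ^ 6) (q ^ 3) * th (t ^ 3) q = th (q ^ 3) q * th (q ^ 3) (q ^ 2)
  pU : jf (q ^ 6) (q ^ 3) * th (t ^ 3) (-q) = th (q ^ 3) (-q) * th (q ^ 3) (-q ^ 2)
  p2 : kap (q ^ 6) * th (q ^ 6) (q ^ 6) * th (t ^ 3) q =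
    th (t ^ 3) (-q) * th (q ^ 3) q ^ 2 * th (q ^ 6) (q ^ 2) * th (q ^ 6) (q ^ 4)
  p4 : th (t ^ 3) (-q) * th q q = th (t ^ 3) q * th (q ^ 3) (q ^ 3)
  p5 : jf (q ^ 6) (q ^ 3) * th (q ^ 3) (q ^ 3) ^ 2 = kap (t ^ 3)
  p6 : kap (t ^ 3) * jf (q ^ 6) q * jf (q ^ 6) (q ^ 5) * th (q ^ 6) (q ^ 4) =
    kap (q ^ 6) * th (t ^ 3) q * th (t ^ 3) (-q) ^ 2
  p7 : th (q ^ 3) (q ^ 3) * th (q ^ 3) (-1) * th (q ^ 3) (-q ^ 3) = 2 * kap (q ^ 3)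
  p8 : jf (q ^ 6) (q ^ 3) ^ 2 * th (q ^ 3) (q ^ 3) = kap (q ^ 3)
  p9 : kap (q ^ 6) * th (q ^ 3) (-q ^ 2) * th (q ^ 3) (q ^ 2) * th (q ^ 3) (-q ^ 3) =
    kap (q ^ 3) * th (q ^ 6) (q ^ 4) * jf (q ^ 6) (q ^ 3) ^ 2

set_option maxHeartbeats 1000000 in
theorem prods {t q : ℝ} (t0 : 0 < t) (t1 : t < 1) (tq : t ^ 2 = q) : Prods t q := by
  have q0 : 0 < q := by rw [← tq]; positivity
  have q1 : q < 1 := by rw [← tq]; exact pow_lt_one₀ t0.le t1 two_ne_zero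
  have qp : ∀ k, k ≠ 0 → q ^ k < 1 := fun k hk => pow_lt_one₀ q0.le q1 hk
  have t30 : 0 < t ^ 3 := by positivity
  have t31 : t ^ 3 < 1 := pow_lt_one₀ t0.le t1 (by norm_num)
  have t6 : (t ^ 3) ^ 2 = q ^ 3 := by rw [← tq]; ring
  have ql : ∀ m k : ℕ, k ≠ 0 → ∀ i : ℕ, q ^ k * (q ^ m) ^ i ≠ 1 := fun m k hk i => by
    rw [← pow_mul, ← pow_add]; exact (qp _ (by omega)).ne
  have h30 : 0 < q ^ 3 := by positivity
  have h31 := qp 3 (by norm_num)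
  have h60 : 0 < q ^ 6 := by positivity
  have h61 := qp 6 (by norm_num)
  have hC0 : 0 < q ^ 12 := by positivity
  have hC1 := qp 12 (by norm_num)
  -- relations
  have rel : ∀ k : ℕ, poch (q ^ k) (q ^ 6) * poch (-q ^ k) (q ^ 6) = poch (q ^ (2 * k)) (q ^ 12) := by
    intro k
    rw [poch_mul_neg h60 h61]; congr 1 <;> ring
  have spl : ∀ k : ℕ, poch (q ^ k) (q ^ 6) = poch (q ^ k) (q ^ 12) * poch (q ^ (k + 6)) (q ^ 12) := by
    intro k
    rw [poch_split h60 h61 _ 2 (by norm_num), Finset.prod_range_succ, Finset.prod_range_one]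
    congr 2 <;> ring
  have spln : ∀ k : ℕ, poch (-q ^ k) (q ^ 6) = poch (-q ^ k) (q ^ 12) * poch (-q ^ (k + 6)) (q ^ 12) := by
    intro k
    rw [poch_split h60 h61 _ 2 (by norm_num), Finset.prod_range_succ, Finset.prod_range_one]
    congr 2 <;> ring
  have s3 : ∀ x : ℝ, poch x (q ^ 3) = poch x (q ^ 6) * poch (x * q ^ 3) (q ^ 6) := by
    intro x
    rw [poch_split h30 h31 _ 2 (by norm_num), Finset.prod_range_succ, Finset.prod_range_one]
    congr 2 <;> ring
  have q20 : 0 < q ^ 2 := by positivity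
  have s2 : ∀ k : ℕ, poch (q ^ k) (q ^ 2) = poch (q ^ k) (q ^ 6) * poch (q ^ (k + 2)) (q ^ 6)
      * poch (q ^ (k + 4)) (q ^ 6) := by
    intro x
    rw [poch_split q20 (qp 2 (by norm_num)) _ 3 (by norm_num), Finset.prod_range_succ,
      Finset.prod_range_succ, Finset.prod_range_one]
    have e1 : (q ^ 2) ^ 3 = q ^ 6 := by ring
    have e2 : q ^ x * (q ^ 2) ^ 0 = q ^ x := by ring
    have e3 : q ^ x * (q ^ 2) ^ 1 = q ^ (x + 2) := by ring
    have e4 : q ^ x * (q ^ 2) ^ 2 = q ^ (x + 4) := by ring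
    rw [e1, e2, e3, e4]
  have a1 : poch (q ^ 1) (q ^ 6) ≠ 0 := poch_ne h60 h61 _ (ql 6 1 (by norm_num))
  have a3 : poch (q ^ 3) (q ^ 6) ≠ 0 := poch_ne h60 h61 _ (ql 6 3 (by norm_num))
  have a5 : poch (q ^ 5) (q ^ 6) ≠ 0 := poch_ne h60 h61 _ (ql 6 5 (by norm_num))
  have d2 : poch (q ^ 2) (q ^ 12) ≠ 0 := poch_ne hC0 hC1 _ (ql 12 2 (by norm_num))
  have d4 : poch (q ^ 4) (q ^ 12) ≠ 0 := poch_ne hC0 hC1 _ (ql 12 4 (by norm_num))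
  have d6 : poch (q ^ 6) (q ^ 12) ≠ 0 := poch_ne hC0 hC1 _ (ql 12 6 (by norm_num))
  have d8 : poch (q ^ 8) (q ^ 12) ≠ 0 := poch_ne hC0 hC1 _ (ql 12 8 (by norm_num))
  have d10 : poch (q ^ 10) (q ^ 12) ≠ 0 := poch_ne hC0 hC1 _ (ql 12 10 (by norm_num))
  have d12 : poch (q ^ 12) (q ^ 12) ≠ 0 := poch_ne hC0 hC1 _ (ql 12 12 (by norm_num))
  have A2 := spl 2
  have A4 := spl 4
  have A6 := spl 6
  have n1 := rel 1
  have n2 := rel 2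
  have n3 := rel 3
  have n4 := rel 4
  have n5 := rel 5
  have n6 := rel 6
  norm_num only [Nat.reduceMul, Nat.reduceAdd] at A2 A4 A6 n1 n2 n3 n4 n5 n6
  rw [A2, mul_comm, ← eq_div_iff (mul_ne_zero d2 d8)] at n2
  rw [A4, mul_comm, ← eq_div_iff (mul_ne_zero d4 d10)] at n4
  rw [A6, mul_comm, ← eq_div_iff (mul_ne_zero d6 d12)] at n6
  rw [mul_comm, ← eq_div_iff a1] at n1
  rw [mul_comm, ← eq_div_iff a3] at n3
  rw [mul_comm, ← eq_div_iff a5] at n5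
  have n0 : poch (-1) (q ^ 6) = 2 * poch (-q ^ 6) (q ^ 6) := by
    rw [poch_step h60 h61]; norm_num
  have qn := q0.ne'
  -- theta expansions
  have eB1 : th (q ^ 3) q = poch (q ^ 1) (q ^ 6) * poch (q ^ 5) (q ^ 6) * poch (q ^ 6) (q ^ 6) := by
    rw [pow_one]; exact jtp' h30 h31 qn (by ring) (by ring)
  have eB2 : th (q ^ 3) (q ^ 2) = poch (q ^ 2) (q ^ 6) * poch (q ^ 4) (q ^ 6) * poch (q ^ 6) (q ^ 6) :=
    jtp' h30 h31 (by positivity) (by ring) (by ring)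
  have eB3 : th (q ^ 3) (q ^ 3) = poch (q ^ 3) (q ^ 6) * poch (q ^ 3) (q ^ 6) * poch (q ^ 6) (q ^ 6) :=
    jtp' h30 h31 (by positivity) (by ring) (by ring)
  have eC1 : th (q ^ 3) (-q) = poch (-q ^ 1) (q ^ 6) * poch (-q ^ 5) (q ^ 6) * poch (q ^ 6) (q ^ 6) := by
    rw [pow_one]; exact jtp' h30 h31 (by simpa using qn) (by ring) (by ring)
  have eC2 : th (q ^ 3) (-q ^ 2) = poch (-q ^ 2) (q ^ 6) * poch (-q ^ 4) (q ^ 6) * poch (q ^ 6) (q ^ 6) :=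
    jtp' h30 h31 (by simpa using qn) (by ring) (by ring)
  have eC3 : th (q ^ 3) (-q ^ 3) = poch (-q ^ 3) (q ^ 6) * poch (-q ^ 3) (q ^ 6) * poch (q ^ 6) (q ^ 6) :=
    jtp' h30 h31 (by simpa using qn) (by ring) (by ring)
  have eC0 : th (q ^ 3) (-1) = poch (-1) (q ^ 6) * poch (-q ^ 6) (q ^ 6) * poch (q ^ 6) (q ^ 6) :=
    jtp' h30 h31 (by norm_num) (by ring) (by ring)
  have eD2 : th (q ^ 6) (q ^ 2) = poch (q ^ 2) (q ^ 12) * poch (q ^ 10) (q ^ 12) * poch (q ^ 12) (q ^ 12) :=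
    jtp' h60 h61 (by positivity) (by ring) (by ring)
  have eD4 : th (q ^ 6) (q ^ 4) = poch (q ^ 4) (q ^ 12) * poch (q ^ 8) (q ^ 12) * poch (q ^ 12) (q ^ 12) :=
    jtp' h60 h61 (by positivity) (by ring) (by ring)
  have eD6 : th (q ^ 6) (q ^ 6) = poch (q ^ 6) (q ^ 12) * poch (q ^ 6) (q ^ 12) * poch (q ^ 12) (q ^ 12) :=
    jtp' h60 h61 (by positivity) (by ring) (by ring)
  have eW : th (t ^ 3) q = poch (q ^ 1) (q ^ 6) * poch (q ^ 4) (q ^ 6) * 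
      (poch (q ^ 2) (q ^ 6) * poch (q ^ 5) (q ^ 6)) * (poch (q ^ 3) (q ^ 6) * poch (q ^ 6) (q ^ 6)) := by
    rw [jtp' (z := q ^ 2) t30 t31 qn t6 (by ring), s3, s3, s3]
    ring_nf
  have eU : th (t ^ 3) (-q) = poch (-q ^ 1) (q ^ 6) * poch (-q ^ 4) (q ^ 6) * 
      (poch (-q ^ 2) (q ^ 6) * poch (-q ^ 5) (q ^ 6)) * (poch (q ^ 3) (q ^ 6) * poch (q ^ 6) (q ^ 6)) := by
    rw [jtp' (z := -q ^ 2) t30 t31 (by simpa using qn) t6 (by ring), s3, s3, s3]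
    ring_nf
  have eP : jf (q ^ 6) (q ^ 3) = poch (-q ^ 3) (q ^ 6) * poch (q ^ 12) (q ^ 12) := by
    have := jtp' (x := -q ^ 3) (z := - q ^ 9) h60 h61 (by simpa using qn) (p := q ^ 12) (by ring) (by ring)
    rw [th, neg_neg] at this
    rw [this, spln 3]
  have e15 : jf (q ^ 6) q * jf (q ^ 6) (q ^ 5) = 
      poch (-q ^ 1) (q ^ 6) * poch (-q ^ 5) (q ^ 6) * poch (q ^ 12) (q ^ 12) ^ 2 := by
    have h1 := jtp' (x := -q) (z := - q ^ 11) h60 h61 (by simpa using qn) (p := q ^ 12) (by ring) (by ring)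
    have h5 := jtp' (x := -q ^ 5) (z := - q ^ 7) h60 h61 (by simpa using qn) (p := q ^ 12) (by ring) (by ring)
    rw [th, neg_neg] at h1 h5
    rw [h1, h5, spln 1, spln 5]; simp only [pow_one, Nat.reduceAdd]; ring
  have ephi : th q q = (poch (q ^ 1) (q ^ 6) * poch (q ^ 3) (q ^ 6) * poch (q ^ 5) (q ^ 6)) ^ 2 *
      (poch (q ^ 2) (q ^ 6) * poch (q ^ 4) (q ^ 6) * poch (q ^ 6) (q ^ 6)) := by
    rw [jtp' (z := q) q0 q1 qn (p := q ^ 2) (by ring) (by ring), s2 2]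
    have := s2 1
    simp only [pow_one, Nat.reduceAdd] at this ⊢
    rw [this]; ring
  have k3 : kap (t ^ 3) = (poch (q ^ 3) (q ^ 6) * poch (q ^ 6) (q ^ 6)) ^ 3 := by
    rw [kap_eq t30 t31, t6, s3]; ring_nf
  have k6 : kap (q ^ 3) = poch (q ^ 6) (q ^ 6) ^ 3 := by
    rw [kap_eq h30 h31]; ring_nf
  have k12 : kap (q ^ 6) = poch (q ^ 12) (q ^ 12) ^ 3 := by
    rw [kap_eq h60 h61]; ring_nf
  rw [n6] at n0
  simp only [n1, n2, n3, n4, n5, n6, A2, A4, A6, n0] at *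
  refine ⟨t0, t1, q0, q1, tq, ?_, ?_, ?_, ?_, ?_, ?_, ?_, ?_, ?_, ?_, ?_, ?_, ?_, ?_, ?_, ?_, ?_, ?_, ?_, ?_⟩
  · rw [eP]; positivity
  · rw [eU]; positivity
  · rw [eW]; positivity
  · rw [eB1]; positivity
  · rw [eB2]; positivity
  · rw [eB3]; positivity
  · rw [eC1]; positivity
  · rw [eC2]; positivity
  · rw [eC3]; positivity
  · rw [eD2]; positivity
  · rw [eD4]; positivity
  · rw [eP, eW, eB1, eB2]; field_simp
  · rw [eP, eU, eC1, eC2]; field_simp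
  · rw [k12, eD6, eW, eU, eB1, eD2, eD4]; field_simp
  · rw [eU, eW, ephi, eB3]; field_simp
  · rw [eP, eB3, k3]; field_simp
  · rw [mul_assoc (kap (t ^ 3)), e15, k3, eD4, k12, eW, eU]; field_simp
  · rw [eB3, eC0, eC3, k6]; field_simp
  · rw [eP, eB3, k6]; field_simp
  · rw [eP, eC2, eB2, eC3, k6, k12, eD4]; field_simp
end M2

namespace M2

lemma tsum_mod (n : ℕ) [NeZero n] {f : ℤ → ℝ} (hf : Summable f) :
    ∑' r, f r = ∑ j : Fin n, ∑' m : ℤ, f (m * n + (j : ℕ)) := by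
  rw [← (Int.divModEquiv n).symm.tsum_eq]
  have h : Summable fun z : ℤ × Fin n => f ((Int.divModEquiv n).symm z) :=
    ((Int.divModEquiv n).symm.summable_iff).2 hf
  have h' : Summable fun z : Fin n × ℤ => f ((Int.divModEquiv n).symm z.swap) :=
    ((Equiv.prodComm (Fin n) ℤ).summable_iff).2 h
  rw [← (Equiv.prodComm (Fin n) ℤ).tsum_eq]
  rw [show (∑' c : Fin n × ℤ, f ((Int.divModEquiv n).symm ((Equiv.prodComm (Fin n) ℤ) c))) =
    ∑' c : Fin n × ℤ, f ((Int.divModEquiv n).symm c.swap) from rfl]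
  rw [h'.tsum_prod, tsum_fintype]
  rfl

variable {b : ℝ}

lemma jf_par (hb0 : 0 < b) (hb1 : b < 1) {y : ℝ} (hy : y ≠ 0) :
    jf b y = jf (b ^ 4) (b ^ 2 * y ^ 2) + y * jf (b ^ 4) (b ^ 6 * y ^ 2) := by
  unfold jf
  rw [tsum_mod 2 (jf_summ hb0 hb1 hy), Fin.sum_univ_two, ← tsum_mul_left]
  congr 1
  · refine tsum_congr fun m => ?_
    simp only [Fin.val_zero, Nat.cast_zero, Nat.cast_ofNat, add_zero]
    rw [mul_zpow, ← zpow_natCast y, ← zpow_natCast b 2, ← zpow_natCast b 4, ← zpow_mul, ← zpow_mul,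
      ← zpow_mul, ← mul_assoc, ← zpow_add₀ hb0.ne']
    push_cast
    congr 2 <;> ring
  · refine tsum_congr fun m => ?_
    simp only [Fin.val_one, Nat.cast_one, Nat.cast_ofNat]
    rw [zpow_add_one₀ hy, mul_zpow, ← zpow_natCast y, ← zpow_natCast b 6, ← zpow_natCast b 4, ← zpow_mul, ← zpow_mul,
      ← zpow_mul, ← mul_assoc (b ^ _) (b ^ _), ← zpow_add₀ hb0.ne']
    push_cast
    rw [mul_comm 2 m, show (m * 2 + 1) ^ 2 - (m * 2 + 1) = 4 * (m ^ 2 - m) + 6 * m by ring]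
    ring

lemma Dj_par (hb0 : 0 < b) (hb1 : b < 1) {y : ℝ} (hy : y ≠ 0) :
    Dj b y = 2 * Dj (b ^ 4) (b ^ 2 * y ^ 2) + y * (2 * Dj (b ^ 4) (b ^ 6 * y ^ 2) +
      jf (b ^ 4) (b ^ 6 * y ^ 2)) := by
  have h40 : 0 < b ^ 4 := by positivity
  have h41 : b ^ 4 < 1 := pow_lt_one₀ hb0.le hb1 (by norm_num)
  have hy6 : b ^ 6 * y ^ 2 ≠ 0 := by positivity
  have h := ((Dj_summ h40 h41 hy6).mul_left 2).tsum_add (jf_summ h40 h41 hy6)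
  rw [tsum_mul_left] at h
  unfold jf Dj
  rw [tsum_mod 2 (Dj_summ hb0 hb1 hy), Fin.sum_univ_two, ← h, ← tsum_mul_left, ← tsum_mul_left]
  congr 1
  · refine tsum_congr fun m => ?_
    simp only [Fin.val_zero, Nat.cast_zero, Nat.cast_ofNat, add_zero]
    rw [mul_zpow, ← zpow_natCast y, ← zpow_natCast b 2, ← zpow_natCast b 4, ← zpow_mul, ← zpow_mul,
      ← zpow_mul, ← mul_assoc (b ^ _), ← zpow_add₀ hb0.ne']
    push_cast
    rw [mul_comm 2 m, show (m * 2) ^ 2 - m * 2 = 4 * (m ^ 2 - m) + 2 * m by ring]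
    ring
  · refine tsum_congr fun m => ?_
    simp only [Fin.val_one, Nat.cast_one, Nat.cast_ofNat]
    rw [zpow_add_one₀ hy, mul_zpow, ← zpow_natCast y, ← zpow_natCast b 6, ← zpow_natCast b 4, ← zpow_mul, ← zpow_mul,
      ← zpow_mul, ← mul_assoc (b ^ _) (b ^ _), ← zpow_add₀ hb0.ne']
    push_cast
    rw [mul_comm 2 m, show (m * 2 + 1) ^ 2 - (m * 2 + 1) = 4 * (m ^ 2 - m) + 6 * m by ring]
    ring

/-! Base `q ^ 12` shorthands. -/

noncomputable def J (q : ℝ) (k : ℤ) : ℝ := jf (q ^ 6) (q ^ k)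
noncomputable def DJ (q : ℝ) (k : ℤ) : ℝ := Dj (q ^ 6) (q ^ k)
noncomputable def A (q : ℝ) (d k : ℤ) : ℝ := AA (q ^ 6) (q ^ d) (q ^ k)
noncomputable def C (q : ℝ) (d d' : ℤ) : ℝ := cc (q ^ 6) (q ^ d) (q ^ d')

noncomputable def BB (q : ℝ) (c d : ℤ) : ℝ := ∑' n : ℤ, q ^ (6 * n ^ 2 + c * n) / (1 + q ^ (6 * n + d))

variable {q : ℝ} (q0 : 0 < q) (q1 : q < 1)

lemma q6 (q0 : 0 < q) (q1 : q < 1) : 0 < q ^ 6 ∧ q ^ 6 < 1 :=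
  ⟨by positivity, pow_lt_one₀ q0.le q1 (by norm_num)⟩

lemma J_shift (q0 : 0 < q) (k : ℤ) : J q (12 + k) = q ^ (-k) * J q k := by
  unfold J
  have := jf_shift (b := q ^ 6) (by positivity) (y := q ^ k) (by positivity)
  rw [← zpow_neg] at this
  rw [← this, zpow_add₀ q0.ne']; congr 2; norm_cast; ring

lemma J_refl (q0 : 0 < q) (k : ℤ) : J q (12 - k) = J q k := by
  unfold J
  rw [← jf_refl (b := q ^ 6) (by positivity) (y := q ^ k) (by positivity)]
  rw [zpow_sub₀ q0.ne']; congr 2; norm_cast; ring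

lemma DJ_refl (q0 : 0 < q) (q1 : q < 1) (k : ℤ) : DJ q (12 - k) = - DJ q k := by
  unfold DJ
  rw [← Dj_refl (b := q ^ 6) (by positivity) (q6 q0 q1).2 (y := q ^ k) (by positivity)]
  rw [zpow_sub₀ q0.ne']; congr 2; norm_cast; ring

lemma DJ_shift (q0 : 0 < q) (q1 : q < 1) (k : ℤ) : DJ q (12 + k) = q ^ (-k) * (DJ q k - J q k) := by
  unfold DJ J
  have := Dj_shift (b := q ^ 6) (by positivity) (q6 q0 q1).2 (y := q ^ k) (by positivity)
  rw [← zpow_neg] at this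
  rw [← this, zpow_add₀ q0.ne']; congr 2; norm_cast; ring

lemma A_inv (q0 : 0 < q) (d k : ℤ) : A q d k = - q ^ (-d) * A q (-d) (24 - k) := by
  unfold A
  rw [AA_inv (by positivity) (by positivity) (by positivity), zpow_neg, zpow_sub₀ q0.ne']
  congr 3; norm_cast; ring

lemma A_one_step (q0 : 0 < q) (q1 : q < 1) (k : ℤ) : A q 0 k - A q 0 (12 + k) = J q k - 1 := by
  unfold A J
  rw [zpow_zero, ← AA_one_step (b := q ^ 6) (by positivity) (q6 q0 q1).2 (y := q ^ k) (by positivity)]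
  rw [zpow_add₀ q0.ne']; congr 3; norm_cast; ring

lemma NPz (q0 : 0 < q) (q1 : q < 1) (d : ℤ) (hd : ¬ (12 ∣ d)) : NP (q ^ 6) (q ^ d) := by
  have := NP_pow q0 q1 6 d (by simpa using hd)
  exact_mod_cast this

lemma F1z (q0 : 0 < q) (q1 : q < 1) (d d' e : ℤ) (hd : ¬ (12 ∣ d)) (hd' : ¬ (12 ∣ d')) :
    J q (e + d') * A q d (e + d) - J q (e + d) * A q d' (e + d') = C q d d' * J q (e + d + d') := by
  unfold J A C
  simp only [zpow_add₀ q0.ne']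
  exact F1 (q6 q0 q1).1 (q6 q0 q1).2 (NPz q0 q1 d hd) (NPz q0 q1 d' hd') (by positivity)

lemma F1sz (q0 : 0 < q) (q1 : q < 1) (d' e : ℤ) (hd' : ¬ (12 ∣ d')) :
    J q (e + d') * A q 0 e - J q e * A q d' (e + d') = C q 0 d' * J q (e + d') - DJ q (e + d') := by
  unfold J A C DJ
  simp only [zpow_add₀ q0.ne', zpow_zero]
  exact F1s (q6 q0 q1).1 (q6 q0 q1).2 (NPz q0 q1 d' hd') (by positivity)

lemma AAt (q0 : 0 < q) (d k r : ℤ) : (q ^ 6) ^ (r ^ 2 - r) * (q ^ k) ^ r * pl (q ^ 6) (q ^ d) r =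
    q ^ (6 * r ^ 2 + (k - 6) * r) / (1 - q ^ (12 * r + d)) := by
  unfold pl
  rw [← zpow_natCast q 6, ← zpow_mul, ← zpow_mul, ← zpow_mul, ← zpow_add₀ q0.ne', ← zpow_add₀ q0.ne', mul_one_div]
  push_cast
  congr 2
  · ring
  · ring_nf

lemma A_hasSum (q0 : 0 < q) (q1 : q < 1) (d k : ℤ) :
    HasSum (fun r : ℤ => q ^ (6 * r ^ 2 + (k - 6) * r) / (1 - q ^ (12 * r + d))) (A q d k) := by
  have := (AA_summ (b := q ^ 6) (q6 q0 q1).1 (q6 q0 q1).2 (x := q ^ d) (y := q ^ k)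
    (by positivity) (by positivity)).hasSum
  exact hs_congr this (fun r => (AAt q0 d k r).symm) rfl

lemma BBt (q0 : 0 < q) (q1 : q < 1) (c d r : ℤ) (h : 6 * r + d ≠ 0) :
    q ^ (6 * r ^ 2 + c * r) / (1 + q ^ (6 * r + d)) =
      q ^ (6 * r ^ 2 + (6 + c - 6) * r) / (1 - q ^ (12 * r + 2 * d)) -
      q ^ d * (q ^ (6 * r ^ 2 + (12 + c - 6) * r) / (1 - q ^ (12 * r + 2 * d))) := by
  have e1 : q ^ (12 * r + 2 * d) = q ^ (6 * r + d) * q ^ (6 * r + d) := by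
    rw [← zpow_add₀ q0.ne']; congr 1; ring
  have e2 : q ^ d * q ^ (6 * r ^ 2 + (12 + c - 6) * r) = q ^ (6 * r ^ 2 + c * r) * q ^ (6 * r + d) := by
    rw [← zpow_add₀ q0.ne', ← zpow_add₀ q0.ne']; congr 1; ring
  have e3 : (6 + c - 6) = c := by ring
  have hz : q ^ (6 * r + d) ≠ 1 := by
    intro hh
    rw [zpow_eq_one_iff_right₀ q0.le q1.ne] at hh
    exact h hh
  have hz0 : 0 < q ^ (6 * r + d) := by positivity
  rw [← mul_div_assoc, e2, e1, e3]
  generalize q ^ (6 * r + d) = z at *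
  have h1 : 1 - z * z ≠ 0 := by
    have : (1 - z) * (1 + z) ≠ 0 := mul_ne_zero (sub_ne_zero.2 hz.symm) (by positivity)
    intro hh; apply this; linear_combination hh
  have h2 : 1 + z ≠ 0 := by positivity
  rw [← sub_div, div_eq_div_iff h2 h1]
  ring

lemma BB_hasSum (q0 : 0 < q) (q1 : q < 1) (c d : ℤ) (hd : ¬ (6 ∣ d)) :
    HasSum (fun n : ℤ => q ^ (6 * n ^ 2 + c * n) / (1 + q ^ (6 * n + d)))
      (A q (2 * d) (6 + c) - q ^ d * A q (2 * d) (12 + c)) := by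
  refine hs_congr ((A_hasSum q0 q1 (2 * d) (6 + c)).sub ((A_hasSum q0 q1 (2 * d) (12 + c)).mul_left (q ^ d)))
    (fun r => ?_) rfl
  exact BBt q0 q1 c d r (by omega)

lemma BB_eq (q0 : 0 < q) (q1 : q < 1) (c d : ℤ) (hd : ¬ (6 ∣ d)) :
    BB q c d = A q (2 * d) (6 + c) - q ^ d * A q (2 * d) (12 + c) := (BB_hasSum q0 q1 c d hd).tsum_eq

lemma BB0_hasSum (q0 : 0 < q) (q1 : q < 1) (c : ℤ) :
    HasSum (fun n : ℤ => q ^ (6 * n ^ 2 + c * n) / (1 + q ^ (6 * n + 0)))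
      (1 / 2 + (A q 0 (6 + c) - A q 0 (12 + c))) := by
  refine hs_congr ((hasSum_ite_eq (0:ℤ) (1 / 2 : ℝ)).add ((A_hasSum q0 q1 0 (6 + c)).sub (A_hasSum q0 q1 0 (12 + c))))
    (fun r => ?_) rfl
  by_cases hr : r = 0
  · subst hr; norm_num
  · have := BBt q0 q1 c 0 r (by omega)
    rw [mul_zero, zpow_zero, one_mul] at this
    rw [this, if_neg hr, zero_add]

lemma BB0_eq (q0 : 0 < q) (q1 : q < 1) (c : ℤ) :
    BB q c 0 = 1 / 2 + (A q 0 (6 + c) - A q 0 (12 + c)) := (BB0_hasSum q0 q1 c).tsum_eq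

end M2

namespace M2

variable {t q : ℝ}

lemma J_nat (k : ℕ) : J q k = jf (q ^ 6) (q ^ k) := by unfold J; rw [zpow_natCast]

lemma jJ {b y : ℝ} (k : ℕ) (hb : b = q ^ 6) (hy : y = q ^ k) : jf b y = J q k := by
  rw [J_nat, hb, hy]
lemma dJ {b y : ℝ} (k : ℕ) (hb : b = q ^ 6) (hy : y = q ^ k) : Dj b y = DJ q k := by
  rw [DJ, hb, hy, zpow_natCast]

lemma U_eq (P : Prods t q) : th (t ^ 3) (-q) = J q 5 + q * J q 1 := by
  have t0 := P.t0
  have q0 := P.q0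
  have h := jf_par (b := t ^ 3) (by positivity) (pow_lt_one₀ t0.le P.t1 (by norm_num)) q0.ne'
  rw [jJ (q := q) (b := (t ^ 3) ^ 4) (y := (t ^ 3) ^ 2 * q ^ 2) 5 (by rw [← P.tq]; ring) (by rw [← P.tq]; ring), jJ (q := q) (b := (t ^ 3) ^ 4) (y := (t ^ 3) ^ 6 * q ^ 2) 11 (by rw [← P.tq]; ring) (by rw [← P.tq]; ring)] at h
  have r2 := J_refl q0 1
  norm_num only at r2 h
  rw [th, neg_neg, h, r2]

lemma W_eq (P : Prods t q) : th (t ^ 3) q = J q 5 - q * J q 1 := by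
  have t0 := P.t0
  have q0 := P.q0
  have h := jf_par (b := t ^ 3) (by positivity) (pow_lt_one₀ t0.le P.t1 (by norm_num)) (neg_ne_zero.2 q0.ne')
  rw [jJ (q := q) (b := (t ^ 3) ^ 4) (y := (t ^ 3) ^ 2 * (-q) ^ 2) 5 (by rw [← P.tq]; ring) (by rw [← P.tq]; ring), jJ (q := q) (b := (t ^ 3) ^ 4) (y := (t ^ 3) ^ 6 * (-q) ^ 2) 11 (by rw [← P.tq]; ring) (by rw [← P.tq]; ring)] at h
  have r2 := J_refl q0 1
  norm_num only at r2 h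
  rw [th, h, r2]; ring

lemma k3_eq (P : Prods t q) : kap (t ^ 3) = J q 3 - 4 * DJ q 3 := by
  have t0 := P.t0
  have q0 := P.q0
  have h := Dj_par (b := t ^ 3) (by positivity) (pow_lt_one₀ t0.le P.t1 (by norm_num)) (y := -1) (by norm_num)
  rw [dJ (q := q) (b := (t ^ 3) ^ 4) (y := (t ^ 3) ^ 2 * (-1) ^ 2) 3 (by rw [← P.tq]; ring) (by rw [← P.tq]; ring), dJ (q := q) (b := (t ^ 3) ^ 4) (y := (t ^ 3) ^ 6 * (-1) ^ 2) 9 (by rw [← P.tq]; ring) (by rw [← P.tq]; ring),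
    jJ (q := q) (b := (t ^ 3) ^ 4) (y := (t ^ 3) ^ 6 * (-1) ^ 2) 9 (by rw [← P.tq]; ring) (by rw [← P.tq]; ring)] at h
  have r1 := DJ_refl q0 P.q1 3
  have r2 := J_refl q0 3
  norm_num only at r1 r2
  simp only [Nat.cast_ofNat] at h
  rw [kap, h, r1, r2]; ring

lemma rho3_eq (P : Prods t q) : rho (t ^ 3) q * th (t ^ 3) q = 2 * DJ q 5 + 2 * q * DJ q 1 - q * J q 1 := by
  have t0 := P.t0
  have q0 := P.q0
  have h := Dj_par (b := t ^ 3) (by positivity) (pow_lt_one₀ t0.le P.t1 (by norm_num)) (y := -q) (by simpa using q0.ne')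
  rw [dJ (q := q) (b := (t ^ 3) ^ 4) (y := (t ^ 3) ^ 2 * (-q) ^ 2) 5 (by rw [← P.tq]; ring) (by rw [← P.tq]; ring), dJ (q := q) (b := (t ^ 3) ^ 4) (y := (t ^ 3) ^ 6 * (-q) ^ 2) 11 (by rw [← P.tq]; ring) (by rw [← P.tq]; ring),
    jJ (q := q) (b := (t ^ 3) ^ 4) (y := (t ^ 3) ^ 6 * (-q) ^ 2) 11 (by rw [← P.tq]; ring) (by rw [← P.tq]; ring)] at h
  have r1 := DJ_refl q0 P.q1 1
  have r2 := J_refl q0 1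
  norm_num only at r1 r2
  simp only [Nat.cast_ofNat] at h
  have : rho (t ^ 3) q * th (t ^ 3) q = Dj (t ^ 3) (-q) := by
    have := P.W0
    rw [rho]; unfold th at *; field_simp
  rw [this, h, r1, r2]; ring

lemma id2 (P : Prods t q) : J q 3 * (BB q 3 1 - q ^ 2 * BB q 9 2) = th (t ^ 3) (-q) * th (q ^ 3) q ^ 2 := by
  have q0 := P.q0
  have q1 := P.q1
  have h1 := F1z q0 q1 2 (-4) 7 (by norm_num) (by norm_num)
  have h2 := F1z q0 q1 2 (-4) 13 (by norm_num) (by norm_num)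
  have r1 := J_refl q0 3
  have r2 := J_shift q0 3
  have r3 := J_refl q0 1
  have b1 := BB_eq q0 q1 3 1 (by norm_num)
  have b2 := BB_eq q0 q1 9 2 (by norm_num)
  have i1 := A_inv q0 4 15
  have i2 := A_inv q0 4 21
  have c1 := cc_th (q6 q0 q1).1 (q6 q0 q1).2 (NPz q0 q1 2 (by norm_num)) (NPz q0 q1 (-4) (by norm_num))
  have c2 : q ^ (-4 : ℤ) / q ^ (2 : ℤ) = (q ^ 6)⁻¹ := by
    rw [← zpow_sub₀ q0.ne']; norm_num only; rw [zpow_neg]; norm_cast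
  have c3 : q ^ (-4 : ℤ) = (q ^ 4)⁻¹ := by rw [zpow_neg]; norm_cast
  have c4 : q ^ (2 : ℤ) = q ^ 2 := by norm_cast
  have c5 : q ^ (-3 : ℤ) = (q ^ 3)⁻¹ := by rw [zpow_neg]; norm_cast
  norm_num only at *
  rw [c2, th_inv (by positivity), c3, th_inv (by positivity), c4] at c1
  rw [← c3, ← c4] at c1
  change C q 2 (-4) * _ * _ = _ at c1
  rw [c3, c4] at c1
  rw [b1, b2, i1, i2, zpow_one, c4, c3]
  rw [r1] at h1 h2
  rw [r2, r3, c5] at h2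
  have hD2 := P.D2
  have hD4 := P.D4
  have hp := P.p2
  have hW := W_eq P
  have hC : C q 2 (-4) * th (t ^ 3) q = th (t ^ 3) (-q) * th (q ^ 3) q ^ 2 := by
    have h := P.q0.ne'
    field_simp at c1
    have : (C q 2 (-4) * th (t ^ 3) q) * (th (q ^ 6) (q ^ 4) * th (q ^ 6) (q ^ 2)) =
      (th (t ^ 3) (-q) * th (q ^ 3) q ^ 2) * (th (q ^ 6) (q ^ 4) * th (q ^ 6) (q ^ 2)) := by
      linear_combination hp - th (t ^ 3) q * c1
    exact mul_right_cancel₀ (mul_ne_zero hD4 hD2) this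
  rw [← hC, hW]
  field_simp at h2 ⊢
  linear_combination q ^ 2 * h1 - h2

lemma C24 (P : Prods t q) : C q 2 4 * th (q ^ 6) (q ^ 4) = kap (q ^ 6) * q ^ 2 := by
  have q0 := P.q0
  have q1 := P.q1
  have c1 := cc_th (q6 q0 q1).1 (q6 q0 q1).2 (NPz q0 q1 2 (by norm_num)) (NPz q0 q1 4 (by norm_num))
  have c2 : q ^ (4 : ℤ) / q ^ (2 : ℤ) = q ^ 2 := by
    rw [← zpow_sub₀ q0.ne']; norm_num only; norm_cast
  change C q 2 4 * _ * _ = _ at c1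
  rw [c2] at c1
  norm_cast at c1
  exact mul_right_cancel₀ P.D2 c1

noncomputable def e2 (q : ℝ) : ℝ := (th q q ^ 2 + th (q ^ 3) (q ^ 3) ^ 2) / 4

lemma e2_eq (P : Prods t q) : J q 3 * e2 q = J q 3 * th (q ^ 3) (q ^ 3) ^ 2 / 2 - C q 2 4 * th (t ^ 3) q / q := by
  have q0 := P.q0
  have h5 := P.p5
  have h6 := P.p6
  have h4 := P.p4
  have hc := C24 P
  have hU := U_eq P
  have hW := W_eq P
  have hU0 := P.U0
  have hD4 := P.D4
  have j1 := J_nat (q := q) 1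
  have j3 := J_nat (q := q) 3
  have j5 := J_nat (q := q) 5
  simp only [Nat.cast_one, Nat.cast_ofNat, pow_one] at j1 j3 j5
  rw [← j3] at h5
  rw [← j1, ← j5, ← h5] at h6
  unfold e2
  set U := th (t ^ 3) (-q)
  set W := th (t ^ 3) q
  have h4' : th q q = W * th (q ^ 3) (q ^ 3) / U := by field_simp; linear_combination h4
  have hc' : C q 2 4 = kap (q ^ 6) * q ^ 2 / th (q ^ 6) (q ^ 4) := by field_simp; linear_combination hc
  rw [h4', hc']
  field_simp
  have e : U ^ 2 - W ^ 2 = 4 * q * J q 1 * J q 5 := by rw [hU, hW]; ring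
  linear_combination -8 * q * h6 + (-2 * J q 3 * th (q ^ 3) (q ^ 3) ^ 2 * th (q ^ 6) (q ^ 4)) * e

lemma id1 (P : Prods t q) : J q 3 * (BB q 1 0 + q * BB q 5 2) = th (t ^ 3) (-q) * BB q 3 1 - J q 3 * e2 q := by
  have q0 := P.q0
  have q1 := P.q1
  have f1 := F1sz q0 q1 2 7 (by norm_num)
  have f2 := F1sz q0 q1 2 13 (by norm_num)
  have f3 := F1z q0 q1 2 4 7 (by norm_num) (by norm_num)
  have f4 := F1z q0 q1 2 4 13 (by norm_num) (by norm_num)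
  have r3 := J_refl q0 3
  have r5 := J_refl q0 5
  have r1 := J_refl q0 1
  have d3 := DJ_refl q0 q1 3
  have s15 := J_shift q0 3
  have s13 := J_shift q0 1
  have s17 := J_shift q0 5
  have s19 := J_shift q0 7
  have d15 := DJ_shift q0 q1 3
  have b1 := BB0_eq q0 q1 1
  have b2 := BB_eq q0 q1 5 2 (by norm_num)
  have b3 := BB_eq q0 q1 3 1 (by norm_num)
  have c4 : q ^ (2 : ℤ) = q ^ 2 := by norm_cast
  have c1 : q ^ (-1 : ℤ) = q⁻¹ := by rw [zpow_neg, zpow_one]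
  have c3 : q ^ (-3 : ℤ) = (q ^ 3)⁻¹ := by rw [zpow_neg]; norm_cast
  have c5 : q ^ (-5 : ℤ) = (q ^ 5)⁻¹ := by rw [zpow_neg]; norm_cast
  have c7 : q ^ (-7 : ℤ) = (q ^ 7)⁻¹ := by rw [zpow_neg]; norm_cast
  norm_num only at *
  rw [r3, r5, d3] at f1
  rw [s15, s13, d15, c3, c1] at f2
  rw [r1, r3, s13, c1] at f3
  rw [s17, s15, s19, r5, c5, c3, c7] at f4
  rw [e2_eq P, b1, b2, b3, zpow_one, c4, U_eq P, W_eq P]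
  have h5 := P.p5
  have j3 := J_nat (q := q) 3
  simp only [Nat.cast_ofNat] at j3
  rw [← j3, k3_eq P] at h5
  rw [h5]
  field_simp at f2 f3 f4 ⊢
  linear_combination 2 * q * f1 - 2 * q * f2 - 2 * q * f3 + 2 * f4

end M2

namespace M2

variable {t q : ℝ}

lemma rho_neg_one {b : ℝ} (hb0 : 0 < b) (hb1 : b < 1) : rho b (-1) = 1 / 2 := by
  have h := rho_inv hb0 hb1 (x := -1) (by norm_num) (th_ne hb0 hb1 (kap_ne hb0 hb1) (NP_neg hb0 one_pos))
  rw [show ((-1:ℝ))⁻¹ = -1 by norm_num] at h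
  linarith

lemma beta_eq (P : Prods t q) : th (t ^ 3) (-q) * e2 q + q * J q 3 * th (q ^ 3) q ^ 2 =
    th (t ^ 3) q * (1 / 2 - 2 * rho (q ^ 6) (q ^ 4) - rho (t ^ 3) q) := by
  have q0 := P.q0
  have q1 := P.q1
  have t0 := P.t0
  have b0 : 0 < q ^ 3 := by positivity
  have b1 : q ^ 3 < 1 := pow_lt_one₀ q0.le q1 (by norm_num)
  have t30 : 0 < t ^ 3 := by positivity
  have t31 : t ^ 3 < 1 := pow_lt_one₀ t0.le P.t1 (by norm_num)
  have hk := kap_ne b0 b1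
  have bt : (t ^ 3) ^ 2 = q ^ 3 := by rw [← P.tq]; ring
  have np : ∀ k : ℕ, ¬ (6 ∣ k) → NP (q ^ 3) (q ^ k) := fun k hk => by
    have := NP_pow q0 q1 3 k (by omega)
    exact_mod_cast this
  have np1 : NP (q ^ 3) q := by simpa using np 1 (by norm_num)
  -- reflections
  have r4 : rho (q ^ 3) (q ^ 4) = - rho (q ^ 3) (q ^ 2) := by
    rw [← rho_refl b0 b1 (by positivity)]; congr 1; field_simp
  have rm3 : rho (q ^ 3) (-q ^ 3) = 0 := by
    have := rho_refl b0 b1 (x := -q ^ 3) (by simpa using q0.ne')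
    rw [show (q ^ 3) ^ 2 / -q ^ 3 = -q ^ 3 by field_simp] at this
    linarith
  have r3 : rho (q ^ 3) (q ^ 3) = 0 := by
    have := rho_refl b0 b1 (x := q ^ 3) (by simpa using q0.ne')
    rw [show (q ^ 3) ^ 2 / q ^ 3 = q ^ 3 by field_simp] at this
    linarith
  have t4 : th (q ^ 3) (q ^ 4) = th (q ^ 3) (q ^ 2) := by
    rw [← th_refl b0 (by positivity)]; congr 1; field_simp
  have tm4 : th (q ^ 3) (-q ^ 4) = th (q ^ 3) (-q ^ 2) := by
    rw [← th_refl b0 (by simpa using q0.ne')]; congr 1; field_simp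
  have rm4 : rho (q ^ 3) (-q ^ 4) = - rho (q ^ 3) (-q ^ 2) := by
    rw [← rho_refl b0 b1 (by simpa using q0.ne')]; congr 1; field_simp
  -- T2
  have T2 := star b0 b1 hk (x := q) (x' := -1) (y := q ^ 3) np1 (NP_neg b0 one_pos)
    (by have := np 4 (by norm_num); rwa [show q * q ^ 3 = q ^ 4 by ring])
    (by rw [neg_one_mul]; exact NP_neg b0 b0)
  rw [show q * q ^ 3 = q ^ 4 by ring, show q * -1 * q ^ 3 = -q ^ 4 by ring, neg_one_mul,
    show (-1 : ℝ) / q = (-q)⁻¹ by field_simp, th_inv (by simpa using q0.ne'), rho_neg_one b0 b1, r4, rm3, tm4, t4] at T2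
  -- T3
  have T3 := star b0 b1 hk (x := q) (x' := q ^ 2) (y := q) np1 (np 2 (by norm_num))
    (by have := np 2 (by norm_num); rwa [show q * q = q ^ 2 by ring])
    (by have := np 3 (by norm_num); rwa [show q ^ 2 * q = q ^ 3 by ring])
  rw [show q ^ 2 / q = q by field_simp, show q * q ^ 2 * q = q ^ 4 by ring, show q * q = q ^ 2 by ring,
    show q ^ 2 * q = q ^ 3 by ring, t4, r3] at T3
  -- T4
  have T4 := star b0 b1 hk (x := -q) (x' := q ^ 2) (y := -q) (NP_neg b0 q0) (np 2 (by norm_num))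
    (by have := np 2 (by norm_num); rwa [show -q * -q = q ^ 2 by ring])
    (by have := NP_neg b0 b0; rwa [show q ^ 2 * -q = -q ^ 3 by ring])
  rw [show q ^ 2 / -q = -q by field_simp, show -q * q ^ 2 * -q = q ^ 4 by ring, show -q * -q = q ^ 2 by ring,
    show q ^ 2 * -q = -q ^ 3 by ring, t4, rm3] at T4
  -- base changes
  have c1 := rho_bc1 t30 t31 (x := q) q0.ne' (by rw [bt]; exact P.B1)
    (by rw [bt, show q ^ 3 * q = q ^ 4 by ring, t4]; exact P.B2)
  rw [bt, show q ^ 3 * q = q ^ 4 by ring, r4] at c1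
  have c2 := rho_bc1 t30 t31 (x := -q) (by simpa using q0.ne') (by rw [bt]; exact P.Bm1)
    (by rw [bt, show q ^ 3 * -q = -q ^ 4 by ring, tm4]; exact P.Bm2)
  rw [bt, show q ^ 3 * -q = -q ^ 4 by ring, rm4] at c2
  have c3 := rho_bc2 t30 t31 (x := q) q0.ne' P.W0 P.U0
  rw [bt] at c3
  have c4 := rho_bc2 b0 b1 (x := q ^ 2) (by positivity) P.B2 P.Bm2
  rw [show (q ^ 3) ^ 2 = q ^ 6 by ring, show (q ^ 2) ^ 2 = q ^ 4 by ring] at c4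
  -- combine
  have he := e2_eq P
  have hc := C24 P
  have j3 := J_nat (q := q) 3
  simp only [Nat.cast_ofNat] at j3
  have hJ := P.psi3
  have pW := P.pW
  have pU := P.pU
  have p7 := P.p7
  have p8 := P.p8
  have p9 := P.p9
  have p5 := P.p5
  rw [← j3] at hJ pW pU p8 p9 p5
  have hU0 := P.U0
  have hW0 := P.W0
  have hB1 := P.B1
  have hB2 := P.B2
  have hB3 := P.B3
  have hC1 := P.Bm1
  have hC2 := P.Bm2
  have hC3 := P.Bm3
  have hD4 := P.D4
  have hk6 := hk
  have hC0 : th (q ^ 3) (-1) ≠ 0 := th_ne b0 b1 hk (NP_neg b0 one_pos)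
  generalize th (t ^ 3) (-q) = U at *
  generalize th (t ^ 3) q = W at *
  generalize rho (t ^ 3) q = u1 at *
  generalize rho (t ^ 3) (-q) = u2 at *
  generalize rho (q ^ 3) q = s1 at *
  generalize rho (q ^ 3) (q ^ 2) = s2 at *
  generalize rho (q ^ 3) (-q) = s1' at *
  generalize rho (q ^ 3) (-q ^ 2) = s2' at *
  generalize rho (q ^ 6) (q ^ 4) = v at *
  generalize th (q ^ 3) q = B1 at *
  generalize th (q ^ 3) (q ^ 2) = B2 at *
  generalize th (q ^ 3) (q ^ 3) = B3 at *
  generalize th (q ^ 3) (-q) = N1 at *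
  generalize th (q ^ 3) (-q ^ 2) = N2 at *
  generalize th (q ^ 3) (-q ^ 3) = N3 at *
  generalize th (q ^ 3) (-1) = N0 at *
  generalize th (q ^ 6) (q ^ 4) = D4 at *
  generalize kap (q ^ 3) = k6 at *
  generalize kap (q ^ 6) = k12 at *
  generalize J q 3 = ps at *
  have hq := q0.ne'
  have eB1 : B1 = ps * W / B2 := by field_simp; linear_combination -pW
  have eN1 : N1 = ps * U / N2 := by field_simp; linear_combination -pU
  have ek6 : k6 = ps ^ 2 * B3 := p8.symm
  have ek12 : k12 = k6 * D4 * ps ^ 2 / (N2 * B2 * N3) := by field_simp; linear_combination p9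
  have eN0 : N0 = 2 * k6 / (B3 * N3) := by field_simp; linear_combination p7
  have x2 : 1 / 2 * U * B3 ^ 2 = W * (1 / 2 - s1 - s2) := by
    have T2' : k6 * (ps * U) * B3 = (1 / 2 - s1 - s2) * (ps * W) * (N0 * N3) := by
      rw [pU, pW]
      have e : q * (-(-q)⁻¹ * N1) = N1 := by field_simp
      linear_combination T2 - k6 * B3 * N2 * e
    have : (2 * ps * k6) * (1 / 2 * U * B3 ^ 2) = (2 * ps * k6) * (W * (1 / 2 - s1 - s2)) := by
      linear_combination B3 * T2' + (1 / 2 - s1 - s2) * (ps * W) * p7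
    exact mul_left_cancel₀ (by positivity) this
  have x3 : q * ps * B1 ^ 2 = W * (2 * s2 - s1) := by
    have : (ps * B2 * B3) * (q * ps * B1 ^ 2) = (ps * B2 * B3) * (W * (2 * s2 - s1)) := by
      linear_combination T3 + q * B1 ^ 2 * B2 * p8 - (2 * s2 - s1) * B2 * B3 * pW
    exact mul_left_cancel₀ (by positivity) this
  have x4 : q * k12 * U = (s1' - 2 * s2) * (D4 * ps) := by
    have T4' : k6 * q * N1 = (s1' - 2 * s2) * (B2 * N3) := by
      have : (N1 * B2) * (k6 * q * N1) = (N1 * B2) * ((s1' - 2 * s2) * (B2 * N3)) := by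
        linear_combination -T4
      exact mul_left_cancel₀ (by positivity) this
    have : (ps * (N2 * B2 * N3)) * (q * k12 * U) = (ps * (N2 * B2 * N3)) * ((s1' - 2 * s2) * (D4 * ps)) := by
      linear_combination q * (ps * U) * p9 + q * k6 * D4 * ps ^ 2 * pU + D4 * ps ^ 2 * N2 * T4'
    exact mul_left_cancel₀ (by positivity) this
  have ec : C q 2 4 = k12 * q ^ 2 / D4 := by field_simp; linear_combination hc
  have hfin : U * e2 q = U * B3 ^ 2 / 2 - W * (s1' - 2 * s2) := by
    have : e2 q = B3 ^ 2 / 2 - C q 2 4 * W / q / ps := by field_simp; field_simp at he; linear_combination he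
    rw [this, ec]; field_simp; linear_combination (-2 * W) * x4
  rw [hfin]
  linear_combination x2 + x3 + W * (-2 * c1 - c2 - c3 - c4)

lemma id3 (P : Prods t q) : q * (J q 3 * (2 * q * BB q 7 2)) =
    -q * J q 3 * th (q ^ 3) q ^ 2 - th (t ^ 3) (-q) * (e2 q - BB q 3 0) := by
  have q0 := P.q0
  have q1 := P.q1
  have hb := beta_eq P
  have f1 := F1sz q0 q1 (-4) 9 (by norm_num)
  have f2 := F1sz q0 q1 (-4) 15 (by norm_num)
  have r3 := J_refl q0 3
  have r1 := J_refl q0 1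
  have d1 := DJ_refl q0 q1 1
  have s15 := J_shift q0 3
  have b1 := BB0_eq q0 q1 3
  have b2 := BB_eq q0 q1 7 2 (by norm_num)
  have i0 := A_inv q0 0 15
  have i1 := A_inv q0 4 13
  have i2 := A_inv q0 4 19
  have hr := rho3_eq P
  have hC : C q 0 (-4) = - rho (q ^ 6) (q ^ 4) := by
    have h1 := rho_eq (q6 q0 q1).1 (q6 q0 q1).2 (kap_ne (q6 q0 q1).1 (q6 q0 q1).2) (NPz q0 q1 (-4) (by norm_num))
    have h2 := rho_inv (q6 q0 q1).1 (q6 q0 q1).2 (x := q ^ 4) (by positivity) P.D4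
    have e : q ^ (-4 : ℤ) = (q ^ 4)⁻¹ := by rw [zpow_neg]; norm_cast
    unfold C
    rw [zpow_zero]
    rw [e] at h1 ⊢
    linarith
  have c4 : q ^ (2 : ℤ) = q ^ 2 := by norm_cast
  have c3 : q ^ (-3 : ℤ) = (q ^ 3)⁻¹ := by rw [zpow_neg]; norm_cast
  have cm4 : q ^ (-4 : ℤ) = (q ^ 4)⁻¹ := by rw [zpow_neg]; norm_cast
  simp only [neg_zero, zpow_zero] at i0
  norm_num only at *
  rw [r3] at f1
  rw [s15, r1, d1, c3, i0] at f2
  rw [hC] at f1 f2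
  rw [b1, b2, i0, i1, i2, c4, cm4]
  rw [U_eq P] at hb ⊢
  rw [W_eq P] at hb hr
  have hb' : (J q 5 + q * J q 1) * e2 q = -q * J q 3 * th (q ^ 3) q ^ 2 + 
    (J q 5 - q * J q 1) * (1 / 2 - 2 * rho (q ^ 6) (q ^ 4)) - (2 * DJ q 5 + 2 * q * DJ q 1 - q * J q 1) := by
    linear_combination hb - hr
  rw [mul_sub (J q 5 + q * J q 1), hb']
  field_simp at f2 ⊢
  linear_combination (-4 * q ^ 2) * f1 + 4 * f2

end M2

namespace M2

variable {t q : ℝ}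

noncomputable def psi (q : ℝ) : ℝ := ∑' n : ℤ, q ^ (2 * n ^ 2 + n)
noncomputable def LL (q : ℝ) : ℝ := ∑' n : ℤ, q ^ (2 * n ^ 2 + n) / (1 - q ^ (2 * n) + q ^ (4 * n))

lemma psi_summ (q0 : 0 < q) (q1 : q < 1) : Summable fun n : ℤ => q ^ (2 * n ^ 2 + n) :=
  summE q q0 q1 2 1 (by norm_num) 1 one_ne_zero _ one_bdd _ (fun r => by simp)

lemma bdd_of_le {e : ℤ → ℝ} (K : ℝ) (h : ∀ r, |e r| ≤ K) : ∃ C : ℝ, ∀ r : ℤ, |e r| ≤ C * (1 + |(r : ℝ)|) :=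
  ⟨K, fun r => (h r).trans (by
    have := (abs_nonneg (e r)).trans (h r)
    nlinarith [abs_nonneg (r : ℝ)])⟩

lemma L_den (z : ℝ) : 3 / 4 ≤ 1 - z + z ^ 2 := by nlinarith [sq_nonneg (z - 1 / 2)]

lemma LL_summ (q0 : 0 < q) (q1 : q < 1) :
    Summable fun n : ℤ => q ^ (2 * n ^ 2 + n) / (1 - q ^ (2 * n) + q ^ (4 * n)) := by
  refine summE q q0 q1 2 1 (by norm_num) 1 one_ne_zero (fun n => 1 / (1 - q ^ (2 * n) + q ^ (4 * n)))
    (bdd_of_le 2 fun r => ?_) _ (fun r => by simp [div_eq_mul_inv])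
  have h := L_den (q ^ (2 * r))
  have e : (q ^ (2 * r)) ^ 2 = q ^ (4 * r) := by
    rw [← zpow_natCast, ← zpow_mul]; congr 1; push_cast; ring
  rw [e] at h
  rw [abs_of_pos (by positivity), div_le_iff₀ (by linarith)]
  linarith

lemma BB_summ (q0 : 0 < q) (q1 : q < 1) (c d : ℤ) :
    Summable fun n : ℤ => q ^ (6 * n ^ 2 + c * n) / (1 + q ^ (6 * n + d)) := by
  refine summE q q0 q1 6 c (by norm_num) 1 one_ne_zero (fun n => 1 / (1 + q ^ (6 * n + d)))
    (bdd_of_le 1 fun r => ?_) _ (fun r => by simp [div_eq_mul_inv])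
  have h : 0 < q ^ (6 * r + d) := by positivity
  rw [abs_of_pos (by positivity), div_le_iff₀ (by linarith)]
  linarith

lemma J_tsum (q0 : 0 < q) (k : ℤ) : J q k = ∑' r : ℤ, q ^ (6 * r ^ 2 + (k - 6) * r) := by
  unfold J jf
  refine tsum_congr fun r => ?_
  rw [← zpow_natCast q 6, ← zpow_mul, ← zpow_mul, ← zpow_add₀ q0.ne']
  congr 1; push_cast; ring

lemma cube_z (q0 : 0 < q) (a : ℤ) : (q ^ 3) ^ a = q ^ (3 * a) := by
  rw [← zpow_natCast q 3, ← zpow_mul]; rfl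

lemma psi_diss (q0 : 0 < q) (q1 : q < 1) :
    psi q = J (q ^ 3) 5 + q ^ 3 * J (q ^ 3) 1 + q * J (q ^ 3) 3 := by
  have hQ0 : 0 < q ^ 3 := by positivity
  have r5 := J_refl hQ0 5
  have r1 := J_refl hQ0 1
  have s := J_shift hQ0 3
  have e3 : q * J (q ^ 3) 3 = q ^ 10 * J (q ^ 3) (12 + 3) := by
    rw [s, cube_z q0, zpow_mul]
    have : (q ^ (3:ℤ)) ^ (-3 : ℤ) = (q ^ 9)⁻¹ := by
      rw [← zpow_mul]; norm_num
    rw [this]; field_simp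
  rw [e3, ← r5, ← r1, psi, tsum_mod 3 (psi_summ q0 q1), Fin.sum_univ_three]
  simp only [J_tsum hQ0, ← tsum_mul_left]
  congr 1; congr 1
  all_goals
    refine tsum_congr fun m => ?_
    rw [cube_z q0]
  · congr 1; simp; ring
  · rw [← zpow_natCast q 3, ← zpow_add₀ q0.ne']; congr 1; simp; ring
  · rw [← zpow_natCast q 10, ← zpow_add₀ q0.ne']; congr 1; simp; ring

lemma Lterm (z w : ℝ) (hz : 0 < z) : w / (1 - z + z ^ 2) = w / (1 + z ^ 3) + z * w / (1 + z ^ 3) := by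
  have := L_den z
  have h1 : 0 < 1 - z + z ^ 2 := by linarith
  field_simp
  ring

lemma BB_neg (q0 : 0 < q) (c d : ℤ) : BB q c d = ∑' n : ℤ, q ^ (6 * n ^ 2 + (18 - c) * n + 12 - c - d) / (1 + q ^ (6 * n + 6 - d)) := by
  unfold BB
  rw [← ((Equiv.neg ℤ).trans (Equiv.subRight (1:ℤ))).tsum_eq]
  refine tsum_congr fun n => ?_
  simp only [Equiv.trans_apply, Equiv.neg_apply, Equiv.subRight_apply]
  have e1 : 6 * (-n - 1) ^ 2 + c * (-n - 1) = (6 * n ^ 2 + (18 - c) * n + 12 - c - d) - (6 * n + 6 - d) := by ring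
  have e2 : 6 * (-n - 1) + d = - (6 * n + 6 - d) := by ring
  rw [e1, e2, zpow_sub₀ q0.ne', zpow_neg]
  have : 0 < q ^ (6 * n + 6 - d) := by positivity
  field_simp
  ring

lemma BB94 (q0 : 0 < q) : q ^ 3 * BB q 9 4 = q ^ 2 * BB q 9 2 := by
  rw [BB_neg q0]
  unfold BB
  rw [← tsum_mul_left, ← tsum_mul_left]
  refine tsum_congr fun n => ?_
  rw [show 6 * n ^ 2 + (18 - 9) * n + 12 - 9 - 4 = 6 * n ^ 2 + 9 * n + (-1) by ring,
    show 6 * n + 6 - 4 = 6 * n + 2 by ring, zpow_add₀ q0.ne', zpow_neg_one]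
  field_simp

lemma BB114 (q0 : 0 < q) : q ^ 4 * BB q 11 4 = q * BB q 7 2 := by
  rw [BB_neg q0]
  unfold BB
  rw [← tsum_mul_left, ← tsum_mul_left]
  refine tsum_congr fun n => ?_
  rw [show 6 * n ^ 2 + (18 - 11) * n + 12 - 11 - 4 = 6 * n ^ 2 + 7 * n + (-3) by ring,
    show 6 * n + 6 - 4 = 6 * n + 2 by ring, zpow_add₀ q0.ne', show (-3 : ℤ) = -((3:ℕ):ℤ) by norm_num,
    zpow_neg, zpow_natCast]
  field_simp

lemma L_diss (q0 : 0 < q) (q1 : q < 1) : LL q = BB (q ^ 3) 1 0 + BB (q ^ 3) 3 0 + q ^ 3 * BB (q ^ 3) 5 2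
    + q * ((q ^ 3) ^ 2 * BB (q ^ 3) 9 2) + q ^ 2 * (2 * (q ^ 3) * BB (q ^ 3) 7 2) := by
  have hQ0 : 0 < q ^ 3 := by positivity
  have hQ1 : q ^ 3 < 1 := pow_lt_one₀ q0.le q1 (by norm_num)
  have key : ∀ n : ℤ, q ^ (2 * n ^ 2 + n) / (1 - q ^ (2 * n) + q ^ (4 * n)) =
      q ^ (2 * n ^ 2 + n) / (1 + (q ^ 3) ^ (2 * n)) + q ^ (2 * n ^ 2 + 3 * n) / (1 + (q ^ 3) ^ (2 * n)) := by
    intro n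
    have := Lterm (q ^ (2 * n)) (q ^ (2 * n ^ 2 + n)) (by positivity)
    rw [← zpow_add₀ q0.ne', ← zpow_natCast, ← zpow_mul, ← zpow_natCast, ← zpow_mul] at this
    rw [cube_z q0]
    convert this using 3 <;> (congr 1; push_cast; ring)
  have e : LL q = BB (q ^ 3) 1 0 + BB (q ^ 3) 3 0 + (q ^ 3 * BB (q ^ 3) 5 2 + q ^ 5 * BB (q ^ 3) 7 2) +
      (q ^ 10 * BB (q ^ 3) 9 4 + q ^ 14 * BB (q ^ 3) 11 4) := by
    unfold LL
    rw [tsum_mod 3 (LL_summ q0 q1), Fin.sum_univ_three]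
    unfold BB
    simp only [← tsum_mul_left]
    rw [← (BB_summ hQ0 hQ1 1 0).tsum_add (BB_summ hQ0 hQ1 3 0),
      ← ((BB_summ hQ0 hQ1 5 2).mul_left _).tsum_add ((BB_summ hQ0 hQ1 7 2).mul_left _),
      ← ((BB_summ hQ0 hQ1 9 4).mul_left _).tsum_add ((BB_summ hQ0 hQ1 11 4).mul_left _)]
    congr 1; congr 1
    all_goals
      refine tsum_congr fun m => ?_
      rw [key]
      simp only [cube_z q0, ← mul_div_assoc]
    · congr 3
      · simp; ring
      · simp; ring
      · simp; ring
      · simp; ring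
    · rw [← zpow_natCast q 3, ← zpow_natCast q 5, ← zpow_add₀ q0.ne', ← zpow_add₀ q0.ne']
      congr 3
      · simp; ring
      · simp; ring
      · simp; ring
      · simp; ring
    · rw [← zpow_natCast q 10, ← zpow_natCast q 14, ← zpow_add₀ q0.ne', ← zpow_add₀ q0.ne']
      congr 3
      · simp; ring
      · simp; ring
      · simp; ring
      · simp; ring
  rw [e]
  linear_combination q * BB94 hQ0 + q ^ 2 * BB114 hQ0

theorem main_id (q0 : 0 < q) (q1 : q < 1) : q * (J (q ^ 3) 3 * LL q) =
    psi q * (q * BB (q ^ 3) 3 1 - q ^ 2 * th ((q ^ 3) ^ 3) (q ^ 3) ^ 2 - (e2 (q ^ 3) - BB (q ^ 3) 3 0)) := by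
  have hQ0 : 0 < q ^ 3 := by positivity
  have hQ1 : q ^ 3 < 1 := pow_lt_one₀ q0.le q1 (by norm_num)
  have P : Prods (Real.sqrt (q ^ 3)) (q ^ 3) := prods (Real.sqrt_pos.2 hQ0)
    (by rw [Real.sqrt_lt' one_pos]; simpa using hQ1) (Real.sq_sqrt hQ0.le)
  have i1 := id1 P
  have i2 := id2 P
  have i3 := id3 P
  have d1 := psi_diss q0 q1
  have d2 := L_diss q0 q1
  have u := U_eq P
  rw [d2, d1, ← u]
  linear_combination q * i1 - q ^ 2 * i2 + i3

end M2

namespace M2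

/-! Combinatorics: partitions without repeated odd parts as multisets. -/

def NR (M : Multiset ℕ) : Prop := 0 ∉ M ∧ ∀ j, Odd j → M.count j ≤ 1

abbrev S := {M : Multiset ℕ // NR M}

def hf (M : Multiset ℕ) : ℕ := (M.sup + 1) / 2
def rk (M : Multiset ℕ) : ℤ := ((hf M : ℕ) : ℤ) - (Multiset.card M : ℤ)

lemma NR_zero : NR 0 := ⟨by simp, by simp⟩

lemma hf_le {M : Multiset ℕ} {k : ℕ} : hf M ≤ k ↔ ∀ i ∈ M, i ≤ 2 * k := by
  rw [← Multiset.sup_le (s := M) (a := 2 * k)]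
  unfold hf; omega

lemma hf_zero : hf 0 = 0 := by simp [hf]

lemma sup_mem {M : Multiset ℕ} (h : M ≠ 0) : M.sup ∈ M := by
  induction M using Multiset.induction with
  | empty => exact absurd rfl h
  | cons a s ih =>
    rw [Multiset.sup_cons]
    by_cases hs : s = 0
    · subst hs; simp
    · rcases le_total a s.sup with h1 | h1
      · rw [sup_eq_right.2 h1]; exact Multiset.mem_cons_of_mem (ih hs)
      · rw [sup_eq_left.2 h1]; exact Multiset.mem_cons_self _ _

def up (A : Multiset ℕ) (b : ℕ) : Multiset ℕ :=
  A.map (· + 2) + Multiset.replicate (b / 2) 2 + Multiset.replicate (b % 2) 1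

def dn (M : Multiset ℕ) : Multiset ℕ := (M.filter (2 < ·)).map (· - 2)

lemma count_map_add (A : Multiset ℕ) (j : ℕ) :
    (A.map (· + 2)).count j = if 2 ≤ j then A.count (j - 2) else 0 := by
  split_ifs with h
  · obtain ⟨k, rfl⟩ := Nat.exists_eq_add_of_le' h
    rw [Nat.add_sub_cancel]
    exact Multiset.count_map_eq_count' _ _ (add_left_injective 2) k
  · rw [Multiset.count_eq_zero]
    simp only [Multiset.mem_map, not_exists, not_and]
    intro x _; omega

lemma count_up (A : Multiset ℕ) (b j : ℕ) : (up A b).count j =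
    (if 2 ≤ j then A.count (j - 2) else 0) + (if j = 2 then b / 2 else 0) + (if j = 1 then b % 2 else 0) := by
  unfold up
  rw [Multiset.count_add, Multiset.count_add, count_map_add, Multiset.count_replicate, Multiset.count_replicate]
  simp only [eq_comm]

lemma count_dn (M : Multiset ℕ) (j : ℕ) : (dn M).count j = if 0 < j then M.count (j + 2) else 0 := by
  unfold dn
  rw [Multiset.count_map, Multiset.filter_filter]
  split_ifs with h
  · rw [Multiset.count_eq_card_filter_eq]
    congr 1
    refine Multiset.filter_congr fun x _ => ?_
    omega
  · rw [Multiset.card_eq_zero, Multiset.filter_eq_nil]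
    intro x _; omega

lemma NR_iff (M : Multiset ℕ) : NR M ↔ M.count 0 = 0 ∧ ∀ j, Odd j → M.count j ≤ 1 := by
  unfold NR; rw [Multiset.count_eq_zero]

lemma NR_up {A : Multiset ℕ} (h : NR A) (b : ℕ) : NR (up A b) := by
  rw [NR_iff] at *
  refine ⟨by rw [count_up]; simp, fun j hj => ?_⟩
  rw [count_up]
  by_cases h1 : j = 1
  · subst h1; simp; omega
  · have h2 : j ≠ 2 := by rintro rfl; revert hj; decide
    have h3 : 2 ≤ j := by rcases hj with ⟨k, rfl⟩; omega
    have := h.2 (j - 2) (by rcases hj with ⟨k, rfl⟩; exact ⟨k - 1, by omega⟩)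
    simp [h1, h2, h3, this]

lemma NR_dn {M : Multiset ℕ} (h : NR M) : NR (dn M) := by
  rw [NR_iff] at *
  refine ⟨by rw [count_dn]; simp, fun j hj => ?_⟩
  rw [count_dn]
  split_ifs with h1
  · exact h.2 _ (by rcases hj with ⟨k, rfl⟩; exact ⟨k + 1, by omega⟩)
  · simp

lemma dn_up {A : Multiset ℕ} (h : NR A) (b : ℕ) : dn (up A b) = A := by
  ext j
  rw [count_dn, count_up]
  split_ifs <;> first | omega | simp_all
  have : j = 0 := by omega
  subst this
  rw [NR_iff] at h; exact h.1.symm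

lemma cnt_up {A : Multiset ℕ} (h : NR A) (b : ℕ) : 2 * (up A b).count 2 + (up A b).count 1 = b := by
  rw [NR_iff] at h
  rw [count_up, count_up]; simp [h.1]; omega

lemma up_dn {M : Multiset ℕ} (h : NR M) : up (dn M) (2 * M.count 2 + M.count 1) = M := by
  rw [NR_iff] at h
  have h1 := h.2 1 (by decide)
  ext j
  rw [count_up, count_dn]
  rcases j with _ | _ | _ | j
  · simp [h.1]
  · simp; omega
  · simp; omega
  · simp

def E1 : S ≃ S × ℕ where
  toFun M := (⟨dn M.1, NR_dn M.2⟩, 2 * M.1.count 2 + M.1.count 1)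
  invFun p := ⟨up p.1.1 p.2, NR_up p.1.2 p.2⟩
  left_inv M := Subtype.ext (up_dn M.2)
  right_inv p := by
    rcases p with ⟨⟨A, hA⟩, b⟩
    simp only [Prod.mk.injEq, Subtype.mk.injEq]
    exact ⟨dn_up hA b, cnt_up hA b⟩

lemma card_up (A : Multiset ℕ) (b : ℕ) : Multiset.card (up A b) = Multiset.card A + (b + 1) / 2 := by
  unfold up; simp; omega

lemma sum_up (A : Multiset ℕ) (b : ℕ) : (up A b).sum = A.sum + 2 * Multiset.card A + b := by
  unfold up; simp [Multiset.sum_map_add]; omega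

lemma hf_up (A : Multiset ℕ) (b : ℕ) (hA : A ≠ 0) : hf (up A b) = hf A + 1 := by
  have hs : (up A b).sup = A.sup + 2 := by
    apply le_antisymm
    · rw [Multiset.sup_le]
      intro i hi
      simp only [up, Multiset.mem_add, Multiset.mem_map, Multiset.mem_replicate] at hi
      rcases hi with (⟨a, ha, rfl⟩ | ⟨_, rfl⟩) | ⟨_, rfl⟩
      · have := Multiset.le_sup ha; omega
      · omega
      · omega
    · apply Multiset.le_sup
      simp only [up, Multiset.mem_add, Multiset.mem_map]
      exact Or.inl (Or.inl ⟨_, sup_mem hA, rfl⟩)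
  unfold hf; rw [hs]; omega

lemma hf_up0 (b : ℕ) (hb : 0 < b) : hf (up 0 b) = 1 := by
  apply le_antisymm
  · rw [hf_le]
    intro i hi
    simp only [up, Multiset.mem_add, Multiset.map_zero, Multiset.mem_replicate] at hi
    rcases hi with (h | ⟨_, rfl⟩) | ⟨_, rfl⟩
    · simp at h
    · omega
    · omega
  · by_contra hh
    have h0 : hf (up 0 b) ≤ 0 := by omega
    rw [hf_le] at h0
    have hc := card_up 0 b
    obtain ⟨i, hi⟩ := Multiset.card_pos_iff_exists_mem.1 (show 0 < Multiset.card (up 0 b) by rw [hc]; simp; omega)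
    have := h0 i hi
    have : i = 0 := by omega
    subst this
    exact (NR_up NR_zero b).1 hi

lemma rk_up (A : Multiset ℕ) (b : ℕ) (m : ℤ) (hm : m ≠ -1) :
    rk (up A b) ≤ m + 1 ↔ (hf A : ℤ) ≤ Multiset.card A + m + ((b + 1) / 2 : ℕ) := by
  unfold rk
  rw [card_up]
  by_cases hA : A = 0
  · subst hA
    rcases Nat.eq_zero_or_pos b with rfl | hb
    · simp [up, hf_zero]; omega
    · rw [hf_up0 b hb, hf_zero]; push_cast; simp; omega
  · rw [hf_up A b hA]; push_cast; omega

/-- Removing a largest part. -/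
abbrev V : Type := {p : S × ℕ // hf p.1.1 ≤ p.2 / 2}

lemma erase_le {N : Multiset ℕ} (h : NR N) : hf (N.erase N.sup) ≤ N.sup / 2 := by
  rw [hf_le]
  intro i hi
  have h1 := Multiset.le_sup (Multiset.mem_of_mem_erase hi)
  rcases Nat.even_or_odd N.sup with he | ho
  · rcases he with ⟨k, hk⟩; omega
  · have : i ≠ N.sup := by
      intro hh
      rw [hh] at hi
      have h2 := h.2 _ ho
      have h3 := Multiset.count_pos.2 hi
      rw [Multiset.count_erase_self] at h3
      omega
    omega

lemma NR_erase {N : Multiset ℕ} (h : NR N) (a : ℕ) : NR (N.erase a) :=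
  ⟨fun hh => h.1 (Multiset.mem_of_mem_erase hh), fun j hj =>
    (Multiset.count_le_of_le j (Multiset.erase_le a N)).trans (h.2 j hj)⟩

def ins (A : Multiset ℕ) (r : ℕ) : Multiset ℕ := if r = 0 then 0 else r ::ₘ A

lemma NR_ins {A : Multiset ℕ} (h : NR A) {r : ℕ} (hr : hf A ≤ r / 2) : NR (ins A r) := by
  unfold ins
  split_ifs with h0
  · exact NR_zero
  · refine ⟨?_, fun j hj => ?_⟩
    · simp only [Multiset.mem_cons, not_or]; exact ⟨fun hh => h0 hh.symm, h.1⟩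
    · rw [Multiset.count_cons]
      split_ifs with hjr
      · have : A.count j = 0 := by
          rw [Multiset.count_eq_zero]
          intro hj'
          have := hf_le.1 hr j hj'
          rcases hj with ⟨k, hk⟩
          omega
        omega
      · simpa using h.2 j hj

lemma sup_ins {A : Multiset ℕ} {r : ℕ} (hr : hf A ≤ r / 2) : (ins A r).sup = r := by
  unfold ins
  split_ifs with h0
  · simp [h0]
  · rw [Multiset.sup_cons, sup_eq_left, Multiset.sup_le]
    intro i hi
    have := hf_le.1 hr i hi
    omega

lemma A_zero_of {A : Multiset ℕ} (h : NR A) (hr : hf A ≤ 0) : A = 0 := by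
  by_contra hA
  have := hf_le.1 hr _ (sup_mem hA)
  have h2 := sup_mem hA
  rw [show A.sup = 0 by omega] at h2
  exact h.1 h2

lemma erase_ins {A : Multiset ℕ} (h : NR A) {r : ℕ} (hr : hf A ≤ r / 2) : (ins A r).erase r = A := by
  unfold ins
  split_ifs with h0
  · subst h0; rw [A_zero_of h hr]; simp
  · simp

lemma ins_erase {N : Multiset ℕ} (h : NR N) : ins (N.erase N.sup) N.sup = N := by
  by_cases hN : N = 0
  · subst hN; simp [ins]
  · have h1 := sup_mem hN
    unfold ins
    rw [if_neg, Multiset.cons_erase h1]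
    intro hh; rw [hh] at h1; exact h.1 h1

def E2 : S ≃ V where
  toFun N := ⟨(⟨N.1.erase N.1.sup, NR_erase N.2 _⟩, N.1.sup), erase_le N.2⟩
  invFun p := ⟨ins p.1.1.1 p.1.2, NR_ins p.1.1.2 p.2⟩
  left_inv N := Subtype.ext (ins_erase N.2)
  right_inv p := by
    rcases p with ⟨⟨⟨A, hA⟩, r⟩, hr⟩
    apply Subtype.ext
    simp only [Prod.mk.injEq, Subtype.mk.injEq]
    rw [sup_ins hr]
    exact ⟨erase_ins hA hr, rfl⟩

def cnd (m : ℤ) (N : Multiset ℕ) : Prop := 2 * (Multiset.card (N.erase N.sup) : ℤ) + 2 * m + 1 ≤ N.sup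

abbrev X1 (m : ℤ) : Type := {M : S // rk M.1 ≤ m + 1}
abbrev X2 (m : ℤ) : Type := {p : S × ℕ // (hf p.1.1 : ℤ) ≤ Multiset.card p.1.1 + m + ((p.2 + 1) / 2 : ℕ)}
abbrev X3 (m : ℤ) : Type := {N : S // cnd m N.1}

def e12 (m : ℤ) (hm : m ≠ -1) : X2 m ≃ X1 m :=
  Equiv.subtypeEquiv E1.symm fun p => (rk_up p.1.1 p.2 m hm).symm

def e23 (m : ℤ) : X2 m ≃ X3 m where
  toFun p := ⟨E2.symm ⟨(p.1.1, (2 * (Multiset.card p.1.1.1 : ℤ) + p.1.2 + 2 * m + 1).toNat), by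
      have := p.2; dsimp only; omega⟩, by
        rcases p with ⟨⟨⟨A, hA⟩, b⟩, hb⟩
        dsimp only at hb
        have hr : hf A ≤ (2 * (Multiset.card A : ℤ) + b + 2 * m + 1).toNat / 2 := by omega
        show cnd m (ins A _)
        unfold cnd
        rw [sup_ins hr, erase_ins hA hr]
        omega⟩
  invFun N := ⟨((E2 N.1).1.1, ((N.1.1.sup : ℤ) - 2 * m - 1 - 2 * (Multiset.card (N.1.1.erase N.1.1.sup) : ℤ)).toNat), by
      have h1 := N.2
      have h2 := (E2 N.1).2
      change hf (N.1.1.erase N.1.1.sup) ≤ N.1.1.sup / 2 at h2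
      change (hf (N.1.1.erase N.1.1.sup) : ℤ) ≤ Multiset.card (N.1.1.erase N.1.1.sup) + m + _
      unfold cnd at h1
      dsimp only
      omega⟩
  left_inv p := by
    rcases p with ⟨⟨⟨A, hA⟩, b⟩, hb⟩
    dsimp only at hb
    have hr : hf A ≤ (2 * (Multiset.card A : ℤ) + b + 2 * m + 1).toNat / 2 := by omega
    apply Subtype.ext
    dsimp only
    apply Prod.ext
    · exact congrArg (fun v : V => v.1.1) (E2.apply_symm_apply _)
    · change ((ins A _).sup - 2 * m - 1 - 2 * (Multiset.card ((ins A _).erase (ins A _).sup) : ℤ)).toNat = b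
      rw [sup_ins hr, erase_ins hA hr]
      omega
  right_inv N := by
    apply Subtype.ext
    dsimp only
    rw [Equiv.symm_apply_eq]
    apply Subtype.ext
    dsimp only
    apply Prod.ext
    · rfl
    · have h1 := N.2
      unfold cnd at h1
      change (2 * (Multiset.card (N.1.1.erase N.1.1.sup) : ℤ) + ((N.1.1.sup - 2 * m - 1 - 2 * (Multiset.card (N.1.1.erase N.1.1.sup) : ℤ)).toNat : ℤ) + 2 * m + 1).toNat = N.1.1.sup
      omega

lemma cnd_sz (m : ℤ) (p : X2 m) (hm : m ≠ -1): (((e23 m p).1.1.sum : ℕ) : ℤ) = ((e12 m hm p).1.1.sum : ℕ) + 2 * m + 1 := by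
  rcases p with ⟨⟨⟨A, hA⟩, b⟩, hb⟩
  change ((ins A (2 * (Multiset.card A : ℤ) + b + 2 * m + 1).toNat).sum : ℤ) = ((up A b).sum : ℕ) + 2 * m + 1
  dsimp only at hb
  have hr : hf A ≤ (2 * (Multiset.card A : ℤ) + b + 2 * m + 1).toNat / 2 := by omega
  rw [sum_up]
  unfold ins
  split_ifs with h0
  · have : A = 0 := A_zero_of hA (by omega)
    subst this
    simp at *
    omega
  · simp only [Multiset.sum_cons]; push_cast; omega

lemma cnd_iff (m : ℤ) (hm : m ≠ 0) {N : Multiset ℕ} (hN : NR N) : cnd m N ↔ m ≤ rk N := by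
  unfold cnd rk hf
  by_cases h : N = 0
  · subst h; simp; omega
  · have := Multiset.card_erase_add_one (sup_mem h)
    omega

lemma cnd_iff0 {N : Multiset ℕ} (hN : NR N) : cnd 0 N ↔ (0 ≤ rk N ∧ N ≠ 0) := by
  unfold cnd rk hf
  by_cases h : N = 0
  · subst h; simp
  · have := Multiset.card_erase_add_one (sup_mem h)
    simp only [h, ne_eq, not_false_eq_true, and_true]
    omega

end M2

namespace M2

def sz (p : S) : ℕ := p.1.sum
def rkS (p : S) : ℤ := rk p.1

abbrev Fb (n : ℕ) := {p : S // sz p = n}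

def toPart (n : ℕ) (p : Fb n) : n.Partition where
  parts := p.1.1
  parts_pos := fun {i} hi => Nat.pos_of_ne_zero (by rintro rfl; exact p.1.2.1 hi)
  parts_sum := p.2

lemma toPart_inj (n : ℕ) : Function.Injective (toPart n) := by
  intro p p' h
  exact Subtype.ext (Subtype.ext (congrArg Nat.Partition.parts h))

instance (n : ℕ) : Finite (Fb n) := Finite.of_injective _ (toPart_inj n)

lemma card_Fb (n : ℕ) : Nat.card (Fb n) ≤ 2 ^ n := by
  refine (Nat.card_le_card_of_injective _ (toPart_inj n)).trans ?_
  refine (Nat.card_le_card_of_surjective _ (Nat.Partition.ofComposition_surj (n := n))).trans ?_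
  rw [Nat.card_eq_fintype_card, composition_card]
  exact Nat.pow_le_pow_right (by norm_num) (by omega)

lemma S_summ {y : ℝ} (h0 : 0 ≤ y) (h1 : y ≤ 1 / 4) : Summable fun p : S => y ^ sz p := by
  rw [← (Equiv.sigmaFiberEquiv sz).summable_iff]
  rw [summable_sigma_of_nonneg (fun _ => by simp only [Function.comp]; positivity)]
  constructor
  · intro n; exact Summable.of_finite
  · have hg : Summable fun n : ℕ => ((1 : ℝ) / 2) ^ n := summable_geometric_of_lt_one (by norm_num) (by norm_num)
    refine Summable.of_nonneg_of_le (fun n => tsum_nonneg fun _ => by simp only [Function.comp]; positivity) (fun n => ?_) hg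
    have : ∀ p : Fb n, (((fun p : S => y ^ sz p) ∘ (Equiv.sigmaFiberEquiv sz)) ⟨n, p⟩) = y ^ n := by
      intro p
      simp only [Function.comp, Equiv.sigmaFiberEquiv_apply]
      rw [p.2]
    rw [tsum_congr this, tsum_const, nsmul_eq_mul]
    have hc : ((Nat.card (Fb n) : ℕ) : ℝ) ≤ 2 ^ n := by exact_mod_cast card_Fb n
    calc (Nat.card (Fb n) : ℝ) * y ^ n ≤ 2 ^ n * (1 / 4) ^ n := by gcongr
      _ = (1 / 2) ^ n := by rw [← mul_pow]; norm_num

lemma S_summ_of {y C : ℝ} (h0 : 0 ≤ y) (h1 : y ≤ 1 / 4) {g : S → ℝ} (hg : ∀ p, |g p| ≤ C * y ^ sz p) :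
    Summable g :=
  Summable.of_norm_bounded ((S_summ h0 h1).mul_left C) hg

variable {x : ℝ}

noncomputable def Gs (p : S → Prop) (x : ℝ) : ℝ := ∑' s : S, if p s then x ^ sz s else 0

lemma Gs_summ (hx : |x| ≤ 1 / 4) (p : S → Prop) : Summable fun s : S => if p s then x ^ sz s else 0 := by
  refine S_summ_of (y := |x|) (C := 1) (abs_nonneg _) hx fun s => ?_
  split_ifs
  · rw [abs_pow, one_mul]
  · simp

lemma Gs_not (hx : |x| ≤ 1 / 4) (p p' : S → Prop) (h : ∀ s, p' s ↔ ¬ p s) : Gs p' x = Gs (fun _ => True) x - Gs p x := by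
  unfold Gs
  rw [← (Gs_summ hx _).tsum_sub (Gs_summ hx _)]
  refine tsum_congr fun s => ?_
  by_cases hs : p s
  · have : ¬ p' s := fun hh => (h s).1 hh hs
    simp [hs, this]
  · simp [hs, (h s).2 hs]

lemma Gs_congr (p p' : S → Prop) (h : ∀ s, p' s ↔ p s) : Gs p' x = Gs p x := by
  rw [show p' = p from funext fun s => propext (h s)]

lemma Gs_sub (p : S → Prop) : Gs p x = ∑' s : {s // p s}, x ^ sz s.1 := by
  unfold Gs
  have := tsum_subtype {s | p s} (fun s : S => x ^ sz s)
  rw [show (∑' s : {s // p s}, x ^ sz s.1) = ∑' s : {s | p s}, x ^ sz s.1 from rfl, this]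
  rfl

lemma Gs_rec (hx0 : x ≠ 0) (m : ℤ) (hm : m ≠ -1) :
    Gs (fun s => cnd m s.1) x = x ^ (2 * m + 1) * Gs (fun s => rkS s ≤ m + 1) x := by
  rw [Gs_sub, Gs_sub, ← tsum_mul_left]
  rw [← (e23 m).tsum_eq]
  refine Eq.trans ?_ ((e12 m hm).tsum_eq (fun s => x ^ (2 * m + 1) * x ^ sz s.1))
  refine tsum_congr fun p => ?_
  have := cnd_sz m p hm
  rw [← zpow_natCast, ← zpow_natCast, ← zpow_add₀ hx0]
  congr 1
  unfold sz
  rw [this]; ring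

noncomputable def Pf (x : ℝ) : ℝ := Gs (fun _ => True) x
noncomputable def G (m : ℕ) (x : ℝ) : ℝ := Gs (fun s => (m : ℤ) ≤ rkS s) x
noncomputable def K (m : ℕ) (x : ℝ) : ℝ := Gs (fun s => rkS s ≤ -(m : ℤ)) x

lemma G_rec (hx : |x| ≤ 1 / 4) (hx0 : x ≠ 0) (m : ℕ) (hm : 1 ≤ m) : G m x = x ^ (2 * m + 1) * (Pf x - G (m + 2) x) := by
  have h := Gs_rec hx0 (m : ℤ) (by omega)
  rw [Gs_congr (fun s => (m : ℤ) ≤ rkS s) _ (fun s => cnd_iff _ (by omega) s.2),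
    Gs_not hx (fun s => ((m + 2 : ℕ) : ℤ) ≤ rkS s) (fun s => rkS s ≤ (m : ℤ) + 1) (fun s => by push_cast; omega)] at h
  unfold G Pf
  rw [h, ← zpow_natCast]; norm_cast

lemma K_rec (hx : |x| ≤ 1 / 4) (hx0 : x ≠ 0) (m : ℕ) (hm : 1 ≤ m) : K m x = x ^ (2 * m + 1) * (Pf x - K (m + 2) x) := by
  have h := Gs_rec hx0 (-(m : ℤ) - 1) (by omega)
  rw [Gs_congr (fun s => (-(m : ℤ) - 1) ≤ rkS s) _ (fun s => cnd_iff _ (by omega) s.2),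
    Gs_not hx (fun s => rkS s ≤ -((m + 2 : ℕ) : ℤ)) (fun s => (-(m : ℤ) - 1) ≤ rkS s) (fun s => by push_cast; omega)] at h
  unfold K Pf
  rw [h, ← zpow_natCast, ← mul_assoc, ← zpow_add₀ hx0, show ((2 * m + 1 : ℕ) : ℤ) + (2 * (-(m:ℤ) - 1) + 1) = 0 by push_cast; ring,
    zpow_zero, one_mul]
  exact Gs_congr _ _ (fun s => by omega)

lemma P_rec (hx : |x| ≤ 1 / 4) (hx0 : x ≠ 0) : Pf x - K 1 x - 1 = x * (Pf x - G 2 x) := by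
  have h := Gs_rec hx0 0 (by omega)
  rw [Gs_not hx (fun s => ((2 : ℕ) : ℤ) ≤ rkS s) (fun s => rkS s ≤ 0 + 1) (fun s => by push_cast; omega)] at h
  unfold G Pf K
  rw [show x * _ = x ^ (2 * (0:ℤ) + 1) * _ from by rw [show (2 * (0:ℤ) + 1) = 1 by norm_num, zpow_one], ← h]
  rw [← Gs_not hx (fun s => rkS s ≤ -((1 : ℕ) : ℤ)) (fun s => 0 ≤ rkS s) (fun s => by push_cast; omega)]
  have e : (1 : ℝ) = Gs (fun s => s = ⟨0, NR_zero⟩) x := by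
    unfold Gs
    rw [tsum_eq_single ⟨0, NR_zero⟩]
    · simp [sz]
    · intro s hs; simp [hs]
  nth_rewrite 1 [e]
  unfold Gs
  rw [← (Gs_summ hx _).tsum_sub (Gs_summ hx _)]
  refine tsum_congr fun s => ?_
  have hc := cnd_iff0 s.2
  by_cases hs : s = ⟨0, NR_zero⟩
  · subst hs; simp [hc, rkS, rk, hf_zero]
  · have : s.1 ≠ 0 := fun hh => hs (Subtype.ext hh)
    by_cases h0 : 0 ≤ rkS s
    · have h1 : cnd 0 s.1 := hc.2 ⟨h0, this⟩
      rw [if_pos h0, if_neg hs, if_pos h1, sub_zero]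
    · have h1 : ¬ cnd 0 s.1 := fun hh => h0 (hc.1 hh).1
      rw [if_neg h0, if_neg hs, if_neg h1, sub_zero]

lemma D_zero (hx : |x| ≤ 1 / 4) (D : ℕ → ℝ) (B : ℝ) (hB : ∀ m, |D m| ≤ B)
    (hD : ∀ m, 1 ≤ m → D m = - x ^ (2 * m + 1) * D (m + 2)) (m : ℕ) (hm : 1 ≤ m) : D m = 0 := by
  have key : ∀ k m, 1 ≤ m → |D m| ≤ (1 / 4) ^ k * B := by
    intro k
    induction k with
    | zero => intro m _; simpa using hB m
    | succ k ih =>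
      intro m hm
      rw [hD m hm, abs_mul, abs_neg, abs_pow, pow_succ' (1 / 4 : ℝ), mul_assoc]
      have h1 : |x| ^ (2 * m + 1) ≤ 1 / 4 := by
        calc |x| ^ (2 * m + 1) ≤ |x| ^ 1 := pow_le_pow_of_le_one (abs_nonneg _) (by linarith) (by omega)
          _ ≤ 1 / 4 := by simpa using hx
      exact mul_le_mul h1 (ih _ (by omega)) (abs_nonneg _) (by norm_num)
  have hl : Tendsto (fun k : ℕ => ((1:ℝ) / 4) ^ k * B) atTop (𝓝 (0 * B)) :=
    (tendsto_pow_atTop_nhds_zero_of_lt_one (by norm_num) (by norm_num)).mul_const B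
  rw [zero_mul] at hl
  have := ge_of_tendsto' hl (fun k => key k m hm)
  exact abs_nonpos_iff.1 this

lemma Pf_eq (x : ℝ) : Pf x = ∑' s : S, x ^ sz s := by
  unfold Pf Gs
  exact tsum_congr fun s => if_pos trivial

lemma Gs_le (hx : |x| ≤ 1 / 4) (p : S → Prop) : |Gs p x| ≤ Pf |x| := by
  rw [Pf_eq]
  unfold Gs
  have hs : Summable fun s : S => |x| ^ sz s := S_summ (abs_nonneg x) hx
  refine (Real.norm_eq_abs _).symm.le.trans (tsum_of_norm_bounded hs.hasSum fun s => ?_)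
  split_ifs
  · simp
  · simp only [norm_zero]; positivity

lemma K_eq_G (hx : |x| ≤ 1 / 4) (hx0 : x ≠ 0) (m : ℕ) (hm : 1 ≤ m) : K m x = G m x := by
  have := D_zero hx (fun m => K m x - G m x) (Pf |x| + Pf |x|)
    (fun m => (abs_sub _ _).trans (add_le_add (Gs_le hx _) (Gs_le hx _)))
    (fun m hm => by rw [K_rec hx hx0 m hm, G_rec hx hx0 m hm]; ring) m hm
  linarith

variable {q : ℝ}

noncomputable def Hq (m : ℕ) (q : ℝ) : ℝ := ∑' n : ℕ, q ^ ((n + 1) * (2 * n + 1 + 2 * m))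

lemma Hq_le (q0 : 0 < q) (q1 : q < 1) (m n : ℕ) : q ^ ((n + 1) * (2 * n + 1 + 2 * m)) ≤ q ^ n :=
  pow_le_pow_of_le_one q0.le q1.le (by nlinarith [Nat.zero_le (n * n), Nat.zero_le (n * m)])

lemma Hq_summ (q0 : 0 < q) (q1 : q < 1) (m : ℕ) : Summable fun n : ℕ => q ^ ((n + 1) * (2 * n + 1 + 2 * m)) :=
  Summable.of_nonneg_of_le (fun n => by positivity) (Hq_le q0 q1 m) (summable_geometric_of_lt_one q0.le q1)

lemma Hq_rec (q0 : 0 < q) (q1 : q < 1) (m : ℕ) : Hq m q = q ^ (2 * m + 1) * (1 + Hq (m + 2) q) := by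
  unfold Hq
  rw [(Hq_summ q0 q1 m).tsum_eq_zero_add, mul_add (q ^ (2 * m + 1)), ← tsum_mul_left]
  congr 1
  · rw [mul_one]; congr 1; ring
  · refine tsum_congr fun n => ?_
    rw [← pow_add]; congr 1; ring

lemma G_eq (q0 : 0 < q) (q1 : q ≤ 1 / 4) (m : ℕ) (hm : 1 ≤ m) : G m (-q) = - (Pf (-q) * Hq m q) := by
  have q1' : q < 1 := by linarith
  have hx : |(-q)| ≤ 1 / 4 := by rw [abs_neg, abs_of_pos q0]; exact q1
  have hb : ∀ m, |Hq m q| ≤ ∑' n : ℕ, q ^ n := fun m => by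
    rw [abs_of_nonneg (tsum_nonneg fun n => by positivity)]
    exact (Hq_summ q0 q1' m).tsum_le_tsum (Hq_le q0 q1' m) (summable_geometric_of_lt_one q0.le q1')
  have := D_zero hx (fun m => G m (-q) + Pf (-q) * Hq m q) (Pf |(-q)| + |Pf (-q)| * ∑' n : ℕ, q ^ n)
    (fun m => (abs_add_le _ _).trans (add_le_add (Gs_le hx _) (by rw [abs_mul]; gcongr; exact hb m)))
    (fun m hm => by
      rw [G_rec hx (by linarith) m hm, Hq_rec q0 q1', Odd.neg_pow ⟨m, rfl⟩]; ring) m hm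
  linarith

end M2

namespace M2

variable {q : ℝ}

lemma sup_le_sum (M : Multiset ℕ) : M.sup ≤ M.sum := by
  rw [Multiset.sup_le]; intro i hi; exact Multiset.single_le_sum (fun _ _ => Nat.zero_le _) i hi

lemma card_le_sum {M : Multiset ℕ} (h : 0 ∉ M) : Multiset.card M ≤ M.sum := by
  have := Multiset.card_nsmul_le_sum (s := M) (a := 1) (fun i hi => Nat.pos_of_ne_zero (by rintro rfl; exact h hi))
  simpa using this

lemma rk_abs (s : S) : rkS s ≤ sz s ∧ -(sz s : ℤ) ≤ rkS s := by
  have h1 := sup_le_sum s.1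
  have h2 := card_le_sum s.2.1
  unfold rkS rk hf sz
  omega

lemma tele (w : ℤ → ℝ) (r : ℤ) :
    HasSum (fun m : ℕ => if ((m + 1 : ℕ) : ℤ) ≤ r then w (m + 1) - w m else 0) (w (max r 0) - w 0) := by
  have h := hasSum_sum_of_ne_finset_zero (L := SummationFilter.unconditional ℕ) (f := fun m : ℕ => if ((m + 1 : ℕ) : ℤ) ≤ r then w (m + 1) - w m else 0)
    (s := Finset.range r.toNat) (fun m hm => by
      rw [Finset.mem_range] at hm
      rw [if_neg]; push_cast; omega)
  convert h using 1
  rw [Finset.sum_congr rfl (g := fun m : ℕ => w ((m + 1 : ℕ) : ℤ) - w (m : ℤ))]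
  · rw [Finset.sum_range_sub (fun m : ℕ => w (m : ℤ))]
    congr 2
    omega
  · intro m hm
    rw [Finset.mem_range] at hm
    rw [if_pos (by push_cast; omega)]; push_cast; rfl

lemma tele2 (w : ℤ → ℝ) (r : ℤ) :
    HasSum (fun m : ℕ => (if ((m + 1 : ℕ) : ℤ) ≤ r then w (m + 1) - w m else 0) +
      (if r ≤ -((m + 1 : ℕ) : ℤ) then w (-(m + 1)) - w (-m) else 0)) (w r - w 0) := by
  have h1 := tele w r
  have h2 := tele (fun z => w (-z)) (-r)
  refine hs_congr (h1.add h2) (fun m => ?_) ?_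
  · congr 1
    by_cases h : r ≤ -((m + 1 : ℕ) : ℤ)
    · rw [if_pos h, if_pos (by omega)]
    · rw [if_neg h, if_neg (by omega)]
  · rcases le_total r 0 with h | h
    · rw [max_eq_right h, max_eq_left (by omega)]; simp
    · rw [max_eq_left h, max_eq_right (by omega)]; simp

/-- Difference weights. -/
def dw (w : ℤ → ℝ) (m : ℕ) : ℝ := (w (m + 1) - w m) + (w (-(m + 1)) - w (-m))

lemma pow_bd {R : ℝ} (hR : 1 ≤ R) {C : ℝ} {w : ℤ → ℝ} (hw : ∀ r, |w r| ≤ C * R ^ r.natAbs) (m : ℕ) :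
    |w (m + 1) - w m| ≤ 2 * C * R ^ (m + 1) ∧ |w (-(m + 1)) - w (-m)| ≤ 2 * C * R ^ (m + 1) := by
  have hC : 0 ≤ C := by have := (abs_nonneg _).trans (hw 0); simpa using this
  have a1 := hw (m + 1)
  have a2 := hw m
  have a3 := hw (-(m + 1))
  have a4 := hw (-m)
  have e1 : ((m : ℤ) + 1).natAbs = m + 1 := by omega
  have e3 : (-((m : ℤ) + 1)).natAbs = m + 1 := by omega
  have e4 : (-(m : ℤ)).natAbs = m := by omega
  rw [e1] at a1; rw [Int.natAbs_natCast] at a2; rw [e3] at a3; rw [e4] at a4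
  have hm : C * R ^ m ≤ C * R ^ (m + 1) := by gcongr; omega
  constructor
  · refine (abs_sub _ _).trans ?_; linarith
  · refine (abs_sub _ _).trans ?_; linarith

theorem weights (q0 : 0 < q) {R C : ℝ} (hR : 1 ≤ R) (hq : R * q ≤ 1 / 8) {w : ℤ → ℝ}
    (hw : ∀ r, |w r| ≤ C * R ^ r.natAbs) (g : ℕ → ℝ)
    (hg : ∀ n : ℕ, HasSum (fun m : ℕ => dw w m * (q ^ (2 * (n + 1))) ^ (m + 1)) (g n)) :
    HasSum (fun s : S => w (rkS s) * (-q) ^ sz s)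
      (Pf (-q) * (w 0 - ∑' n : ℕ, q ^ ((n + 1) * (2 * n + 1)) * g n)) := by
  have hC : 0 ≤ C := by have := (abs_nonneg _).trans (hw 0); simpa using this
  have hq4 : q ≤ 1 / 8 := by nlinarith
  have hx : |(-q)| ≤ 1 / 4 := by rw [abs_neg, abs_of_pos q0]; linarith
  have hx0 : -q ≠ 0 := by linarith
  have hpd := pow_bd hR hw
  -- summability of the sum over partitions
  have hs : Summable fun s : S => w (rkS s) * (-q) ^ sz s := by
    refine S_summ_of (y := R * q) (C := C) (by positivity) (by linarith) fun s => ?_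
    rw [abs_mul, abs_pow, abs_neg, abs_of_pos q0, mul_pow, ← mul_assoc]
    gcongr
    refine (hw _).trans ?_
    gcongr
    have := rk_abs s; omega
  -- the double family
  let F : ℕ × S → ℝ := fun z => ((if ((z.1 + 1 : ℕ) : ℤ) ≤ rkS z.2 then w (z.1 + 1) - w z.1 else 0) +
      (if rkS z.2 ≤ -((z.1 + 1 : ℕ) : ℤ) then w (-(z.1 + 1)) - w (-z.1) else 0)) * (-q) ^ sz z.2
  have hF : Summable F := by
    have hb : Summable fun z : ℕ × S => (4 * C * (1 / 2) ^ (z.1 + 1)) * (2 * (R * q)) ^ sz z.2 := by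
      refine Summable.mul_of_nonneg (f := fun m : ℕ => 4 * C * (1 / 2) ^ (m + 1)) (g := fun s : S => (2 * (R * q)) ^ sz s) ?_
        (S_summ (by positivity) (by linarith)) (fun _ => by simp only [Pi.zero_apply]; positivity)
        (fun _ => by simp only [Pi.zero_apply]; positivity)
      exact ((summable_nat_add_iff 1).2 (summable_geometric_of_lt_one (by norm_num) (by norm_num))).mul_left _
    refine Summable.of_norm_bounded hb fun z => ?_
    rcases z with ⟨m, s⟩
    simp only [F]
    rw [Real.norm_eq_abs, abs_mul, abs_pow, abs_neg, abs_of_pos q0]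
    have hrk := rk_abs s
    by_cases hm : m + 1 ≤ sz s
    · have h1 : |((if ((m + 1 : ℕ) : ℤ) ≤ rkS s then w (m + 1) - w m else 0) +
        (if rkS s ≤ -((m + 1 : ℕ) : ℤ) then w (-(m + 1)) - w (-m) else 0))| ≤ 4 * C * R ^ (m + 1) := by
        refine (abs_add_le _ _).trans ?_
        have := hpd m
        have h0 : 0 ≤ 2 * C * R ^ (m + 1) := by positivity
        split_ifs <;> (try simp only [abs_zero]) <;> linarith [this.1, this.2]
      calc _ ≤ (4 * C * R ^ (m + 1)) * q ^ sz s := by gcongr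
        _ ≤ (4 * C * R ^ sz s) * q ^ sz s * ((1 / 2) ^ (m + 1) * 2 ^ sz s) := by
            have h2 : R ^ (m + 1) ≤ R ^ sz s := pow_le_pow_right₀ hR hm
            have h3 : (1:ℝ) ≤ (1 / 2) ^ (m + 1) * 2 ^ sz s := by
              have : (2:ℝ) ^ (m + 1) ≤ 2 ^ sz s := pow_le_pow_right₀ (by norm_num) hm
              rw [one_div, inv_pow, ← div_eq_inv_mul, le_div_iff₀ (by positivity)]
              linarith
            calc (4 * C * R ^ (m + 1)) * q ^ sz s ≤ (4 * C * R ^ sz s) * q ^ sz s := by gcongr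
              _ ≤ _ := le_mul_of_one_le_right (by positivity) h3
        _ = _ := by rw [mul_pow, mul_pow]; ring
    · rw [if_neg (by push_cast; omega), if_neg (by push_cast; omega)]
      simp only [add_zero, abs_zero, zero_mul]
      positivity
  have hcol : ∀ s : S, HasSum (fun m : ℕ => F (m, s)) ((w (rkS s) - w 0) * (-q) ^ sz s) := fun s =>
    (tele2 w (rkS s)).mul_right _
  have hrow : ∀ m : ℕ, HasSum (fun s : S => F (m, s)) (dw w m * (-(Pf (-q) * Hq (m + 1) q))) := by
    intro m
    have g1 := (Gs_summ hx (fun s => ((m + 1 : ℕ) : ℤ) ≤ rkS s)).hasSum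
    have g2 := (Gs_summ hx (fun s => rkS s ≤ -((m + 1 : ℕ) : ℤ))).hasSum
    have v1 := G_eq q0 (by linarith) (m + 1) (by omega)
    have v2 := K_eq_G hx hx0 (m + 1) (by omega)
    rw [v1] at v2
    unfold G Gs at v1
    unfold K Gs at v2
    rw [v1] at g1; rw [v2] at g2
    refine hs_congr ((g1.mul_left (w (m + 1) - w m)).add (g2.mul_left (w (-(m + 1)) - w (-m)))) (fun s => ?_)
      (by unfold dw; ring)
    simp only [F]
    split_ifs <;> ring
  have hsw : HasSum (fun m : ℕ => dw w m * (-(Pf (-q) * Hq (m + 1) q))) (∑' z, F z) :=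
    hF.hasSum.prod_fiberwise hrow
  have hsw2 : HasSum (fun s : S => (w (rkS s) - w 0) * (-q) ^ sz s) (∑' z, F z) := by
    have hF' : HasSum (fun z : S × ℕ => F z.swap) (∑' z, F z) :=
      ((Equiv.prodComm S ℕ).hasSum_iff (f := F)).2 hF.hasSum
    exact hF'.prod_fiberwise hcol
  -- second swap
  let T : ℕ × ℕ → ℝ := fun z => dw w z.1 * q ^ ((z.2 + 1) * (2 * z.2 + 1 + 2 * (z.1 + 1)))
  have hT : Summable T := by
    have hb : Summable fun z : ℕ × ℕ => (4 * C * (R * q) ^ (z.1 + 1)) * q ^ z.2 := by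
      refine Summable.mul_of_nonneg (f := fun m : ℕ => 4 * C * (R * q) ^ (m + 1)) (g := fun n : ℕ => q ^ n) ?_
        (summable_geometric_of_lt_one q0.le (by linarith)) (fun _ => by simp only [Pi.zero_apply]; positivity)
        (fun _ => by simp only [Pi.zero_apply]; positivity)
      exact ((summable_nat_add_iff 1).2 (summable_geometric_of_lt_one (by positivity) (by linarith))).mul_left _
    refine Summable.of_norm_bounded hb fun z => ?_
    rcases z with ⟨m, n⟩
    simp only [T]
    rw [Real.norm_eq_abs, abs_mul, abs_of_pos (show 0 < q ^ ((n + 1) * (2 * n + 1 + 2 * (m + 1))) by positivity)]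
    have h1 : |dw w m| ≤ 4 * C * R ^ (m + 1) := by
      have := hpd m
      unfold dw
      refine (abs_add_le _ _).trans ?_
      linarith [this.1, this.2]
    have h2 : q ^ ((n + 1) * (2 * n + 1 + 2 * (m + 1))) ≤ q ^ ((m + 1) + n) :=
      pow_le_pow_of_le_one q0.le (by linarith) (by nlinarith [Nat.zero_le (n * n), Nat.zero_le (n * m)])
    calc _ ≤ (4 * C * R ^ (m + 1)) * q ^ ((m + 1) + n) := by gcongr
      _ = _ := by rw [mul_pow, pow_add]; ring
  have hr1 : ∀ m : ℕ, HasSum (fun n : ℕ => T (m, n)) (dw w m * Hq (m + 1) q) := fun m =>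
    (Hq_summ q0 (by linarith) (m + 1)).hasSum.mul_left _
  have hr2 : ∀ n : ℕ, HasSum (fun m : ℕ => T (m, n)) (q ^ ((n + 1) * (2 * n + 1)) * g n) := fun n => by
    refine hs_congr ((hg n).mul_left (q ^ ((n + 1) * (2 * n + 1)))) (fun m => ?_) rfl
    simp only [T]
    rw [← pow_mul, mul_left_comm, ← pow_add]
    congr 2; ring
  have t1 : HasSum (fun m : ℕ => dw w m * Hq (m + 1) q) (∑' z, T z) := hT.hasSum.prod_fiberwise hr1
  have t2 : HasSum (fun n : ℕ => q ^ ((n + 1) * (2 * n + 1)) * g n) (∑' z, T z) := by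
    have hT' : HasSum (fun z : ℕ × ℕ => T z.swap) (∑' z, T z) :=
      ((Equiv.prodComm ℕ ℕ).hasSum_iff (f := T)).2 hT.hasSum
    exact hT'.prod_fiberwise hr2
  rw [t2.tsum_eq]
  have e : ∑' z, F z = -(Pf (-q)) * ∑' z, T z := by
    refine hsw.unique (hs_congr (t1.mul_left (-(Pf (-q)))) (fun m => by ring) rfl)
  have hP : HasSum (fun s : S => (-q) ^ sz s) (Pf (-q)) := by
    rw [Pf_eq]
    refine Summable.hasSum (S_summ_of (y := |(-q)|) (C := 1) (abs_nonneg _) hx fun s => ?_)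
    rw [abs_pow, one_mul]
  rw [e] at hsw2
  exact hs_congr (hsw2.add (hP.mul_left (w 0))) (fun s => by ring) (by ring)

end M2

namespace M2

variable {q : ℝ}

lemma int_split {f : ℤ → ℝ} (hf : Summable f) {h : ℕ → ℝ}
    (hh : ∀ n : ℕ, f (n + 1) + f (-(n + 1)) = h n) : ∑' z, f z = f 0 + ∑' n, h n := by
  have s1 : Summable fun n : ℕ => f (n + 1) := hf.comp_injective (fun a b h => by simpa using h)
  have s2 : Summable fun n : ℕ => f (-(n + 1)) := hf.comp_injective (fun a b h => by simpa using h)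
  rw [tsum_of_add_one_of_neg_add_one s1 s2]
  rw [← tsum_congr hh, s1.tsum_add s2]; ring

lemma P_psi (q0 : 0 < q) (q1 : q ≤ 1 / 4) : Pf (-q) * psi q = 1 := by
  have q1' : q < 1 := by linarith
  have hx : |(-q)| ≤ 1 / 4 := by rw [abs_neg, abs_of_pos q0]; exact q1
  have hx0 : -q ≠ 0 := by linarith
  have h := P_rec hx hx0
  rw [K_eq_G hx hx0 1 le_rfl, G_eq q0 q1 1 le_rfl, G_eq q0 q1 2 (by norm_num)] at h
  have h0 := Hq_rec q0 q1' 0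
  have hpsi : psi q = 1 + (Hq 1 q + Hq 0 q) := by
    unfold psi
    rw [int_split (psi_summ q0 q1') (h := fun n => q ^ ((n + 1) * (2 * n + 1 + 2 * 1)) + q ^ ((n + 1) * (2 * n + 1 + 2 * 0)))]
    · unfold Hq
      rw [(Hq_summ q0 q1' 1).tsum_add (Hq_summ q0 q1' 0)]; norm_num
    · intro n
      rw [← zpow_natCast, ← zpow_natCast]
      congr 2 <;> (push_cast; ring)
  rw [hpsi, h0]
  simp only [mul_zero, zero_add, pow_one] at *
  linear_combination h

/-! Weights for the modulus 6 statement. -/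
def w6 (r : ℤ) : ℝ := if r % 6 < 2 then 1 else if r % 6 < 4 then -1 else 0

lemma w6_per (r r' : ℤ) (h : r % 6 = r' % 6) : w6 r = w6 r' := by unfold w6; rw [h]

lemma w6_bd (r : ℤ) : |w6 r| ≤ 1 := by unfold w6; split_ifs <;> simp

lemma dw6_per (k j : ℕ) : dw w6 (6 * k + j) = dw w6 j := by
  unfold dw
  congr 2 <;> apply w6_per <;> push_cast <;> omega

lemma dw6_vals : dw w6 0 = -1 ∧ dw w6 1 = -2 ∧ dw w6 2 = -1 ∧ dw w6 3 = 1 ∧ dw w6 4 = 2 ∧ dw w6 5 = 1 := by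
  refine ⟨?_, ?_, ?_, ?_, ?_, ?_⟩ <;> norm_num [dw, w6]

lemma dw6_three (m : ℕ) : dw w6 (m + 3) = - dw w6 m := by
  obtain ⟨h0, h1, h2, h3, h4, h5⟩ := dw6_vals
  have e : m = 6 * (m / 6) + m % 6 := by omega
  have hj : m % 6 < 6 := Nat.mod_lt _ (by norm_num)
  generalize m / 6 = k at e
  generalize m % 6 = j at e hj
  subst e
  rw [dw6_per, add_assoc, dw6_per]
  interval_cases j
  · rw [h0, h3]; norm_num
  · rw [h1, h4]; norm_num
  · rw [h2, h5]; norm_num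
  · rw [h3, show 3 + 3 = 6 * 1 + 0 by norm_num, dw6_per, h0]
  · rw [h4, show 4 + 3 = 6 * 1 + 1 by norm_num, dw6_per, h1]
  · rw [h5, show 5 + 3 = 6 * 1 + 2 by norm_num, dw6_per, h2]

lemma dw6_sum {z : ℝ} (z0 : 0 < z) (z1 : z < 1) :
    HasSum (fun m : ℕ => dw w6 m * z ^ (m + 1)) (-(z * (1 + z)) / (1 - z + z ^ 2)) := by
  have hs : Summable fun m : ℕ => dw w6 m * z ^ (m + 1) := by
    refine Summable.of_norm_bounded (((summable_nat_add_iff 1).2 (summable_geometric_of_lt_one z0.le z1)).mul_left 4) fun m => ?_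
    rw [Real.norm_eq_abs, abs_mul, abs_of_pos (show 0 < z ^ (m + 1) by positivity)]
    gcongr
    unfold dw
    have b1 := abs_le.1 (w6_bd (m + 1))
    have b2 := abs_le.1 (w6_bd m)
    have b3 := abs_le.1 (w6_bd (-(m + 1)))
    have b4 := abs_le.1 (w6_bd (-m))
    rw [abs_le]; constructor <;> linarith
  have h1 := (hasSum_nat_add_iff' 3).2 hs.hasSum
  have h2 := hs.hasSum.mul_left (-z ^ 3)
  have h3 := h1.unique (hs_congr h2 (fun m => by rw [dw6_three]; ring) rfl)
  obtain ⟨v0, v1, v2, -⟩ := dw6_vals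
  simp only [Finset.sum_range_succ, Finset.sum_range_zero, v0, v1, v2] at h3
  refine hs_congr hs.hasSum (fun _ => rfl) ?_
  have hd := L_den z
  have hd' : 1 - z + z ^ 2 ≠ 0 := by linarith
  rw [div_eq_iff hd']
  have : (1 + z) * (-(z * (1 + z))) = (1 + z) * ((∑' m : ℕ, dw w6 m * z ^ (m + 1)) * (1 - z + z ^ 2)) := by
    linear_combination -h3
  exact mul_left_cancel₀ (by positivity) this

lemma f_LL (q0 : 0 < q) (q1 : q ≤ 1 / 8) : HasSum (fun s : S => w6 (rkS s) * (-q) ^ sz s) (Pf (-q) * LL q) := by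
  have q1' : q < 1 := by linarith
  have h := weights q0 (R := 1) (C := 1) le_rfl (by linarith) (w := w6) (fun r => by simpa using w6_bd r) _
    (fun n => dw6_sum (z := q ^ (2 * (n + 1))) (by positivity) (pow_lt_one₀ q0.le q1' (by omega)))
  refine hs_congr h (fun _ => rfl) ?_
  congr 1
  unfold LL
  rw [int_split (LL_summ q0 q1') (h := fun n => - (q ^ ((n + 1) * (2 * n + 1)) * (-(q ^ (2 * (n + 1)) * (1 + q ^ (2 * (n + 1)))) / (1 - q ^ (2 * (n + 1)) + (q ^ (2 * (n + 1))) ^ 2))))]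
  · rw [tsum_neg]
    norm_num [w6]; ring
  · intro n
    have a1 : q ^ (2 * ((n:ℤ) + 1) ^ 2 + (n + 1)) = q ^ ((n + 1) * (2 * n + 1)) * q ^ (2 * (n + 1)) := by
      rw [← zpow_natCast, ← zpow_natCast, ← zpow_add₀ q0.ne']; congr 1; push_cast; ring
    have a2 : q ^ (2 * (-((n:ℤ) + 1)) ^ 2 + -(n + 1)) = q ^ ((n + 1) * (2 * n + 1)) := by
      rw [← zpow_natCast]; congr 1; push_cast; ring
    have a3 : q ^ (2 * ((n:ℤ) + 1)) = q ^ (2 * (n + 1)) := by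
      rw [← zpow_natCast]; congr 1
    have a4 : q ^ (4 * ((n:ℤ) + 1)) = (q ^ (2 * (n + 1))) ^ 2 := by
      rw [← pow_mul, ← zpow_natCast]; congr 1; push_cast; ring
    have a5 : q ^ (2 * (-((n:ℤ) + 1))) = (q ^ (2 * (n + 1)))⁻¹ := by
      rw [mul_neg, zpow_neg, a3]
    have a6 : q ^ (4 * (-((n:ℤ) + 1))) = ((q ^ (2 * (n + 1))) ^ 2)⁻¹ := by
      rw [mul_neg, zpow_neg, a4]
    rw [a1, a2, a3, a4, a5, a6]
    have hz : 0 < q ^ (2 * (n + 1)) := by positivity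
    generalize q ^ (2 * (n + 1)) = z at *
    generalize q ^ ((n + 1) * (2 * n + 1)) = y at *
    have hd := L_den z
    have hd' : 1 - z + z ^ 2 ≠ 0 := by linarith
    have hd2 : 1 - z⁻¹ + (z ^ 2)⁻¹ = (1 - z + z ^ 2) / z ^ 2 := by field_simp; ring
    rw [hd2]
    field_simp

lemma geo_neg {a : ℝ} (a0 : 0 < a) (a1 : a < 1) : HasSum (fun m : ℕ => (-a) ^ m) (1 / (1 + a)) := by
  have := hasSum_geometric_of_abs_lt_one (r := -a) (by rw [abs_neg, abs_of_pos a0]; exact a1)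
  simpa [one_div, sub_neg_eq_add] using this

lemma a0_gf (q0 : 0 < q) (q1 : q ≤ 1 / 4) :
    HasSum (fun s : S => (-q) ^ rkS s * (-q ^ 3) ^ sz s) (Pf (-q ^ 3) * ((1 + q) * BB q 3 1)) := by
  have q1' : q < 1 := by linarith
  have hnq : -q ≠ 0 := by linarith
  have hz : ∀ n : ℕ, (q ^ 3) ^ (2 * (n + 1)) < q := fun n => by
    rw [← pow_mul]
    calc q ^ (3 * (2 * (n + 1))) ≤ q ^ 2 := pow_le_pow_of_le_one q0.le q1'.le (by omega)
      _ < q := by nlinarith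
  have h := weights (q := q ^ 3) (by positivity) (R := q⁻¹) (C := 1) ((one_le_inv₀ q0).2 q1'.le)
    (by
      have : q⁻¹ * q ^ 3 = q ^ 2 := by field_simp
      rw [this]; nlinarith)
    (w := fun r => (-q) ^ r) (fun r => by
      rw [abs_zpow, abs_neg, abs_of_pos q0, one_mul, ← zpow_natCast, inv_zpow']
      exact zpow_le_zpow_right_of_le_one₀ q0 q1'.le (by omega))
    (fun n => -(1 + q) * ((q ^ 3) ^ (2 * (n + 1)) / (1 + q * (q ^ 3) ^ (2 * (n + 1))) +
      (q ^ 3) ^ (2 * (n + 1)) / (q + (q ^ 3) ^ (2 * (n + 1)))))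
    (fun n => by
      have hzn := hz n
      have hz0 : 0 < (q ^ 3) ^ (2 * (n + 1)) := by positivity
      generalize (q ^ 3) ^ (2 * (n + 1)) = z at *
      have g1 := geo_neg (a := q * z) (by positivity) (by nlinarith)
      have g2 := geo_neg (a := z / q) (by positivity) (by rw [div_lt_one q0]; exact hzn)
      refine hs_congr ((g1.mul_left (-(1 + q) * z)).add (g2.mul_left (-(1 + q) * z / q))) (fun m => ?_) ?_
      · unfold dw
        simp only
        rw [zpow_neg, zpow_neg, zpow_add_one₀ hnq, zpow_natCast, ← neg_mul, mul_pow, div_eq_mul_inv z q,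
          show -(z * q⁻¹) = z * (-q)⁻¹ by rw [inv_neg]; ring, mul_pow, inv_pow]
        have : (-q) ^ m ≠ 0 := pow_ne_zero _ hnq
        generalize (-q) ^ m = y at *
        field_simp
        ring
      · field_simp
        try ring)
  refine hs_congr h (fun _ => rfl) ?_
  congr 1
  unfold BB
  rw [int_split (BB_summ q0 q1' 3 1) (h := fun n => (q ^ 3) ^ ((n + 1) * (2 * n + 1)) * ((q ^ 3) ^ (2 * (n + 1)) / (1 + q * (q ^ 3) ^ (2 * (n + 1))) +
      (q ^ 3) ^ (2 * (n + 1)) / (q + (q ^ 3) ^ (2 * (n + 1)))))]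
  · rw [mul_add, ← tsum_mul_left, sub_eq_add_neg, ← tsum_neg]
    congr 1
    · norm_num; field_simp
    · exact tsum_congr fun n => by ring
  · intro n
    have a1 : q ^ (6 * ((n:ℤ) + 1) ^ 2 + 3 * (n + 1)) = (q ^ 3) ^ ((n + 1) * (2 * n + 1)) * (q ^ 3) ^ (2 * (n + 1)) := by
      rw [← pow_mul, ← pow_mul, ← zpow_natCast, ← zpow_natCast, ← zpow_add₀ q0.ne']; congr 1; push_cast; ring
    have a2 : q ^ (6 * (-((n:ℤ) + 1)) ^ 2 + 3 * -(n + 1)) = (q ^ 3) ^ ((n + 1) * (2 * n + 1)) := by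
      rw [← pow_mul, ← zpow_natCast]; congr 1; push_cast; ring
    have a3 : q ^ (6 * ((n:ℤ) + 1) + 1) = (q ^ 3) ^ (2 * (n + 1)) * q := by
      rw [zpow_add_one₀ q0.ne', ← pow_mul, ← zpow_natCast]; congr 2; push_cast; ring
    have a4 : q ^ (6 * -((n:ℤ) + 1) + 1) = ((q ^ 3) ^ (2 * (n + 1)))⁻¹ * q := by
      rw [zpow_add_one₀ q0.ne', ← pow_mul, ← zpow_natCast, ← zpow_neg]; congr 2; push_cast; ring
    rw [a1, a2, a3, a4]
    have hz : 0 < (q ^ 3) ^ (2 * (n + 1)) := by positivity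
    generalize (q ^ 3) ^ (2 * (n + 1)) = z at *
    generalize (q ^ 3) ^ ((n + 1) * (2 * n + 1)) = y at *
    rw [show 1 + z⁻¹ * q = (q + z) / z by field_simp; ring]
    field_simp

lemma S_gf (q0 : 0 < q) (q1 : q ≤ 1 / 4) :
    HasSum (fun s : S => (-1 : ℝ) ^ rkS s * (-q ^ 3) ^ sz s) (Pf (-q ^ 3) * (2 * BB q 3 0)) := by
  have q1' : q < 1 := by linarith
  have hz : ∀ n : ℕ, (q ^ 3) ^ (2 * (n + 1)) < 1 := fun n => by
    rw [← pow_mul]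
    exact pow_lt_one₀ q0.le q1' (by omega)
  have h := weights (q := q ^ 3) (by positivity) (R := 1) (C := 1) le_rfl
    (by
      have : q ^ 3 ≤ q ^ 2 := pow_le_pow_of_le_one q0.le q1'.le (by omega)
      nlinarith)
    (w := fun r => (-1) ^ r) (fun r => by rw [abs_zpow]; simp)
    (fun n => -4 * ((q ^ 3) ^ (2 * (n + 1)) / (1 + (q ^ 3) ^ (2 * (n + 1)))))
    (fun n => by
      have hzn := hz n
      have hz0 : 0 < (q ^ 3) ^ (2 * (n + 1)) := by positivity
      generalize (q ^ 3) ^ (2 * (n + 1)) = z at *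
      have g1 := geo_neg (a := z) (by positivity) hzn
      refine hs_congr (g1.mul_left (-4 * z)) (fun m => ?_) ?_
      · unfold dw
        simp only
        rw [zpow_neg, zpow_neg, ← inv_zpow, ← inv_zpow, zpow_add_one₀ (by norm_num), zpow_add_one₀ (by norm_num), inv_neg, inv_one, zpow_natCast,
          neg_pow z]
        ring
      · ring)
  refine hs_congr h (fun _ => rfl) ?_
  congr 1
  unfold BB
  rw [int_split (BB_summ q0 q1' 3 0) (h := fun n => 2 * ((q ^ 3) ^ ((n + 1) * (2 * n + 1)) * ((q ^ 3) ^ (2 * (n + 1)) / (1 + (q ^ 3) ^ (2 * (n + 1))))))]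
  · rw [mul_add, ← tsum_mul_left, sub_eq_add_neg, ← tsum_neg]
    congr 1
    · norm_num
    · exact tsum_congr fun n => by ring
  · intro n
    have a1 : q ^ (6 * ((n:ℤ) + 1) ^ 2 + 3 * (n + 1)) = (q ^ 3) ^ ((n + 1) * (2 * n + 1)) * (q ^ 3) ^ (2 * (n + 1)) := by
      rw [← pow_mul, ← pow_mul, ← zpow_natCast, ← zpow_natCast, ← zpow_add₀ q0.ne']; congr 1; push_cast; ring
    have a2 : q ^ (6 * (-((n:ℤ) + 1)) ^ 2 + 3 * -(n + 1)) = (q ^ 3) ^ ((n + 1) * (2 * n + 1)) := by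
      rw [← pow_mul, ← zpow_natCast]; congr 1; push_cast; ring
    have a3 : q ^ (6 * ((n:ℤ) + 1) + 0) = (q ^ 3) ^ (2 * (n + 1)) := by
      rw [add_zero, ← pow_mul, ← zpow_natCast]; congr 1; push_cast; ring
    have a4 : q ^ (6 * -((n:ℤ) + 1) + 0) = ((q ^ 3) ^ (2 * (n + 1)))⁻¹ := by
      rw [add_zero, ← pow_mul, ← zpow_natCast, ← zpow_neg]; congr 1; push_cast; ring
    rw [a1, a2, a3, a4]
    have hz : 0 < (q ^ 3) ^ (2 * (n + 1)) := by positivity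
    generalize (q ^ 3) ^ (2 * (n + 1)) = z at *
    generalize (q ^ 3) ^ ((n + 1) * (2 * n + 1)) = y at *
    rw [show 1 + z⁻¹ = (1 + z) / z by field_simp; ring]
    field_simp
    ring

lemma J3_psi (q0 : 0 < q) : J q 3 = psi (q ^ 3) := by
  rw [J_tsum q0]
  unfold psi
  rw [← (Equiv.neg ℤ).tsum_eq]
  refine tsum_congr fun n => ?_
  rw [cube_z q0]; congr 1; simp only [Equiv.neg_apply]; ring

/-- The key identity in terms of generating functions. -/
theorem key_id (q0 : 0 < q) (q1 : q ≤ 1 / 8) : q * (Pf (-q) * LL q) =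
    Pf (-(q ^ 3) ^ 3) * (q * BB (q ^ 3) 3 1 - q ^ 2 * th ((q ^ 3) ^ 3) (q ^ 3) ^ 2 - (e2 (q ^ 3) - BB (q ^ 3) 3 0)) := by
  have q1' : q < 1 := by linarith
  have hQ0 : 0 < q ^ 3 := by positivity
  have hQ1 : (q ^ 3) ^ 3 ≤ 1 / 4 := by
    rw [← pow_mul]
    calc q ^ (3 * 3) ≤ q ^ 1 := pow_le_pow_of_le_one q0.le q1'.le (by norm_num)
      _ ≤ 1 / 4 := by linarith
  have h := main_id q0 q1'
  have p1 := P_psi q0 (by linarith)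
  have p2 := P_psi (q := (q ^ 3) ^ 3) (by positivity) hQ1
  rw [J3_psi hQ0] at h
  generalize (q * BB (q ^ 3) 3 1 - q ^ 2 * th ((q ^ 3) ^ 3) (q ^ 3) ^ 2 - (e2 (q ^ 3) - BB (q ^ 3) 3 0)) = X at *
  linear_combination Pf (-q) * Pf (-(q ^ 3) ^ 3) * h + X * Pf (-(q ^ 3) ^ 3) * p1 - q * (Pf (-q) * LL q) * p2

end M2

namespace M2

lemma hs_group {I : Type*} {c : I → ℝ} {e : I → ℕ} {x v : ℝ} (h : HasSum (fun i => c i * x ^ e i) v) :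
    HasSum (fun n => (∑' i : {i // e i = n}, c i) * x ^ n) v := by
  have h1 := (Equiv.sigmaFiberEquiv e).hasSum_iff.2 h
  refine h1.sigma fun n => ?_
  have h2 := h1.summable.sigma_factor n
  have h3 : ∀ i : {i // e i = n}, ((fun i => c i * x ^ e i) ∘ Equiv.sigmaFiberEquiv e) ⟨n, i⟩ = c i * x ^ n := by
    intro i
    simp only [Function.comp, Equiv.sigmaFiberEquiv_apply]
    rw [i.2]
  rw [← tsum_mul_right, ← tsum_congr h3]
  exact h2.hasSum

lemma rep {I : Type*} {c : I → ℝ} {e : I → ℕ} (hc : ∀ i, 0 ≤ c i) {v : ℝ → ℝ}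
    (h : ∀ q : ℝ, 0 < q → q ≤ 1 / 8 → HasSum (fun i => c i * (-q) ^ e i) (v q)) :
    ∃ b : ℕ → ℝ, (∀ n, 0 ≤ b n) ∧ (∀ i, c i ≤ b (e i)) ∧
      ∀ q : ℝ, 0 < q → q ≤ 1 / 8 → HasSum (fun n => b n * (-q) ^ n) (v q) := by
  refine ⟨fun n => ∑' i : {i // e i = n}, c i, fun n => tsum_nonneg fun i => hc _, fun i => ?_,
    fun q h0 h1 => hs_group (h q h0 h1)⟩
  have h1 := (h (1 / 8) (by norm_num) le_rfl).summable.subtype {j | e j = e i}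
  have h2 : Summable fun j : {j // e j = e i} => c j := by
    have h3 : ∀ j : {j // e j = e i}, ((fun i => c i * (-(1 / 8 : ℝ)) ^ e i) ∘ Subtype.val) j
        = c j * (-(1 / 8 : ℝ)) ^ e i := by
      intro j; simp only [Function.comp]; rw [j.2]
    have h4 : Summable fun j : {j // e j = e i} => c j * (-(1 / 8 : ℝ)) ^ e i := (summable_congr h3).1 h1
    exact (summable_mul_right_iff (by positivity)).1 h4
  exact h2.le_tsum (⟨i, rfl⟩ : {j // e j = e i}) (fun j _ => hc _)

lemma ps_unique {d : ℕ → ℝ} (h : ∀ q : ℝ, 0 < q → q ≤ 1 / 8 → HasSum (fun n => d n * (-q) ^ n) 0) (N : ℕ) :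
    d N = 0 := by
  induction N using Nat.strong_induction_on with
  | _ N ih =>
  obtain ⟨C, hC⟩ : ∃ C, ∀ n, |d n| * (1 / 8) ^ n ≤ C := by
    have h1 := (h (1 / 8) (by norm_num) le_rfl).summable.norm
    refine ⟨∑' n, ‖d n * (-(1 / 8 : ℝ)) ^ n‖, fun n => ?_⟩
    have := h1.le_tsum n (fun j _ => norm_nonneg _)
    rw [norm_mul, norm_pow, norm_neg] at this
    simpa using this
  have hC' : ∀ n, |d n| ≤ C * 8 ^ n := by
    intro n
    have := hC n
    rw [one_div, inv_pow, ← div_eq_mul_inv, div_le_iff₀ (by positivity)] at this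
    exact this
  have key : ∀ q : ℝ, 0 < q → q ≤ 1 / 16 → |d N| ≤ (C * 8 ^ (N + 1) * 2) * q := by
    intro q h0 h1
    have h2 := h q h0 (by linarith)
    have h3 := (hasSum_nat_add_iff' (N + 1)).2 h2
    have h4 : ∑ i ∈ Finset.range (N + 1), d i * (-q) ^ i = d N * (-q) ^ N := by
      rw [Finset.sum_range_succ, Finset.sum_eq_zero, zero_add]
      intro i hi
      rw [ih i (Finset.mem_range.1 hi), zero_mul]
    rw [h4, zero_sub] at h3
    have hg : HasSum (fun n : ℕ => C * 8 ^ (N + 1) * q ^ (N + 1) * (1 / 2) ^ n) (C * 8 ^ (N + 1) * q ^ (N + 1) * 2) :=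
      hasSum_geometric_two.mul_left _
    have hb : ‖∑' n, d (n + (N + 1)) * (-q) ^ (n + (N + 1))‖ ≤ C * 8 ^ (N + 1) * q ^ (N + 1) * 2 := by
      refine tsum_of_norm_bounded hg fun n => ?_
      rw [norm_mul, norm_pow, norm_neg, Real.norm_eq_abs, Real.norm_eq_abs, abs_of_pos h0]
      have hC0 : 0 ≤ C := le_trans (by positivity) (hC 0)
      calc |d (n + (N + 1))| * q ^ (n + (N + 1)) ≤ C * 8 ^ (n + (N + 1)) * q ^ (n + (N + 1)) := by
            gcongr; exact hC' _
        _ = C * 8 ^ (N + 1) * q ^ (N + 1) * (8 * q) ^ n := by rw [mul_pow]; ring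
        _ ≤ C * 8 ^ (N + 1) * q ^ (N + 1) * (1 / 2) ^ n := by gcongr; linarith
    rw [h3.tsum_eq, norm_neg, norm_mul, norm_pow, norm_neg, Real.norm_eq_abs, Real.norm_eq_abs, abs_of_pos h0] at hb
    have hp : 0 < q ^ N := by positivity
    refine le_of_mul_le_mul_right (hb.trans (le_of_eq ?_)) hp
    ring
  by_contra hne
  have hpos : 0 < |d N| := abs_pos.2 hne
  set K := C * 8 ^ (N + 1) * 2 with hK
  have hK0 : 0 < K := by
    have := key (1 / 16) (by norm_num) le_rfl
    by_contra hh
    nlinarith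
  have h5 := key (min (1 / 16) (|d N| / (2 * K))) (by positivity) (min_le_left _ _)
  have h6 : K * min (1 / 16) (|d N| / (2 * K)) ≤ K * (|d N| / (2 * K)) := by
    gcongr; exact min_le_right _ _
  have h7 : K * (|d N| / (2 * K)) = |d N| / 2 := by field_simp
  linarith

lemma hs_congr_iff {I : Type*} {f g : I → ℝ} {v : ℝ} (h : ∀ i, f i = g i) : HasSum f v ↔ HasSum g v := by
  rw [funext h]

lemma hs_mul {I J : Type*} {f : I → ℝ} {g : J → ℝ} {s t : ℝ} (hf : HasSum f s) (hg : HasSum g t) :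
    HasSum (fun p : I × J => f p.1 * g p.2) (s * t) :=
  hf.mul hg (summable_mul_of_summable_norm hf.summable.norm hg.summable.norm)

lemma P_hs {x : ℝ} (hx : |x| ≤ 1 / 4) : HasSum (fun s : S => x ^ sz s) (Pf x) := by
  rw [Pf_eq]
  refine (S_summ_of (y := |x|) (C := 1) (abs_nonneg _) hx fun s => ?_).hasSum
  rw [abs_pow, one_mul]

lemma Q3_small {q : ℝ} (q0 : 0 < q) (q1 : q ≤ 1 / 8) : 0 < q ^ 3 ∧ q ^ 3 ≤ 1 / 8 := by
  refine ⟨by positivity, ?_⟩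
  calc q ^ 3 ≤ q ^ 1 := pow_le_pow_of_le_one q0.le (by linarith) (by norm_num)
    _ ≤ 1 / 8 := by linarith

lemma P9_hs {q : ℝ} (q0 : 0 < q) (q1 : q ≤ 1 / 8) :
    HasSum (fun s : S => (-q) ^ (9 * sz s)) (Pf (-(q ^ 3) ^ 3)) := by
  obtain ⟨a, b⟩ := Q3_small q0 q1
  obtain ⟨a', b'⟩ := Q3_small a b
  have := P_hs (x := -(q ^ 3) ^ 3) (by rw [abs_neg, abs_of_pos a']; linarith)
  refine (hs_congr_iff fun s => ?_).1 this
  rw [pow_mul]; congr 1; ring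

lemma ev (r : ℤ) : Even (r ^ 2 - r) := by
  have := Int.even_mul_pred_self r
  rwa [show r ^ 2 - r = r * (r - 1) by ring]

lemma th1_hs {q : ℝ} (q0 : 0 < q) (q1 : q ≤ 1 / 8) :
    HasSum (fun r : ℤ => (-q) ^ (3 * r.natAbs ^ 2)) (th (q ^ 3) (q ^ 3)) := by
  obtain ⟨a, b⟩ := Q3_small q0 q1
  have h := (jf_summ a (by linarith) (neg_ne_zero.2 a.ne')).hasSum
  refine (hs_congr_iff fun r => ?_).1 h
  have hy : (-q ^ 3) ≠ 0 := neg_ne_zero.2 a.ne'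
  rw [← (ev r).neg_zpow, ← zpow_add₀ hy, pow_mul, show (-q) ^ 3 = -q ^ 3 by ring, ← zpow_natCast (-q ^ 3)]
  congr 1
  push_cast
  rw [sq_abs]; ring

def om (r : ℤ) : ℕ := (3 * r ^ 2 - 2 * r).toNat

lemma om_eq (r : ℤ) : (om r : ℤ) = 3 * r ^ 2 - 2 * r := by
  unfold om
  rw [Int.toNat_of_nonneg]
  rcases le_or_gt r 0 with h | h
  · nlinarith
  · nlinarith

lemma th3_hs {q : ℝ} (q0 : 0 < q) (q1 : q ≤ 1 / 8) :
    HasSum (fun r : ℤ => (-q) ^ (3 * om r)) (th ((q ^ 3) ^ 3) (q ^ 3)) := by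
  obtain ⟨a, b⟩ := Q3_small q0 q1
  obtain ⟨a', b'⟩ := Q3_small a b
  have h := (jf_summ a' (by linarith) (neg_ne_zero.2 a.ne')).hasSum
  refine (hs_congr_iff fun r => ?_).1 h
  have hy : (-q ^ 3) ≠ 0 := neg_ne_zero.2 a.ne'
  rw [← (ev r).neg_zpow, show -(q ^ 3) ^ 3 = (-q ^ 3) ^ (3 : ℤ) by norm_cast; ring, ← zpow_mul, ← zpow_add₀ hy,
    pow_mul, show (-q) ^ 3 = -q ^ 3 by ring, ← zpow_natCast (-q ^ 3), om_eq]
  congr 1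
  ring

/-- first family -/
lemma fam1 {q : ℝ} (q0 : 0 < q) (q1 : q ≤ 1 / 8) :
    HasSum (fun i : S × ℕ => (2 : ℝ) * (-q) ^ (1 + 3 * ((3 * (sz i.1 : ℤ) + rkS i.1).toNat + i.2)))
      (-2 * q * (Pf (-(q ^ 3) ^ 3) * BB (q ^ 3) 3 1)) := by
  obtain ⟨a, b⟩ := Q3_small q0 q1
  have h := (hs_mul (a0_gf a (by linarith)) (geo_neg a (by linarith))).mul_left (-2 * q)
  have hv : Pf (-(q ^ 3) ^ 3) * ((1 + q ^ 3) * BB (q ^ 3) 3 1) * (1 / (1 + q ^ 3)) = Pf (-(q ^ 3) ^ 3) * BB (q ^ 3) 3 1 := by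
    field_simp
  rw [hv] at h
  refine (hs_congr_iff fun i => ?_).1 h
  have hy : (-q ^ 3) ≠ 0 := neg_ne_zero.2 a.ne'
  have h1 : (-q ^ 3) ^ rkS i.1 * (-(q ^ 3) ^ 3) ^ sz i.1 = (-q ^ 3) ^ (3 * (sz i.1 : ℤ) + rkS i.1).toNat := by
    rw [← zpow_natCast (-q ^ 3) (Int.toNat _), Int.toNat_of_nonneg (by have := rk_abs i.1; omega), zpow_add₀ hy, zpow_mul,
      zpow_natCast, mul_comm]
    congr 2
    norm_cast; ring
  rw [h1, pow_add (-q), pow_mul, show (-q) ^ 3 = -q ^ 3 by ring, pow_add]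
  ring

lemma fam2 {q : ℝ} (q0 : 0 < q) (q1 : q ≤ 1 / 8) :
    HasSum (fun i : S × (ℤ × ℤ) => (2 : ℝ) * (-q) ^ (2 + (9 * sz i.1 + (3 * om i.2.1 + 3 * om i.2.2))))
      (2 * q ^ 2 * (Pf (-(q ^ 3) ^ 3) * th ((q ^ 3) ^ 3) (q ^ 3) ^ 2)) := by
  have h := (hs_mul (P9_hs q0 q1) (hs_mul (th3_hs q0 q1) (th3_hs q0 q1))).mul_left (2 * q ^ 2)
  rw [← pow_two] at h
  refine (hs_congr_iff fun i => ?_).1 h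
  rw [pow_add, pow_add, pow_add]; ring

lemma fam3 {q : ℝ} (q0 : 0 < q) (q1 : q ≤ 1 / 8) :
    HasSum (fun s : S => (1 - (-1) ^ rkS s : ℝ) * (-q) ^ (9 * sz s))
      (Pf (-(q ^ 3) ^ 3) - Pf (-(q ^ 3) ^ 3) * (2 * BB (q ^ 3) 3 0)) := by
  obtain ⟨a, b⟩ := Q3_small q0 q1
  refine (hs_congr_iff fun s => ?_).1 ((P9_hs q0 q1).sub (S_gf a (by linarith)))
  rw [pow_mul, show (-q) ^ 9 = -(q ^ 3) ^ 3 by ring]; ring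

noncomputable def hc (i : ℤ × ℤ) : ℝ := if i = (0, 0) then 0 else 1 / 2

lemma fam45 {q t : ℝ} {e : ℤ → ℕ} (he : e 0 = 0) (q0 : 0 < q) (q1 : q ≤ 1 / 8) (ht : HasSum (fun r : ℤ => (-q) ^ e r) t) :
    HasSum (fun i : S × (ℤ × ℤ) => hc i.2 * (-q) ^ (9 * sz i.1 + (e i.2.1 + e i.2.2)))
      (Pf (-(q ^ 3) ^ 3) * (1 / 2 * (t ^ 2 - 1))) := by
  have h1 := ((hs_mul ht ht).sub (hasSum_ite_eq ((0, 0) : ℤ × ℤ) (1 : ℝ))).mul_left (1 / 2)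
  rw [← pow_two] at h1
  refine (hs_congr_iff fun i => ?_).1 (hs_mul (P9_hs q0 q1) h1)
  unfold hc
  split_ifs with h
  · rw [h, he]; simp
  · rw [pow_add, pow_add]; ring

theorem main_coef : ∃ B : ℕ → ℝ,
    (∀ n, (∑' p : Fb n, w6 (rkS p.1)) * 2 = B (n + 1)) ∧
    (∀ i : S × ℕ, 2 ≤ B (1 + 3 * ((3 * (sz i.1 : ℤ) + rkS i.1).toNat + i.2))) ∧
    (∀ i : S × (ℤ × ℤ), 2 ≤ B (2 + (9 * sz i.1 + (3 * om i.2.1 + 3 * om i.2.2)))) ∧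
    (∀ i : S × (ℤ × ℤ), hc i.2 ≤ B (9 * sz i.1 + (3 * i.2.1.natAbs ^ 2 + 3 * i.2.2.natAbs ^ 2))) ∧
    (∀ i : S × (ℤ × ℤ), hc i.2 ≤ B (9 * sz i.1 + (9 * i.2.1.natAbs ^ 2 + 9 * i.2.2.natAbs ^ 2))) := by
  have hc0 : ∀ i, 0 ≤ hc i := fun i => by unfold hc; split_ifs <;> norm_num
  obtain ⟨b1, p1, c1, h1⟩ := rep (fun _ => by norm_num) (fun q q0 q1 => fam1 (q := q) q0 q1)
  obtain ⟨b2, p2, c2, h2⟩ := rep (fun _ => by norm_num) (fun q q0 q1 => fam2 (q := q) q0 q1)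
  obtain ⟨b3, p3, c3, h3⟩ := rep (fun s => by
    rcases Int.even_or_odd (rkS s) with h | h
    · rw [h.neg_one_zpow]; norm_num
    · rw [h.neg_one_zpow]; norm_num) (fun q q0 q1 => fam3 (q := q) q0 q1)
  obtain ⟨b4, p4, c4, h4⟩ := rep (fun i : S × (ℤ × ℤ) => hc0 i.2) (fun q q0 q1 => fam45 (q := q) (by simp) q0 q1 (th1_hs q0 q1))
  have th9 : ∀ q : ℝ, 0 < q → q ≤ 1 / 8 →
      HasSum (fun r : ℤ => (-q) ^ (9 * r.natAbs ^ 2)) (th ((q ^ 3) ^ 3) ((q ^ 3) ^ 3)) := by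
    intro q q0 q1
    obtain ⟨a, b⟩ := Q3_small q0 q1
    refine (hs_congr_iff fun r => ?_).1 (th1_hs a b)
    rw [pow_mul, pow_mul]; congr 1; ring
  obtain ⟨b5, p5, c5, h5⟩ := rep (fun i : S × (ℤ × ℤ) => hc0 i.2) (fun q q0 q1 => fam45 (q := q) (by simp) q0 q1 (th9 q q0 q1))
  refine ⟨fun n => b1 n + b2 n + b3 n + b4 n + b5 n, ?_, ?_, ?_, ?_, ?_⟩
  · let a : ℕ → ℝ := fun n => Nat.casesOn n 0 fun m => (∑' p : Fb m, w6 (rkS p.1)) * 2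
    have hu : ∀ n, a n - (b1 n + b2 n + b3 n + b4 n + b5 n) = 0 := by
      refine ps_unique fun q q0 q1 => ?_
      have hf := (hs_group (f_LL q0 q1)).mul_left (-2 * q)
      have ha : HasSum (fun n => a n * (-q) ^ n) (-2 * q * (Pf (-q) * LL q)) := by
        have := (hasSum_nat_add_iff (f := fun n => a n * (-q) ^ n) 1).1
          ((hs_congr_iff fun n => ?_).1 hf)
        · simpa [a] using this
        · simp only [a]
          rw [pow_succ]
          ring
      have := ha.sub (((((h1 q q0 q1).add (h2 q q0 q1)).add (h3 q q0 q1)).add (h4 q q0 q1)).add (h5 q q0 q1))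
      have hk := key_id q0 q1
      have hv : ∀ {x y : ℝ} {f : ℕ → ℝ}, x = y → HasSum f x → HasSum f y := fun h h' => h ▸ h'
      refine (hs_congr_iff fun n => ?_).1 (hv ?_ this)
      · ring
      · unfold e2 at hk
        linear_combination -2 * hk
    intro n
    have := hu (n + 1)
    simp only [a] at this
    linarith
  · intro i; have := c1 i; have h2 := p2 (1 + 3 * ((3 * (sz i.1 : ℤ) + rkS i.1).toNat + i.2)); have h3 := p3 (1 + 3 * ((3 * (sz i.1 : ℤ) + rkS i.1).toNat + i.2))
    have h4 := p4 (1 + 3 * ((3 * (sz i.1 : ℤ) + rkS i.1).toNat + i.2)); have h5 := p5 (1 + 3 * ((3 * (sz i.1 : ℤ) + rkS i.1).toNat + i.2))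
    linarith
  · intro i; have hi := c2 i
    generalize 2 + (9 * sz i.1 + (3 * om i.2.1 + 3 * om i.2.2)) = N at *
    linarith [p1 N, p3 N, p4 N, p5 N]
  · intro i; have hi := c4 i
    generalize 9 * sz i.1 + (3 * i.2.1.natAbs ^ 2 + 3 * i.2.2.natAbs ^ 2) = N at *
    linarith [p1 N, p2 N, p3 N, p5 N]
  · intro i; have hi := c5 i
    generalize 9 * sz i.1 + (9 * i.2.1.natAbs ^ 2 + 9 * i.2.2.natAbs ^ 2) = N at *
    linarith [p1 N, p2 N, p3 N, p4 N]

end M2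

namespace M2

def eqv (r : ℤ) (m n : ℕ) : {p : Fb n // rkS p.1 ≡ r [ZMOD (m : ℤ)]} ≃
    {P : n.Partition // NoRepeatedOddParts P ∧ m2Rank P ≡ r [ZMOD (m : ℤ)]} where
  toFun p := ⟨toPart n p.1, p.1.1.2.2, p.2⟩
  invFun P := ⟨⟨⟨P.1.parts, fun h => (P.1.parts_pos h).ne' rfl, P.2.1⟩, P.1.parts_sum⟩, P.2.2⟩
  left_inv _ := rfl
  right_inv _ := rfl

noncomputable instance (n : ℕ) : Fintype (Fb n) := Fintype.ofFinite _

lemma N2_sum (r : ℤ) (n : ℕ) : (N2 r 6 n : ℝ) = ∑ p : Fb n, if rkS p.1 ≡ r [ZMOD 6] then (1 : ℝ) else 0 := by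
  have h : N2 r 6 n = Nat.card {p : Fb n // rkS p.1 ≡ r [ZMOD ((6 : ℕ) : ℤ)]} := (Nat.card_congr (eqv r 6 n)).symm
  rw [h, Finset.sum_boole, Nat.card_eq_fintype_card, Fintype.card_subtype]
  rfl

lemma A_eq (n : ℕ) : ∑' p : Fb n, w6 (rkS p.1) = (N2 0 6 n : ℝ) + N2 1 6 n - N2 2 6 n - N2 3 6 n := by
  rw [tsum_fintype, N2_sum, N2_sum, N2_sum, N2_sum, ← Finset.sum_add_distrib, ← Finset.sum_sub_distrib,
    ← Finset.sum_sub_distrib]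
  refine Finset.sum_congr rfl fun p _ => ?_
  generalize rkS p.1 = r
  have h : r % 6 = 0 ∨ r % 6 = 1 ∨ r % 6 = 2 ∨ r % 6 = 3 ∨ r % 6 = 4 ∨ r % 6 = 5 := by omega
  unfold w6 Int.ModEq
  rcases h with h | h | h | h | h | h <;> simp only [h] <;> norm_num

lemma exS (j : ℕ) : ∃ s : S, sz s = j := by
  rcases Nat.eq_zero_or_pos j with rfl | h
  · exact ⟨⟨0, NR_zero⟩, rfl⟩
  · refine ⟨⟨{j}, ?_, fun i _ => ?_⟩, ?_⟩
    · simp; omega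
    · rw [Multiset.count_singleton]; split_ifs <;> omega
    · simp [sz]

lemma B_pos (n : ℕ) : 0 < ∑' p : Fb n, w6 (rkS p.1) := by
  obtain ⟨B, hB, h1, h2, h4, h5⟩ := main_coef
  have hn := hB n
  suffices 0 < B (n + 1) by linarith
  have v10 : hc (1, 0) = 1 / 2 := by unfold hc; simp
  have v11 : hc (1, 1) = 1 / 2 := by unfold hc; simp
  have o0 : om 0 = 0 := rfl
  have o1 : om 1 = 1 := rfl
  obtain ⟨s, hs⟩ := exS (n / 9)
  have hlt : n % 9 < 9 := Nat.mod_lt _ (by norm_num)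
  have hd := Nat.div_add_mod n 9
  have d0 : n % 9 % 3 = 0 → 0 < B (n + 1) := by
    intro h
    have := h1 (⟨0, NR_zero⟩, n / 3)
    have hz : (3 * (sz ⟨0, NR_zero⟩ : ℤ) + rkS ⟨0, NR_zero⟩).toNat = 0 := by simp [sz, rkS, rk, hf]
    simp only [hz] at this
    rw [show 1 + 3 * (0 + n / 3) = n + 1 by omega] at this
    linarith
  have h2' := fun a b : ℤ => h2 (s, a, b)
  have h4' := fun a b : ℤ => h4 (s, a, b)
  have h5' := h5 (s, 1, 0)
  simp only [hs] at h2' h4' h5'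
  have c1 := h2' 0 0
  have c4 := h2' 1 0
  have c7 := h2' 1 1
  have c2 := h4' 1 0
  have c5 := h4' 1 1
  simp only [o0, o1, v10, v11, Int.natAbs_one, Int.natAbs_zero] at c1 c4 c7 c2 c5 h5'
  generalize n % 9 = k at *
  interval_cases k
  · exact d0 rfl
  · rw [show n + 1 = 2 + (9 * (n / 9) + (3 * 0 + 3 * 0)) by omega]; linarith
  · rw [show n + 1 = 9 * (n / 9) + (3 * 1 ^ 2 + 3 * 0 ^ 2) by omega]; linarith
  · exact d0 rfl
  · rw [show n + 1 = 2 + (9 * (n / 9) + (3 * 1 + 3 * 0)) by omega]; linarith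
  · rw [show n + 1 = 9 * (n / 9) + (3 * 1 ^ 2 + 3 * 1 ^ 2) by omega]; linarith
  · exact d0 rfl
  · rw [show n + 1 = 2 + (9 * (n / 9) + (3 * 1 + 3 * 1)) by omega]; linarith
  · rw [show n + 1 = 9 * (n / 9) + (9 * 1 ^ 2 + 9 * 0 ^ 2) by omega]; linarith

end M2

theorem N2_mod6_inequality (n : ℕ) :
    N2 0 6 n + N2 1 6 n > N2 2 6 n + N2 3 6 n := by
  have h := M2.B_pos n
  rw [M2.A_eq] at h
  have : (N2 2 6 n + N2 3 6 n : ℝ) < N2 0 6 n + N2 1 6 n := by linarith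
  exact_mod_cast this
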